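/- Let u^{ε,R} ∈ C^∞(Ω̄_R^ε) be the k-convex solution of the approximating problem with α ≥ α₀. Then (i) |Du^{ε,R}| ≤ C_ε in B₂(0)∖B_ε(x₀); (ii) |Du^{ε,R}| ≤ C√R in E_R(0)∖E_{2R/3}(0); and (iii) for any given small δ > 0 and every 0 < ε < δ, |Du^{ε,R}| ≤ C' in B₂(0)∖B_δ(x₀), where C is a positive constant depending only on n, k, λ_max(A), λ_min(A), R₀ and α, C' additionally depends on δ, both independent of ε and R, and C_ε = C(n/k − 2)ε^{−1} if k < n/2, C_ε = Cε^{−1}|log ε|^{−1} if k = n/2, C_ε = C(2 − n/k)ε^{1−n/k} if k > n/2. -/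

import Mathlib

open scoped Classical Topology
open Real Filter MeasureTheory

noncomputable section

/-- Euclidean space ℝⁿ. -/
abbrev Euc (n : ℕ) : Type := EuclideanSpace ℝ (Fin n)

/-- The standard basis vector `e i`. -/
def ebasis (n : ℕ) (i : Fin n) : Euc n := EuclideanSpace.single i 1

/-- The Hessian matrix `D²u(x)`. -/
def hessMat (n : ℕ) (u : Euc n → ℝ) (x : Euc n) : Matrix (Fin n) (Fin n) ℝ :=
  Matrix.of fun i j => iteratedFDeriv ℝ 2 u x ![ebasis n i, ebasis n j]

/-- The Laplacian `Δu(x)` (trace of the Hessian). -/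
def lapl (n : ℕ) (u : Euc n → ℝ) (x : Euc n) : ℝ := ∑ i, hessMat n u x i i

/-- The `k`-th elementary symmetric function of the eigenvalues of an `n × n` matrix,
expressed through the coefficients of the characteristic polynomial. -/
def matSk (n k : ℕ) (M : Matrix (Fin n) (Fin n) ℝ) : ℝ :=
  (-1 : ℝ) ^ k * (Matrix.charpoly M).coeff (n - k)

/-- `S_k(D²u)(x)`. -/
def SkHess (n k : ℕ) (u : Euc n → ℝ) (x : Euc n) : ℝ := matSk n k (hessMat n u x)

/-- `u` is `k`-convex on `U`: the eigenvalues of the Hessian lie in the Gårding cone `Γ_k`. -/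
def KConvexOn (n k : ℕ) (u : Euc n → ℝ) (U : Set (Euc n)) : Prop :=
  ∀ x ∈ U, ∀ j : ℕ, 1 ≤ j → j ≤ k → 0 < matSk n j (hessMat n u x)

/-- Membership in the class `𝒜_k`: symmetric positive definite with `S_k(λ(A)) = 1`. -/
def MemA (n k : ℕ) (A : Matrix (Fin n) (Fin n) ℝ) : Prop :=
  A.IsSymm ∧ A.PosDef ∧ matSk n k A = 1

/-- The quadratic form `½ xᵀ A x`. -/
def quadA (n : ℕ) (A : Matrix (Fin n) (Fin n) ℝ) (x : Euc n) : ℝ :=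
  (1 / 2) * ∑ i, ∑ j, x i * A i j * x j

/-- The linear form `b ⋅ x`. -/
def linB (n : ℕ) (b x : Euc n) : ℝ := ∑ i, b i * x i

/-- `λ_max(A) < c`, expressed through the quadratic form (for symmetric `A`). -/
def lambdaMaxLT (n : ℕ) (A : Matrix (Fin n) (Fin n) ℝ) (c : ℝ) : Prop :=
  ∀ x : Euc n, x ≠ 0 → ∑ i, ∑ j, x i * A i j * x j < c * ‖x‖ ^ 2

/-- `u` is smooth on an open neighbourhood of the (closed) set `S`;
this is our rendering of `u ∈ C^∞(S)` for a closed set `S`. -/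
def SmoothOnNhd (n : ℕ) (u : Euc n → ℝ) (S : Set (Euc n)) : Prop :=
  ∃ U : Set (Euc n), IsOpen U ∧ S ⊆ U ∧ ContDiffOn ℝ (⊤ : ℕ∞) u U

/-- A smooth bounded strictly convex domain in ℝⁿ. -/
def SmoothStrictConvexDomain (n : ℕ) (Ω : Set (Euc n)) : Prop :=
  IsOpen Ω ∧ Bornology.IsBounded Ω ∧ Ω.Nonempty ∧ Convex ℝ Ω ∧ StrictConvex ℝ Ω ∧
    ∃ f : Euc n → ℝ, ContDiff ℝ (⊤ : ℕ∞) f ∧ Ω = {x | f x < 0} ∧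
      ∀ x ∈ frontier Ω, fderiv ℝ f x ≠ 0

/-- Extension of `u` by the constant value `v` inside `Ω`. -/
def extBy (n : ℕ) (Ω : Set (Euc n)) (v : ℝ) (u : Euc n → ℝ) : Euc n → ℝ :=
  fun x => if x ∈ Ω then v else u x

/-- `u` (vanishing on `∂Ω`) is quasiconvex: all sublevel sets of its zero-extension are convex. -/
def QuasiconvexSol (n : ℕ) (Ω : Set (Euc n)) (u : Euc n → ℝ) : Prop :=
  ∀ t : ℝ, Convex ℝ {x : Euc n | extBy n Ω 0 u x ≤ t}

/-- The `k`-th elementary symmetric polynomial of a vector `a ∈ ℝⁿ`. -/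
def esymmVec (n k : ℕ) (a : Fin n → ℝ) : ℝ :=
  ∑ s ∈ Finset.powersetCard k (Finset.univ : Finset (Fin n)), ∏ i ∈ s, a i

/-- `h_k(a) = max_i S_{k-1}(a)|_{a_i = 0} · a_i`. -/
def hkfun (n k : ℕ) (a : Fin n → ℝ) : ℝ :=
  ⨆ i : Fin n, esymmVec n (k - 1) (Function.update a i 0) * a i

/-- The exponent `-k / (2 h_k(a))`. -/
def genExp (n k : ℕ) (a : Fin n → ℝ) : ℝ := -(k : ℝ) / (2 * hkfun n k a)

/-- The integrand `(1 + α t^{-k/(2h_k(a))})^{1/k}`. -/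
def genInt (n k : ℕ) (a : Fin n → ℝ) (α t : ℝ) : ℝ :=
  (1 + α * t ^ genExp n k a) ^ ((1 : ℝ) / (k : ℝ))

/-- The generalized symmetric function `ū`. -/
def ubar (n k : ℕ) (a : Fin n → ℝ) (R₀ α : ℝ) (x : Euc n) : ℝ :=
  ∫ t in R₀..(quadA n (Matrix.diagonal a) x), genInt n k a α t

/-- `μ(α) = ∫_{R₀}^∞ ((1 + α t^{-k/(2h_k(a))})^{1/k} - 1) dt - R₀`. -/
def muA (n k : ℕ) (a : Fin n → ℝ) (R₀ α : ℝ) : ℝ :=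
  (∫ t in Set.Ioi R₀, (genInt n k a α t - 1)) - R₀

/-- The ellipsoid `E_R(xb) = {x : ½ (x - xb)ᵀ A (x - xb) < R}`. -/
def ESet (n : ℕ) (A : Matrix (Fin n) (Fin n) ℝ) (xb : Euc n) (R : ℝ) : Set (Euc n) :=
  {x : Euc n | quadA n A (x - xb) < R}

/-- The non-concentric convex ring `Ω_R^ε = E_R(0) ∖ B̄_ε(x₀)`. -/
def OmegaRe (n : ℕ) (a : Fin n → ℝ) (x₀ : Euc n) (ε R : ℝ) : Set (Euc n) :=
  ESet n (Matrix.diagonal a) 0 R \ closure (Metric.ball x₀ ε)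

/-- `u` is a `k`-convex solution of the approximating problem
`S_k(D²u) = 1` in `Ω_R^ε`, `u = 0` on `∂B_ε(x₀)`, `u = ū` on `∂E_R(0)`. -/
def ApproxSol (n k : ℕ) (a : Fin n → ℝ) (x₀ : Euc n) (ε R R₀ α : ℝ)
    (u : Euc n → ℝ) : Prop :=
  SmoothOnNhd n u (closure (OmegaRe n a x₀ ε R)) ∧
  KConvexOn n k u (OmegaRe n a x₀ ε R) ∧
  (∀ x ∈ OmegaRe n a x₀ ε R, SkHess n k u x = 1) ∧
  (∀ x ∈ Metric.sphere x₀ ε, u x = 0) ∧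
  (∀ x : Euc n, quadA n (Matrix.diagonal a) x = R → u x = ubar n k a R₀ α x)

/-- The constant `C_ε` of the boundary gradient estimate. -/
def Ceps (n k : ℕ) (C ε : ℝ) : ℝ :=
  if 2 * k < n then C * ((n : ℝ) / (k : ℝ) - 2) * ε⁻¹
  else if 2 * k = n then C * ε⁻¹ * |Real.log ε|⁻¹
  else C * (2 - (n : ℝ) / (k : ℝ)) * ε ^ (1 - (n : ℝ) / (k : ℝ))

/-- `u` is a `k`-convex solution of the exterior Dirichlet problem
`S_k(D²u) = 1` in `ℝⁿ ∖ B̄_ε(x₀)`, `u = 0` on `∂B_ε(x₀)`, with quadratic asymptotics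
`½ xᵀAx + c` at infinity (`A = diag a`). -/
def ExtBallSol (n k : ℕ) (a : Fin n → ℝ) (x₀ : Euc n) (ε c : ℝ) (u : Euc n → ℝ) : Prop :=
  SmoothOnNhd n u (Metric.ball x₀ ε)ᶜ ∧
  KConvexOn n k u (closure (Metric.ball x₀ ε))ᶜ ∧
  (∀ x ∈ (closure (Metric.ball x₀ ε))ᶜ, SkHess n k u x = 1) ∧
  (∀ x ∈ Metric.sphere x₀ ε, u x = 0) ∧
  Tendsto (fun x : Euc n => u x - (quadA n (Matrix.diagonal a) x + c))
    (cocompact (Euc n)) (𝓝 0)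

/-- `u` is a `k`-convex solution of the exterior Dirichlet problem on `ℝⁿ ∖ Ω₀` with
asymptotics `½ xᵀAx + b·x + c` at infinity. -/
def ExtDomSol (n k : ℕ) (Ω₀ : Set (Euc n)) (A : Matrix (Fin n) (Fin n) ℝ) (b : Euc n)
    (c : ℝ) (u : Euc n → ℝ) : Prop :=
  SmoothOnNhd n u Ω₀ᶜ ∧
  KConvexOn n k u (closure Ω₀)ᶜ ∧
  (∀ x ∈ (closure Ω₀)ᶜ, SkHess n k u x = 1) ∧
  (∀ x ∈ frontier Ω₀, u x = 0) ∧
  Tendsto (fun x : Euc n => u x - (quadA n A x + linB n b x + c))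
    (cocompact (Euc n)) (𝓝 0)

/-- `u` is a solution of the exterior Dirichlet problem for the Laplace equation
`Δu = 1` on `ℝⁿ ∖ Ω₀` with asymptotics `½ xᵀAx + b·x + c` at infinity. -/
def ExtDomSolLap (n : ℕ) (Ω₀ : Set (Euc n)) (A : Matrix (Fin n) (Fin n) ℝ) (b : Euc n)
    (c : ℝ) (u : Euc n → ℝ) : Prop :=
  SmoothOnNhd n u Ω₀ᶜ ∧
  (∀ x ∈ (closure Ω₀)ᶜ, lapl n u x = 1) ∧
  (∀ x ∈ frontier Ω₀, u x = 0) ∧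
  Tendsto (fun x : Euc n => u x - (quadA n A x + linB n b x + c))
    (cocompact (Euc n)) (𝓝 0)

/-- `u` solves the exterior problem `Δu = 0` in `ℝⁿ ∖ Ω̄`, `u = 1` on `∂Ω`,
`u → 0` at infinity. -/
def HarmExtSol (n : ℕ) (Ω : Set (Euc n)) (u : Euc n → ℝ) : Prop :=
  SmoothOnNhd n u Ωᶜ ∧
  (∀ x ∈ (closure Ω)ᶜ, lapl n u x = 0) ∧
  (∀ x ∈ frontier Ω, u x = 1) ∧
  Tendsto u (cocompact (Euc n)) (𝓝 0)

end

/-!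
Newton's inequalities make `S_k` strictly monotone along the Gårding cone, so its linearization at
a `k`-convex solution is elliptic and solutions can be compared with barriers. Two barriers are
used: the generalized symmetric functions, functions of `s(x) = ½ xᵀAx`, control `u` and `D(s - u)`
on `∂E_R`; the radial function with gradient proportional to `|x - x₀| ^ (1 - n / k)` controls `Du`
on `∂B_ε(x₀)` and produces `C_ε`. Since `s` is quadratic, the derivatives of `s - u` solve the
linearized equation, so `|D(s - u)|` is bounded by its boundary values and `|Ds| ≤ C √R` yields the
first two estimates. For the third, the boundary `∂B_ε(x₀)` is replaced by `∂B_δ(x₀)`, on which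
Bernstein's technique bounds `Du` uniformly in `ε`: at a maximum of the cut-off quotient the bound
is immediate unless `u` is concave in the direction `ξ` of its gradient, and in such a direction the
linearized coefficients satisfy `∑ fᵢ ⟨vᵢ, ξ⟩² ≥ n⁻¹ |ξ|² ∑ fᵢ`, an ellipticity that does not
depend on `D²u`.
-/

/-! ### Elementary symmetric functions -/

theorem esymmVec_zero (n : ℕ) (a : Fin n → ℝ) : esymmVec n 0 a = 1 := by
  simp [esymmVec]

theorem esymmVec_eq_zero_of_lt {n k : ℕ} (h : n < k) (a : Fin n → ℝ) : esymmVec n k a = 0 := by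
  rw [esymmVec, Finset.powersetCard_eq_empty.2 (by simpa using h), Finset.sum_empty]

theorem esymmVec_pos {n k : ℕ} (hk : k ≤ n) {a : Fin n → ℝ} (ha : ∀ i, 0 < a i) :
    0 < esymmVec n k a :=
  Finset.sum_pos (fun _ _ => Finset.prod_pos fun i _ => ha i)
    (Finset.powersetCard_nonempty.2 (by simpa using hk))

theorem esymmVec_const_mul (n k : ℕ) (c : ℝ) (a : Fin n → ℝ) :
    esymmVec n k (fun i => c * a i) = c ^ k * esymmVec n k a := by
  rw [esymmVec, esymmVec, Finset.mul_sum]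
  refine Finset.sum_congr rfl fun s hs => ?_
  rw [Finset.prod_mul_distrib, Finset.prod_const, (Finset.mem_powersetCard.1 hs).2]

theorem esymmVec_const (n k : ℕ) (c : ℝ) : esymmVec n k (fun _ => c) = n.choose k * c ^ k := by
  have hprod : ∀ s ∈ Finset.powersetCard k (Finset.univ : Finset (Fin n)),
      ∏ _i ∈ s, c = c ^ k := fun s hs => by
    rw [Finset.prod_const, (Finset.mem_powersetCard.1 hs).2]
  rw [esymmVec, Finset.sum_congr rfl hprod, Finset.sum_const, Finset.card_powersetCard,
    Finset.card_univ, Fintype.card_fin, nsmul_eq_mul]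

/-- `S_k(a)|_{a_i = 0}`, which is also the partial derivative of `S_{k+1}` at `a` in the `i`-th
variable. -/
def esymmErase (n k : ℕ) (a : Fin n → ℝ) (i : Fin n) : ℝ :=
  esymmVec n k (Function.update a i 0)

theorem esymmErase_eq_sum {n : ℕ} (k : ℕ) (a : Fin n → ℝ) (i : Fin n) :
    esymmErase n k a i = ∑ s ∈ Finset.powersetCard k (Finset.univ.erase i), ∏ j ∈ s, a j := by
  have hsub : Finset.powersetCard k (Finset.univ.erase i) ⊆
      Finset.powersetCard k (Finset.univ : Finset (Fin n)) :=
    Finset.powersetCard_mono (Finset.erase_subset _ _)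
  rw [esymmErase, esymmVec, ← Finset.sum_subset hsub]
  · refine Finset.sum_congr rfl fun s hs => Finset.prod_congr rfl fun j hj => ?_
    exact Function.update_of_ne
      (Finset.ne_of_mem_erase ((Finset.mem_powersetCard.1 hs).1 hj)) 0 a
  · intro s hs hsi
    have hi : i ∈ s := by
      by_contra hi
      exact hsi (Finset.mem_powersetCard.2 ⟨Finset.subset_erase.2 ⟨Finset.subset_univ s, hi⟩,
        (Finset.mem_powersetCard.1 hs).2⟩)
    exact Finset.prod_eq_zero hi (Function.update_self i 0 a)

theorem esymmErase_zero {n : ℕ} (a : Fin n → ℝ) (i : Fin n) : esymmErase n 0 a i = 1 :=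
  esymmVec_zero n _

theorem esymmErase_nonneg {n : ℕ} (k : ℕ) {a : Fin n → ℝ} (ha : ∀ i, 0 ≤ a i) (i : Fin n) :
    0 ≤ esymmErase n k a i := by
  rw [esymmErase_eq_sum]
  exact Finset.sum_nonneg fun _ _ => Finset.prod_nonneg fun j _ => ha j

theorem esymmErase_const_mul {n : ℕ} (k : ℕ) (c : ℝ) (a : Fin n → ℝ) (i : Fin n) :
    esymmErase n k (fun j => c * a j) i = c ^ k * esymmErase n k a i := by
  rw [esymmErase, esymmErase, ← esymmVec_const_mul]
  congr 1
  ext j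
  by_cases h : j = i <;> simp [h]

theorem esymmErase_const {n : ℕ} (k : ℕ) (c : ℝ) (i : Fin n) :
    esymmErase n k (fun _ => c) i = (n - 1).choose k * c ^ k := by
  have hprod : ∀ s ∈ Finset.powersetCard k (Finset.univ.erase i), ∏ _j ∈ s, c = c ^ k :=
    fun s hs => by rw [Finset.prod_const, (Finset.mem_powersetCard.1 hs).2]
  rw [esymmErase_eq_sum, Finset.sum_congr rfl hprod, Finset.sum_const, Finset.card_powersetCard,
    Finset.card_erase_of_mem (Finset.mem_univ i), Finset.card_univ, Fintype.card_fin,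
    nsmul_eq_mul]

theorem esymmVec_succ_eq_erase_add {n : ℕ} (k : ℕ) (a : Fin n → ℝ) (i : Fin n) :
    esymmVec n (k + 1) a = esymmErase n (k + 1) a i + a i * esymmErase n k a i := by
  have hmem : ∀ s ∈ Finset.powersetCard k (Finset.univ.erase i), i ∉ s := fun s hs hi =>
    Finset.notMem_erase i _ ((Finset.mem_powersetCard.1 hs).1 hi)
  rw [esymmErase_eq_sum, esymmErase_eq_sum, esymmVec,
    ← Finset.insert_erase (Finset.mem_univ i),
    Finset.powersetCard_succ_insert (Finset.notMem_erase i _), Finset.sum_union,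
    Finset.sum_image, Finset.mul_sum, Finset.erase_insert (Finset.notMem_erase i _)]
  · exact congrArg₂ _ rfl (Finset.sum_congr rfl fun s hs => Finset.prod_insert (hmem s hs))
  · intro s hs t ht hst
    rw [← Finset.erase_insert (hmem s hs), ← Finset.erase_insert (hmem t ht), hst]
  · rw [Finset.disjoint_left]
    intro s hs hs'
    obtain ⟨t, -, rfl⟩ := Finset.mem_image.1 hs'
    exact Finset.notMem_erase i _
      ((Finset.mem_powersetCard.1 hs).1 (Finset.mem_insert_self i t))

theorem sum_powersetCard_sum_mul_prod_erase {n : ℕ} (k : ℕ) (a w : Fin n → ℝ) :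
    ∑ s ∈ Finset.powersetCard (k + 1) Finset.univ, ∑ i ∈ s, w i * ∏ j ∈ s.erase i, a j
      = ∑ i, w i * esymmErase n k a i := by
  simp only [esymmErase_eq_sum, Finset.mul_sum]
  rw [Finset.sum_sigma', Finset.sum_sigma']
  refine Finset.sum_bij' (fun p _ => ⟨p.2, p.1.erase p.2⟩) (fun q _ => ⟨insert q.1 q.2, q.1⟩)
    ?_ ?_ ?_ ?_ ?_
  · rintro ⟨s, i⟩ h
    simp only [Finset.mem_sigma, Finset.mem_powersetCard, Finset.subset_univ, true_and] at h
    simp [Finset.mem_powersetCard, Finset.erase_subset_erase, Finset.card_erase_of_mem h.2, h.1]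
  · rintro ⟨i, t⟩ h
    simp only [Finset.mem_sigma, Finset.mem_univ, Finset.mem_powersetCard, Finset.subset_erase,
      Finset.subset_univ, true_and] at h
    simp [Finset.mem_powersetCard, Finset.card_insert_of_notMem h.1, h.2]
  · rintro ⟨s, i⟩ h
    simp only [Finset.mem_sigma] at h
    simp [Finset.insert_erase h.2]
  · rintro ⟨i, t⟩ h
    simp only [Finset.mem_sigma, Finset.mem_univ, Finset.mem_powersetCard, Finset.subset_erase,
      Finset.subset_univ, true_and] at h
    simp [Finset.erase_insert h.1]
  · exact fun _ _ => rfl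

theorem sum_mul_esymmErase {n : ℕ} (k : ℕ) (a : Fin n → ℝ) :
    ∑ i, a i * esymmErase n k a i = ((k : ℝ) + 1) * esymmVec n (k + 1) a := by
  rw [← sum_powersetCard_sum_mul_prod_erase, esymmVec, Finset.mul_sum]
  refine Finset.sum_congr rfl fun s hs => ?_
  rw [Finset.sum_congr rfl fun i hi => Finset.mul_prod_erase s a hi, Finset.sum_const,
    (Finset.mem_powersetCard.1 hs).2, nsmul_eq_mul, Nat.cast_succ]

theorem sum_esymmErase {n : ℕ} (k : ℕ) (a : Fin n → ℝ) :
    ∑ i, esymmErase n k a i = ((n : ℝ) - k) * esymmVec n k a := by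
  cases k with
  | zero => simp [esymmErase_zero, esymmVec_zero]
  | succ k =>
    have hsum := Finset.sum_congr rfl fun i (_ : i ∈ Finset.univ) =>
      esymmVec_succ_eq_erase_add k a i
    rw [Finset.sum_add_distrib, sum_mul_esymmErase, Finset.sum_const, Finset.card_univ,
      Fintype.card_fin, nsmul_eq_mul] at hsum
    push_cast
    linarith

/-! ### Newton's inequality -/

section Newton

open Polynomial

theorem splits_derivative_of_splits {p : ℝ[X]} (hp : p.Splits) : (derivative p).Splits := by
  rw [splits_iff_card_roots] at hp ⊢
  have hrolle := card_roots_le_derivative p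
  have hcard := (derivative p).card_roots'
  have hdeg := natDegree_derivative_le p
  by_cases h : p.natDegree = 0
  · obtain ⟨c, rfl⟩ := natDegree_eq_zero.1 h
    simp
  · omega

theorem eval_mul_eval_derivative_derivative_prod_le (s : Multiset ℝ) (x : ℝ) :
    let g := (s.map fun r => X - C r).prod
    g.eval x * (derivative (derivative g)).eval x ≤ (derivative g).eval x ^ 2 := by
  induction s using Multiset.induction with
  | empty => simp
  | cons r s ih =>
    simp only [Multiset.map_cons, Multiset.prod_cons] at ih ⊢
    set g := (s.map fun r => X - C r).prod
    simp only [derivative_mul, derivative_sub, derivative_X, derivative_C, eval_mul, eval_add,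
      eval_sub, eval_X, eval_C, sub_zero, one_mul, derivative_add]
    nlinarith [mul_le_mul_of_nonneg_left ih (sq_nonneg (x - r)), sq_nonneg (eval x g)]

theorem laguerre_inequality {p : ℝ[X]} (hp : p.Splits) (x : ℝ) :
    p.eval x * (derivative (derivative p)).eval x ≤ (derivative p).eval x ^ 2 := by
  have h := eval_mul_eval_derivative_derivative_prod_le p.roots x
  rw [Splits.eq_prod_roots hp]
  simp only [derivative_C_mul, eval_mul, eval_C] at h ⊢
  nlinarith [mul_le_mul_of_nonneg_left h (sq_nonneg p.leadingCoeff)]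

theorem newton_inequality_coeff {p : ℝ[X]} (hp : p.Splits) (m : ℕ) :
    p.coeff m * p.coeff (m + 2) ≤ p.coeff (m + 1) ^ 2 := by
  have hsplits : (derivative^[m] p).Splits := by
    induction m with
    | zero => exact hp
    | succ m ih => rw [Function.iterate_succ_apply']; exact splits_derivative_of_splits ih
  have hlag := laguerre_inequality hsplits 0
  simp only [← Function.iterate_succ_apply' derivative, ← coeff_zero_eq_eval_zero,
    coeff_iterate_derivative, zero_add, Nat.succ_eq_add_one, Nat.descFactorial_self,
    nsmul_eq_mul, Nat.factorial_succ, Nat.cast_mul] at hlag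
  push_cast at hlag
  have hcancel : (m + 2) * (p.coeff m * p.coeff (m + 2)) ≤ (m + 1) * p.coeff (m + 1) ^ 2 := by
    refine le_of_mul_le_mul_left ?_ (by positivity : (0 : ℝ) < (m.factorial : ℝ) ^ 2 * (m + 1))
    linarith
  nlinarith [sq_nonneg (p.coeff (m + 1)), (Nat.cast_nonneg m : (0 : ℝ) ≤ m)]

theorem esymmVec_eq_coeff {n k : ℕ} (hk : k ≤ n) (a : Fin n → ℝ) :
    esymmVec n k a = (∏ i : Fin n, (X + C (a i))).coeff (n - k) := by
  rw [Finset.prod_X_add_C_coeff _ _ (by simp)]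
  simp [esymmVec, Nat.sub_sub_self hk]

theorem esymmVec_newton {n : ℕ} (k : ℕ) (a : Fin n → ℝ) :
    esymmVec n k a * esymmVec n (k + 2) a ≤ esymmVec n (k + 1) a ^ 2 := by
  rcases le_or_gt (k + 2) n with h | h
  · have hsplits : (∏ i : Fin n, (X + C (a i))).Splits :=
      Splits.prod fun i _ => Splits.X_add_C _
    have hnewton := newton_inequality_coeff hsplits (n - (k + 2))
    rw [show n - (k + 2) + 2 = n - k by omega,
      show n - (k + 2) + 1 = n - (k + 1) by omega] at hnewton
    rw [esymmVec_eq_coeff (by omega : k ≤ n), esymmVec_eq_coeff h,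
      esymmVec_eq_coeff (by omega : k + 1 ≤ n)]
    linarith
  · rw [esymmVec_eq_zero_of_lt h, mul_zero]
    exact sq_nonneg _

theorem esymmErase_newton {n : ℕ} (k : ℕ) (a : Fin n → ℝ) (i : Fin n) :
    esymmErase n k a i * esymmErase n (k + 2) a i ≤ esymmErase n (k + 1) a i ^ 2 :=
  esymmVec_newton k _

theorem esymmErase_mul_esymmVec_le {n : ℕ} {a : Fin n → ℝ} (ha : ∀ i, 0 < a i) (i : Fin n)
    {j l : ℕ} (hjl : j ≤ l) (hl : l + 1 ≤ n) :
    esymmErase n j a i * esymmVec n (l + 1) a ≤ esymmErase n l a i * esymmVec n (j + 1) a := by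
  induction l, hjl using Nat.le_induction with
  | base => rfl
  | succ l hjl ih =>
    have hstep : esymmErase n l a i * esymmVec n (l + 2) a
        ≤ esymmErase n (l + 1) a i * esymmVec n (l + 1) a := by
      rw [esymmVec_succ_eq_erase_add (l + 1) a i, esymmVec_succ_eq_erase_add l a i]
      nlinarith [esymmErase_newton l a i]
    have hmul := mul_le_mul_of_nonneg_right (ih (by omega)) (esymmVec_pos hl ha).le
    have hmul' := mul_le_mul_of_nonneg_right hstep
      (esymmVec_pos (by omega : j + 1 ≤ n) ha).le
    refine le_of_mul_le_mul_right ?_ (esymmVec_pos (by omega : l + 1 ≤ n) ha)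
    linarith

end Newton

/-! ### The Gårding cone -/

/-- The Gårding cone `Γ_k` in `ℝⁿ`. -/
def GardingVec (n k : ℕ) (a : Fin n → ℝ) : Prop := ∀ j, 1 ≤ j → j ≤ k → 0 < esymmVec n j a

namespace GardingVec

variable {n k : ℕ} {a : Fin n → ℝ}

theorem esymmVec_pos (h : GardingVec n k a) {j : ℕ} (hj : j ≤ k) : 0 < esymmVec n j a := by
  rcases Nat.eq_zero_or_pos j with rfl | hj0
  · simp [esymmVec_zero]
  · exact h j hj0 hj

theorem esymmErase_pos (h : GardingVec n k a) (i : Fin n) {j : ℕ} (hj : j + 1 ≤ k) :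
    0 < esymmErase n j a i := by
  induction j with
  | zero => simp [esymmErase_zero]
  | succ j ih =>
    have hprev := ih (by omega)
    have hS₁ := h.esymmVec_pos (j := j + 1) (by omega)
    have hS₂ := h.esymmVec_pos hj
    rw [esymmVec_succ_eq_erase_add j a i] at hS₁
    rw [esymmVec_succ_eq_erase_add (j + 1) a i] at hS₂
    have hnewton := esymmErase_newton j a i
    by_contra! hneg
    have hcross : a i * esymmErase n j a i * esymmErase n (j + 1) a i
        ≤ -esymmErase n (j + 1) a i * esymmErase n (j + 1) a i := by nlinarith
    nlinarith [mul_pos hS₂ hprev]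

/- For `k ≥ 2` write `S_k|_{a_i = 0} = S_k - a_i S_{k-1}|_{a_i = 0}`; since
`a_i S_{k-1}|_{a_i = 0} ≤ a_i S_{k-1}` up to a square, the error is at most
`S_{k-1} ∑ a_i w_i ≤ 0`. -/
theorem sum_mul_esymmVec_le {w : Fin n → ℝ} (h : GardingVec n (k + 1) a) (hw : ∀ i, 0 ≤ w i)
    (haw : ∑ i, a i * w i ≤ 0) :
    (∑ i, w i) * esymmVec n k a ≤ ∑ i, w i * esymmErase n k a i := by
  cases k with
  | zero => simp [esymmVec_zero, esymmErase_zero]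
  | succ k =>
    have hsq : ∀ i, a i * esymmErase n k a i ≤ a i * esymmVec n k a := fun i => by
      cases k with
      | zero => simp [esymmVec_zero, esymmErase_zero]
      | succ k =>
        rw [esymmVec_succ_eq_erase_add k a i]
        nlinarith [mul_nonneg (sq_nonneg (a i)) (h.esymmErase_pos i (j := k) (by omega)).le]
    have herr : ∑ i, w i * (a i * esymmErase n k a i) ≤ 0 := calc
      _ ≤ ∑ i, w i * (a i * esymmVec n k a) :=
        Finset.sum_le_sum fun i _ => mul_le_mul_of_nonneg_left (hsq i) (hw i)
      _ = (∑ i, a i * w i) * esymmVec n k a := by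
        rw [Finset.sum_mul]
        exact Finset.sum_congr rfl fun i _ => by ring
      _ ≤ 0 := mul_nonpos_of_nonpos_of_nonneg haw (h.esymmVec_pos (by omega)).le
    have hsplit : ∑ i, w i * esymmErase n (k + 1) a i = (∑ i, w i) * esymmVec n (k + 1) a
        - ∑ i, w i * (a i * esymmErase n k a i) := by
      rw [Finset.sum_mul, ← Finset.sum_sub_distrib]
      refine Finset.sum_congr rfl fun i _ => ?_
      rw [esymmVec_succ_eq_erase_add k a i]
      ring
    linarith

theorem sum_mul_sum_esymmErase_le {w : Fin n → ℝ} (h : GardingVec n (k + 1) a)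
    (hw : ∀ i, 0 ≤ w i) (haw : ∑ i, a i * w i ≤ 0) :
    (∑ i, w i) * ∑ i, esymmErase n k a i ≤ n * ∑ i, w i * esymmErase n k a i := by
  have hprod : 0 ≤ (∑ i, w i) * esymmVec n k a :=
    mul_nonneg (Finset.sum_nonneg fun i _ => hw i) (h.esymmVec_pos (by omega)).le
  calc (∑ i, w i) * ∑ i, esymmErase n k a i
      = n * ((∑ i, w i) * esymmVec n k a) - k * ((∑ i, w i) * esymmVec n k a) := by
        rw [sum_esymmErase]
        ring
    _ ≤ n * ((∑ i, w i) * esymmVec n k a) :=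
        sub_le_self _ (mul_nonneg k.cast_nonneg hprod)
    _ ≤ _ := mul_le_mul_of_nonneg_left (h.sum_mul_esymmVec_le hw haw) n.cast_nonneg

end GardingVec

/-! ### `S_k` of a symmetric matrix -/

theorem matSk_eq_sum_minors {n k : ℕ} (hk : k ≤ n) (M : Matrix (Fin n) (Fin n) ℝ) :
    matSk n k M = ∑ s ∈ Finset.powersetCard k (Finset.univ : Finset (Fin n)),
      (M.submatrix (Subtype.val : s → Fin n) (Subtype.val : s → Fin n)).det := by
  have hminors := Matrix.charpoly_coeff_eq_sum_minors M k (by simpa using hk)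
  rw [Fintype.card_fin] at hminors
  rw [matSk, hminors, ← mul_assoc, ← mul_pow, neg_one_mul, neg_neg, one_pow, one_mul]

theorem matSk_diagonal {n k : ℕ} (hk : k ≤ n) (d : Fin n → ℝ) :
    matSk n k (Matrix.diagonal d) = esymmVec n k d := by
  rw [matSk_eq_sum_minors hk, esymmVec]
  refine Finset.sum_congr rfl fun s _ => ?_
  rw [Matrix.submatrix_diagonal _ _ Subtype.val_injective, Matrix.det_diagonal]
  exact Finset.prod_coe_sort s d

theorem hasDerivAt_det {m : Type*} [Fintype m] [DecidableEq m] {N : ℝ → Matrix m m ℝ}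
    {P : Matrix m m ℝ} {t : ℝ} (hN : ∀ i j, HasDerivAt (fun s => N s i j) (P i j) t) :
    HasDerivAt (fun s => (N s).det) ((N t).adjugate * P).trace t := by
  have hleibniz : HasDerivAt (fun s => ∑ σ : Equiv.Perm m, (Equiv.Perm.sign σ : ℝ) *
      ∏ i, N s (σ i) i) (∑ σ : Equiv.Perm m, (Equiv.Perm.sign σ : ℝ) *
        ∑ i, (∏ j ∈ Finset.univ.erase i, N t (σ j) j) • P (σ i) i) t :=
    HasDerivAt.fun_sum fun σ _ =>
      (HasDerivAt.fun_finsetProd fun i _ => hN (σ i) i).const_mul _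
  have hcol : ∀ i, ((N t).adjugate * P) i i = ∑ σ : Equiv.Perm m, (Equiv.Perm.sign σ : ℝ) *
      ((∏ j ∈ Finset.univ.erase i, N t (σ j) j) • P (σ i) i) := fun i => by
    have hcramer : ((N t).adjugate * P) i i = ((N t).updateCol i fun j => P j i).det := by
      rw [← Matrix.cramer_apply, Matrix.cramer_eq_adjugate_mulVec]
      rfl
    rw [hcramer, Matrix.det_apply']
    refine Finset.sum_congr rfl fun σ _ => ?_
    rw [← Finset.prod_erase_mul _ _ (Finset.mem_univ i), Matrix.updateCol_self, smul_eq_mul]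
    congr 2
    exact Finset.prod_congr rfl fun j hj => Matrix.updateCol_ne (Finset.ne_of_mem_erase hj)
  simp only [Matrix.trace, Matrix.diag, hcol, Matrix.det_apply']
  rw [Finset.sum_comm]
  simpa only [Finset.mul_sum] using hleibniz

theorem prod_univ_erase_coe {ι : Type*} [DecidableEq ι] (s : Finset ι) (d : ι → ℝ) (i : s) :
    ∏ j ∈ Finset.univ.erase i, d j = ∏ j ∈ s.erase i, d j := by
  refine Finset.prod_bij (fun j _ => (j : ι)) (fun j hj => ?_) (fun _ _ _ _ => Subtype.ext)
    (fun j hj => ?_) (fun _ _ => rfl)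
  · exact Finset.mem_erase.2
      ⟨fun h => Finset.ne_of_mem_erase hj (Subtype.ext h), j.2⟩
  · obtain ⟨hji, hjs⟩ := Finset.mem_erase.1 hj
    exact ⟨⟨j, hjs⟩, Finset.mem_erase.2 ⟨fun h => hji (congrArg Subtype.val h),
      Finset.mem_univ _⟩, rfl⟩

theorem sum_powersetCard_sum_coe_mul_prod_erase {n : ℕ} (k : ℕ) (d w : Fin n → ℝ) :
    ∑ s ∈ Finset.powersetCard (k + 1) (Finset.univ : Finset (Fin n)),
      ∑ i : s, w i * ∏ j ∈ Finset.univ.erase i, d j = ∑ i, w i * esymmErase n k d i := by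
  rw [← sum_powersetCard_sum_mul_prod_erase]
  refine Finset.sum_congr rfl fun s _ => ?_
  simp only [prod_univ_erase_coe]
  exact Finset.sum_coe_sort s fun i => w i * ∏ j ∈ s.erase i, d j

theorem hasDerivAt_matSk_of_eq_diagonal {n k : ℕ} (hk : k + 1 ≤ n)
    {N : ℝ → Matrix (Fin n) (Fin n) ℝ} {P : Matrix (Fin n) (Fin n) ℝ} {d : Fin n → ℝ} {t : ℝ}
    (ht : N t = Matrix.diagonal d) (hN : ∀ i j, HasDerivAt (fun s => N s i j) (P i j) t) :
    HasDerivAt (fun s => matSk n (k + 1) (N s)) (∑ i, P i i * esymmErase n k d i) t := by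
  simp_rw [matSk_eq_sum_minors hk, ← sum_powersetCard_sum_coe_mul_prod_erase]
  refine HasDerivAt.fun_sum fun s _ => ?_
  have hdet := hasDerivAt_det
    (N := fun r => (N r).submatrix (Subtype.val : s → Fin n) Subtype.val)
    (P := P.submatrix Subtype.val Subtype.val) fun i j => hN i j
  rw [ht, Matrix.submatrix_diagonal _ _ Subtype.val_injective, Matrix.adjugate_diagonal] at hdet
  simpa [Matrix.trace, mul_comm] using hdet

/-- The value `vᵀ P v` of the quadratic form of `P` at `v`. -/
def quadForm (n : ℕ) (P : Matrix (Fin n) (Fin n) ℝ) (v : Euc n) : ℝ :=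
  ∑ i, ∑ j, v i * P i j * v j

/-- The Gårding cone `Γ_k` of matrices. -/
def GardingMat (n k : ℕ) (M : Matrix (Fin n) (Fin n) ℝ) : Prop :=
  ∀ j, 1 ≤ j → j ≤ k → 0 < matSk n j M

section Spectral

variable {n : ℕ} {M : Matrix (Fin n) (Fin n) ℝ}

theorem isHermitian_of_isSymm (hM : M.IsSymm) : M.IsHermitian := by
  rwa [Matrix.IsHermitian, Matrix.conjTranspose_eq_transpose_of_trivial]

variable (hM : M.IsHermitian)

theorem star_eigenvectorUnitary_mul_mul_apply (P : Matrix (Fin n) (Fin n) ℝ) (i : Fin n) :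
    (star (hM.eigenvectorUnitary : Matrix (Fin n) (Fin n) ℝ) * P * hM.eigenvectorUnitary) i i
      = quadForm n P (hM.eigenvectorBasis i) := by
  simp only [Matrix.mul_apply, quadForm, Matrix.star_apply,
    Matrix.IsHermitian.eigenvectorUnitary_apply, star_trivial, Finset.sum_mul]
  exact Finset.sum_comm

theorem star_eigenvectorUnitary_mul_self_mul :
    star (hM.eigenvectorUnitary : Matrix (Fin n) (Fin n) ℝ) * M * hM.eigenvectorUnitary
      = Matrix.diagonal hM.eigenvalues := by
  have h := hM.conjStarAlgAut_star_eigenvectorUnitary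
  rwa [Unitary.conjStarAlgAut_star_apply] at h

theorem matSk_star_eigenvectorUnitary_mul_mul (k : ℕ) (P : Matrix (Fin n) (Fin n) ℝ) :
    matSk n k (star (hM.eigenvectorUnitary : Matrix (Fin n) (Fin n) ℝ) * P
      * hM.eigenvectorUnitary) = matSk n k P := by
  rw [matSk, matSk, Matrix.charpoly_mul_comm, ← mul_assoc, ← Unitary.coe_star,
    Unitary.coe_mul_star_self, one_mul]

theorem matSk_eq_esymmVec_eigenvalues {k : ℕ} (hk : k ≤ n) :
    matSk n k M = esymmVec n k hM.eigenvalues := by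
  rw [← matSk_star_eigenvectorUnitary_mul_mul hM, star_eigenvectorUnitary_mul_self_mul,
    matSk_diagonal hk]

theorem quadForm_eigenvectorBasis (i : Fin n) :
    quadForm n M (hM.eigenvectorBasis i) = hM.eigenvalues i := by
  rw [← star_eigenvectorUnitary_mul_mul_apply, star_eigenvectorUnitary_mul_self_mul,
    Matrix.diagonal_apply_eq]

theorem quadForm_eq_sum_eigenvalues_mul (ξ : Euc n) :
    quadForm n M ξ = ∑ i, hM.eigenvalues i * inner ℝ (hM.eigenvectorBasis i) ξ ^ 2 := by
  set U := (hM.eigenvectorUnitary : Matrix (Fin n) (Fin n) ℝ)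
  have hentry : ∀ p q, M p q = ∑ i, U p i * hM.eigenvalues i * U q i := fun p q => by
    conv_lhs => rw [hM.spectral_theorem, Unitary.conjStarAlgAut_apply, Matrix.mul_apply]
    exact Finset.sum_congr rfl fun i _ => by rw [Matrix.mul_diagonal]; rfl
  have hinner : ∀ i, inner ℝ (hM.eigenvectorBasis i) ξ = ∑ p, U p i * ξ p := fun i => by
    simp [U, PiLp.inner_apply, mul_comm]
  simp only [quadForm, hentry, hinner, sq, Finset.mul_sum, Finset.sum_mul]
  rw [Finset.sum_congr rfl fun p _ => Finset.sum_comm, Finset.sum_comm]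
  refine Finset.sum_congr rfl fun i _ => ?_
  rw [Finset.sum_comm]
  exact Finset.sum_congr rfl fun p _ => Finset.sum_congr rfl fun q _ => by ring

theorem hasDerivAt_matSk {k : ℕ} (hk : k + 1 ≤ n) {N : ℝ → Matrix (Fin n) (Fin n) ℝ}
    {P : Matrix (Fin n) (Fin n) ℝ} {t : ℝ} (ht : N t = M)
    (hN : ∀ i j, HasDerivAt (fun s => N s i j) (P i j) t) :
    HasDerivAt (fun s => matSk n (k + 1) (N s))
      (∑ i, quadForm n P (hM.eigenvectorBasis i) * esymmErase n k hM.eigenvalues i) t := by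
  set U := (hM.eigenvectorUnitary : Matrix (Fin n) (Fin n) ℝ)
  have hconj : ∀ i j, HasDerivAt (fun s => (star U * N s * U) i j) ((star U * P * U) i j) t :=
    fun i j => by
      simp only [Matrix.mul_apply]
      exact HasDerivAt.fun_sum fun q _ => (HasDerivAt.fun_sum fun p _ =>
        (hN p q).const_mul (star U i p)).mul_const (U q j)
  have hderiv := hasDerivAt_matSk_of_eq_diagonal hk (N := fun s => star U * N s * U)
    (by rw [ht, star_eigenvectorUnitary_mul_self_mul]) hconj
  simpa only [U, matSk_star_eigenvectorUnitary_mul_mul, star_eigenvectorUnitary_mul_mul_apply]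
    using hderiv

theorem gardingVec_eigenvalues {k : ℕ} (hk : k ≤ n) (h : GardingMat n k M) :
    GardingVec n k hM.eigenvalues := fun j hj hjk => by
  rw [← matSk_eq_esymmVec_eigenvalues hM (hjk.trans hk)]
  exact h j hj hjk

end Spectral

/- The set of times up to which no `f j` has dropped below its initial value is closed, and by
continuity it can always be prolonged a little. -/
theorem le_of_deriv_nonneg_of_pos {ι : Type*} [Finite ι] {f : ι → ℝ → ℝ}
    (hf : ∀ j, Differentiable ℝ (f j)) (hpos : ∀ j, 0 < f j 0)
    (hderiv : ∀ t, (∀ j, 0 < f j t) → ∀ j, 0 ≤ deriv (f j) t) {t : ℝ} (ht : 0 ≤ t) (j : ι) :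
    f j 0 ≤ f j t := by
  have hsub : Set.Icc 0 t ⊆ {s | ∀ j, f j 0 ≤ f j s} := by
    refine IsClosed.Icc_subset_of_forall_exists_gt ?_ (fun j => le_rfl) ?_
    · rw [Set.ofPred_forall]
      exact (isClosed_iInter fun j =>
        isClosed_le continuous_const (hf j).continuous).inter isClosed_Icc
    · rintro s ⟨hs, -⟩ r (hr : s < r)
      have hev : ∀ᶠ x in 𝓝 s, ∀ j, 0 < f j x := eventually_all.2 fun j =>
        (hf j).continuous.continuousAt.eventually (lt_mem_nhds ((hpos j).trans_le (hs j)))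
      obtain ⟨δ, hδ, hball⟩ := Metric.eventually_nhds_iff.1 hev
      have hlt : s < min r (s + δ / 2) := lt_min hr (by linarith)
      refine ⟨min r (s + δ / 2), fun j => (hs j).trans ?_, hlt, min_le_left _ _⟩
      refine monotoneOn_of_deriv_nonneg (convex_Icc s (min r (s + δ / 2)))
        (hf j).continuous.continuousOn (hf j).differentiableOn (fun x hx => ?_)
        (Set.left_mem_Icc.2 hlt.le) (Set.right_mem_Icc.2 hlt.le) hlt.le
      rw [interior_Icc] at hx
      have hxδ : x < s + δ / 2 := hx.2.trans_le (min_le_right _ _)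
      refine hderiv x (hball ?_) j
      rw [Real.dist_eq, abs_of_pos (sub_pos.2 hx.1)]
      linarith
  exact hsub (Set.right_mem_Icc.2 ht) j

theorem GardingMat.matSk_le_add {n k : ℕ} (hk1 : 1 ≤ k) (hkn : k ≤ n)
    {M P : Matrix (Fin n) (Fin n) ℝ} (h : GardingMat n k M) (hM : M.IsSymm) (hP : P.IsSymm)
    (hP0 : ∀ v, 0 ≤ quadForm n P v) : matSk n k M ≤ matSk n k (M + P) := by
  have hsymm : ∀ t : ℝ, (M + t • P).IsHermitian := fun t =>
    isHermitian_of_isSymm (hM.add (hP.smul t))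
  have hentry : ∀ t i j, HasDerivAt (fun s : ℝ => (M + s • P) i j) (P i j) t := fun t i j => by
    simpa using ((hasDerivAt_id t).mul_const (P i j)).const_add (M i j)
  have hderiv : ∀ t (j : Set.Icc 1 k), HasDerivAt (fun s : ℝ => matSk n j (M + s • P))
      (∑ i, quadForm n P ((hsymm t).eigenvectorBasis i) *
        esymmErase n (j - 1) (hsymm t).eigenvalues i) t := fun t ⟨j, hj1, hjk⟩ => by
    obtain ⟨m, rfl⟩ := Nat.exists_eq_succ_of_ne_zero (by omega : j ≠ 0)
    exact hasDerivAt_matSk (hsymm t) (by omega) rfl (hentry t)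
  have hmono := le_of_deriv_nonneg_of_pos
    (f := fun (j : Set.Icc 1 k) (t : ℝ) => matSk n j (M + t • P))
    (fun j t => (hderiv t j).differentiableAt)
    (fun j => by simpa using h j j.2.1 j.2.2)
    (fun t ht j => by
      have hcone := gardingVec_eigenvalues (hsymm t) hkn fun j hj hjk => ht ⟨j, hj, hjk⟩
      rw [(hderiv t j).deriv]
      have hj := j.2
      exact Finset.sum_nonneg fun i _ => mul_nonneg (hP0 _)
        (hcone.esymmErase_pos i (by have := hj.1; have := hj.2; omega)).le)
    zero_le_one ⟨k, hk1, le_rfl⟩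
  simpa using hmono

/-! ### Hessians of functions of a quadratic form -/

theorem det_diagonal_add_smul_vecMulVec {m : Type*} [Fintype m] [DecidableEq m] {d : m → ℝ}
    (hd : ∀ i, d i ≠ 0) (w : m → ℝ) (c : ℝ) :
    (Matrix.diagonal d + c • Matrix.vecMulVec w w).det
      = ∏ i, d i + c * ∑ i, w i ^ 2 * ∏ j ∈ Finset.univ.erase i, d j := by
  have hdet : IsUnit (Matrix.diagonal d).det := by
    rw [Matrix.det_diagonal, isUnit_iff_ne_zero]
    exact Finset.prod_ne_zero_iff.2 fun i _ => hd i
  have hinv : (Matrix.diagonal d)⁻¹ = Matrix.diagonal fun i => (d i)⁻¹ := by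
    refine Matrix.inv_eq_right_inv ?_
    rw [Matrix.diagonal_mul_diagonal]
    simp [hd]
  have hcol : Matrix.replicateCol Unit (c • w) * Matrix.replicateRow Unit w
      = c • Matrix.vecMulVec w w := by
    ext i j
    simp [Matrix.mul_apply, Matrix.vecMulVec_apply, mul_assoc]
  rw [← hcol, Matrix.det_add_replicateCol_mul_replicateRow hdet, Matrix.det_diagonal,
    Matrix.det_unique, hinv]
  simp only [Matrix.add_apply, Matrix.one_apply_eq, Matrix.mul_apply, Matrix.replicateRow_apply,
    Matrix.replicateCol_apply, Matrix.diagonal_apply, mul_ite, mul_zero, Finset.sum_ite_eq',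
    Finset.mem_univ, if_true, Pi.smul_apply, smul_eq_mul]
  rw [mul_add, mul_one, Finset.mul_sum, Finset.mul_sum]
  refine congrArg₂ _ rfl (Finset.sum_congr rfl fun i _ => ?_)
  rw [← Finset.mul_prod_erase Finset.univ d (Finset.mem_univ i)]
  field_simp [hd i]

theorem matSk_diagonal_add_smul_vecMulVec {n k : ℕ} (hk : k + 1 ≤ n) {d : Fin n → ℝ}
    (hd : ∀ i, d i ≠ 0) (w : Fin n → ℝ) (c : ℝ) :
    matSk n (k + 1) (Matrix.diagonal d + c • Matrix.vecMulVec w w)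
      = esymmVec n (k + 1) d + c * ∑ i, w i ^ 2 * esymmErase n k d i := by
  have hminor : ∀ s : Finset (Fin n),
      ((Matrix.diagonal d + c • Matrix.vecMulVec w w).submatrix
        (Subtype.val : s → Fin n) Subtype.val).det
        = ∏ i ∈ s, d i + c * ∑ i : s, w i ^ 2 * ∏ j ∈ Finset.univ.erase i, d j := fun s => by
    have hsub : (Matrix.diagonal d + c • Matrix.vecMulVec w w).submatrix
        (Subtype.val : s → Fin n) Subtype.val
        = Matrix.diagonal (fun i : s => d i)
          + c • Matrix.vecMulVec (fun i : s => w i) fun i : s => w i := by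
      ext i j
      simp [Matrix.diagonal_apply, Matrix.vecMulVec_apply]
    rw [hsub, det_diagonal_add_smul_vecMulVec (fun i : s => hd i), Finset.prod_coe_sort s d]
  rw [matSk_eq_sum_minors hk, Finset.sum_congr rfl fun s _ => hminor s, Finset.sum_add_distrib,
    ← Finset.mul_sum, sum_powersetCard_sum_coe_mul_prod_erase k d fun i => w i ^ 2]
  rfl

/-- The matrix `p A + p' (Ay)(Ay)ᵀ` with `A = diag a`: the Hessian at `y` of `G (½ xᵀAx)`, where
`p` and `p'` are the first and second derivatives of `G` at `½ yᵀAy`. -/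
def modelHess (n : ℕ) (a : Fin n → ℝ) (y : Euc n) (p p' : ℝ) : Matrix (Fin n) (Fin n) ℝ :=
  Matrix.diagonal (fun i => p * a i)
    + p' • Matrix.vecMulVec (fun i => a i * y i) fun i => a i * y i

theorem isSymm_modelHess {n : ℕ} (a : Fin n → ℝ) (y : Euc n) (p p' : ℝ) :
    (modelHess n a y p p').IsSymm := by
  have hrank : (Matrix.vecMulVec (fun i => a i * y i) fun i => a i * y i).IsSymm :=
    Matrix.IsSymm.ext fun i j => mul_comm _ _
  exact (Matrix.isSymm_diagonal _).add (hrank.smul p')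

theorem quadForm_modelHess {n : ℕ} (a : Fin n → ℝ) (y v : Euc n) (p p' : ℝ) :
    quadForm n (modelHess n a y p p') v
      = p * ∑ i, a i * v i ^ 2 + p' * (∑ i, a i * y i * v i) ^ 2 := by
  simp only [quadForm, modelHess, Matrix.add_apply, Matrix.smul_apply, Matrix.vecMulVec_apply,
    Matrix.diagonal_apply, smul_eq_mul, mul_add, add_mul, Finset.sum_add_distrib]
  congr 1
  · rw [Finset.mul_sum]
    refine Finset.sum_congr rfl fun i _ => ?_
    simp only [mul_ite, mul_zero, ite_mul, zero_mul, Finset.sum_ite_eq, Finset.mem_univ, if_true]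
    ring
  · rw [sq, Finset.sum_mul_sum, Finset.mul_sum]
    refine Finset.sum_congr rfl fun i _ => ?_
    rw [Finset.mul_sum]
    exact Finset.sum_congr rfl fun j _ => by ring

theorem matSk_modelHess {n k : ℕ} (hk : k + 1 ≤ n) {a : Fin n → ℝ} (ha : ∀ i, 0 < a i)
    (y : Euc n) {p : ℝ} (hp : 0 < p) (p' : ℝ) :
    matSk n (k + 1) (modelHess n a y p p') = p ^ k * (p * esymmVec n (k + 1) a
      + p' * ∑ i, (a i * y i) ^ 2 * esymmErase n k a i) := by
  rw [modelHess, matSk_diagonal_add_smul_vecMulVec hk fun i => (mul_pos hp (ha i)).ne',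
    esymmVec_const_mul]
  simp_rw [esymmErase_const_mul]
  rw [mul_add, pow_succ, mul_assoc]
  refine congrArg₂ _ rfl ?_
  simp only [Finset.mul_sum]
  exact Finset.sum_congr rfl fun i _ => by ring

theorem matSk_modelHess_const {n k : ℕ} (hk : k + 1 ≤ n) {c : ℝ} (hc : 0 < c) (y : Euc n)
    {p : ℝ} (hp : 0 < p) (p' : ℝ) :
    matSk n (k + 1) (modelHess n (fun _ => c) y p p')
      = p ^ k * (n.choose (k + 1) * c ^ (k + 1) * (p + p' * (c * (k + 1) / n * ∑ i, y i ^ 2))) := by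
  rw [matSk_modelHess hk (fun _ => hc) y hp, esymmVec_const]
  simp_rw [esymmErase_const, mul_pow, mul_assoc, ← Finset.mul_sum, ← Finset.sum_mul]
  have hn : (n : ℝ) ≠ 0 := Nat.cast_ne_zero.2 (by omega)
  have hchoose : (n : ℝ) * (n - 1).choose k = n.choose (k + 1) * ((k : ℝ) + 1) := by
    have h := Nat.add_one_mul_choose_eq (n - 1) k
    rw [Nat.sub_add_cancel (by omega)] at h
    exact_mod_cast h
  field_simp
  linear_combination (c ^ 2 * c ^ k * p' * ∑ i, y i ^ 2) * hchoose

theorem esymmErase_mul_le_hkfun {n : ℕ} (k : ℕ) (a : Fin n → ℝ) (i : Fin n) :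
    esymmErase n (k - 1) a i * a i ≤ hkfun n k a :=
  le_ciSup (f := fun i => esymmErase n (k - 1) a i * a i) (Set.finite_range _).bddAbove i

theorem mul_esymmErase_mul_esymmVec_le {n k j : ℕ} (hkn : k ≤ n) (hj : j + 1 ≤ k)
    {a : Fin n → ℝ} (ha : ∀ i, 0 < a i) (i : Fin n) :
    a i * esymmErase n j a i * esymmVec n k a ≤ hkfun n k a * esymmVec n (j + 1) a := by
  obtain ⟨m, rfl⟩ := Nat.exists_eq_succ_of_ne_zero (by omega : k ≠ 0)
  calc a i * esymmErase n j a i * esymmVec n (m + 1) a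
      = a i * (esymmErase n j a i * esymmVec n (m + 1) a) := mul_assoc _ _ _
    _ ≤ a i * (esymmErase n m a i * esymmVec n (j + 1) a) :=
        mul_le_mul_of_nonneg_left (esymmErase_mul_esymmVec_le ha i (by omega) hkn) (ha i).le
    _ = esymmErase n m a i * a i * esymmVec n (j + 1) a := by ring
    _ ≤ hkfun n (m + 1) a * esymmVec n (j + 1) a :=
        mul_le_mul_of_nonneg_right (esymmErase_mul_le_hkfun (m + 1) a i)
          (esymmVec_pos (by omega) ha).le

/- The number `h_k(a)` is designed for this bound: with `p' = G''` and `p = G'` it makes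
`p ^ (k - 1) (p + 2 h_k s p')` a lower bound for `S_k`, an ordinary differential expression in
`s`. -/
theorem le_matSk_modelHess {n k j : ℕ} (hkn : k ≤ n) (hj : j + 1 ≤ k) {a : Fin n → ℝ}
    (ha : ∀ i, 0 < a i) (hS : esymmVec n k a = 1) (y : Euc n) {p p' : ℝ} (hp : 0 < p)
    (hp' : p' ≤ 0) :
    p ^ j * (esymmVec n (j + 1) a * (p + p' * (hkfun n k a * ∑ i, a i * y i ^ 2)))
      ≤ matSk n (j + 1) (modelHess n a y p p') := by
  rw [matSk_modelHess (by omega) ha y hp]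
  refine mul_le_mul_of_nonneg_left ?_ (pow_pos hp j).le
  have hsum : ∑ i, (a i * y i) ^ 2 * esymmErase n j a i
      ≤ esymmVec n (j + 1) a * (hkfun n k a * ∑ i, a i * y i ^ 2) := by
    rw [Finset.mul_sum, Finset.mul_sum]
    refine Finset.sum_le_sum fun i _ => ?_
    have hle := mul_esymmErase_mul_esymmVec_le hkn hj ha i
    rw [hS, mul_one] at hle
    nlinarith [mul_le_mul_of_nonneg_left hle (mul_nonneg (ha i).le (sq_nonneg (y i)))]
  linarith [mul_le_mul_of_nonpos_left hsum hp']

/-! ### Second derivatives along lines -/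

/-- `f` is differentiable near `t₀` with `f'(t₀) = p`, and `f'` is differentiable at `t₀` with
derivative `q`. -/
def HasSecondDerivAt (f : ℝ → ℝ) (p q t₀ : ℝ) : Prop :=
  ∃ f' : ℝ → ℝ, (∀ᶠ t in 𝓝 t₀, HasDerivAt f (f' t) t) ∧ f' t₀ = p ∧ HasDerivAt f' q t₀

namespace HasSecondDerivAt

variable {f g : ℝ → ℝ} {p q r s t₀ : ℝ}

theorem hasDerivAt (h : HasSecondDerivAt f p q t₀) : HasDerivAt f p t₀ := by
  obtain ⟨f', hf, rfl, -⟩ := h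
  exact hf.self_of_nhds

theorem congr_deriv (h : HasSecondDerivAt f p q t₀) (hp : p = r) (hq : q = s) :
    HasSecondDerivAt f r s t₀ :=
  hp ▸ hq ▸ h

theorem const (c t₀ : ℝ) : HasSecondDerivAt (fun _ => c) 0 0 t₀ :=
  ⟨fun _ => 0, Eventually.of_forall fun t => hasDerivAt_const t c, rfl, hasDerivAt_const t₀ 0⟩

theorem const_add_mul_const (c d t₀ : ℝ) : HasSecondDerivAt (fun t => c + t * d) d 0 t₀ :=
  ⟨fun _ => d, Eventually.of_forall fun t => by
    simpa using ((hasDerivAt_id t).mul_const d).const_add c, rfl, hasDerivAt_const t₀ d⟩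

theorem add (hf : HasSecondDerivAt f p q t₀) (hg : HasSecondDerivAt g r s t₀) :
    HasSecondDerivAt (fun t => f t + g t) (p + r) (q + s) t₀ := by
  obtain ⟨f', hf, rfl, hf'⟩ := hf
  obtain ⟨g', hg, rfl, hg'⟩ := hg
  refine ⟨fun t => f' t + g' t, ?_, rfl, hf'.fun_add hg'⟩
  filter_upwards [hf, hg] with t hft hgt using hft.fun_add hgt

theorem mul (hf : HasSecondDerivAt f p q t₀) (hg : HasSecondDerivAt g r s t₀) :
    HasSecondDerivAt (fun t => f t * g t) (p * g t₀ + f t₀ * r)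
      (q * g t₀ + 2 * (p * r) + f t₀ * s) t₀ := by
  have hf₀ := hf.hasDerivAt
  have hg₀ := hg.hasDerivAt
  obtain ⟨f', hf, rfl, hf'⟩ := hf
  obtain ⟨g', hg, rfl, hg'⟩ := hg
  refine ⟨fun t => f' t * g t + f t * g' t, ?_, rfl,
    ((hf'.fun_mul hg₀).fun_add (hf₀.fun_mul hg')).congr_deriv (by ring)⟩
  filter_upwards [hf, hg] with t hft hgt using hft.fun_mul hgt

theorem const_mul (c : ℝ) (hf : HasSecondDerivAt f p q t₀) :
    HasSecondDerivAt (fun t => c * f t) (c * p) (c * q) t₀ :=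
  ((const c t₀).mul hf).congr_deriv (by ring) (by ring)

theorem sub (hf : HasSecondDerivAt f p q t₀) (hg : HasSecondDerivAt g r s t₀) :
    HasSecondDerivAt (fun t => f t - g t) (p - r) (q - s) t₀ := by
  simpa only [neg_one_mul, ← sub_eq_add_neg] using hf.add (hg.const_mul (-1))

theorem sum {ι : Type*} (S : Finset ι) {f : ι → ℝ → ℝ} {p q : ι → ℝ}
    (h : ∀ i ∈ S, HasSecondDerivAt (f i) (p i) (q i) t₀) :
    HasSecondDerivAt (fun t => ∑ i ∈ S, f i t) (∑ i ∈ S, p i) (∑ i ∈ S, q i) t₀ := by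
  induction S using Finset.induction_on with
  | empty => simpa only [Finset.sum_empty] using const 0 t₀
  | insert i S hi ih =>
    simp only [Finset.sum_insert hi]
    exact (h i (S.mem_insert_self i)).add (ih fun j hj => h j (Finset.mem_insert_of_mem hj))

theorem comp {G G' : ℝ → ℝ} {G'' : ℝ} (hG : ∀ᶠ z in 𝓝 (f t₀), HasDerivAt G (G' z) z)
    (hG' : HasDerivAt G' G'' (f t₀)) (hf : HasSecondDerivAt f p q t₀) :
    HasSecondDerivAt (fun t => G (f t)) (G' (f t₀) * p) (G'' * p ^ 2 + G' (f t₀) * q) t₀ := by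
  have hf₀ := hf.hasDerivAt
  obtain ⟨f', hf, rfl, hf'⟩ := hf
  refine ⟨fun t => G' (f t) * f' t, ?_, rfl,
    ((hG'.comp t₀ hf₀).fun_mul hf').congr_deriv (by simp only [Function.comp]; ring)⟩
  filter_upwards [hf, hf₀.continuousAt.eventually hG] with t hft hGt using hGt.comp t hft

theorem eq_zero_and_nonneg_of_isLocalMin (hf : HasSecondDerivAt f p q t₀)
    (hmin : IsLocalMin f t₀) : p = 0 ∧ 0 ≤ q := by
  have hp : p = 0 := hmin.hasDerivAt_eq_zero hf.hasDerivAt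
  refine ⟨hp, le_of_not_gt fun hq => ?_⟩
  have hcont := hf.hasDerivAt.continuousAt
  obtain ⟨f', hf', hf'₀, hf''⟩ := hf
  have hderiv : deriv f =ᶠ[𝓝 t₀] f' := hf'.mono fun t ht => ht.deriv
  have hmax : IsLocalMax f t₀ := isLocalMax_of_deriv_deriv_neg
    (by rwa [hderiv.deriv_eq, hf''.deriv]) (by rw [hderiv.eq_of_nhds, hf'₀, hp]) hcont
  have hconst : f =ᶠ[𝓝 t₀] fun _ => f t₀ := by
    filter_upwards [hmin, hmax] with t h₁ h₂ using le_antisymm h₂ h₁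
  have hzero : f' =ᶠ[𝓝 t₀] fun _ => 0 :=
    hderiv.symm.trans (hconst.deriv.trans (Eventually.of_forall fun t => deriv_const t _))
  exact hq.ne (hf''.unique ((hasDerivAt_const t₀ (0 : ℝ)).congr_of_eventuallyEq hzero))

end HasSecondDerivAt

section Lines

variable {E F : Type*} [NormedAddCommGroup E] [NormedSpace ℝ E] [NormedAddCommGroup F]
  [NormedSpace ℝ F]

theorem hasDerivAt_comp_add_smul {g : E → F} (x v : E) {t : ℝ}
    (hg : DifferentiableAt ℝ g (x + t • v)) :
    HasDerivAt (fun t : ℝ => g (x + t • v)) (fderiv ℝ g (x + t • v) v) t := by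
  have hline : HasDerivAt (fun t : ℝ => x + t • v) v t := by
    simpa using ((hasDerivAt_id t).smul_const v).const_add x
  exact hg.hasFDerivAt.comp_hasDerivAt t hline

theorem tendsto_add_smul_nhds_zero (x v : E) :
    Tendsto (fun t : ℝ => x + t • v) (𝓝 0) (𝓝 x) := by
  have hcont : Continuous fun t : ℝ => x + t • v := by fun_prop
  simpa using hcont.tendsto 0

theorem isLocalMin_comp_add_smul {g : E → ℝ} {x : E} (h : IsLocalMin g x) (v : E) :
    IsLocalMin (fun t : ℝ => g (x + t • v)) 0 := by
  simpa [IsLocalMin, IsMinFilter] using (tendsto_add_smul_nhds_zero x v).eventually h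

theorem differentiableAt_fderiv_of_contDiffAt {g : E → F} {x : E} (hg : ContDiffAt ℝ 2 g x) :
    DifferentiableAt ℝ (fderiv ℝ g) x :=
  (hg.fderiv_right (m := 1) (by norm_num)).differentiableAt one_ne_zero

theorem fderiv_fderiv_comm_of_contDiffAt {g : E → F} {x : E} (hg : ContDiffAt ℝ 2 g x)
    (v w : E) : fderiv ℝ (fderiv ℝ g) x v w = fderiv ℝ (fderiv ℝ g) x w v :=
  hg.isSymmSndFDerivAt (by simp) v w

theorem hasSecondDerivAt_comp_add_smul {u : E → ℝ} {x : E} (hu : ContDiffAt ℝ 2 u x) (v : E) :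
    HasSecondDerivAt (fun t : ℝ => u (x + t • v)) (fderiv ℝ u x v)
      (fderiv ℝ (fderiv ℝ u) x v v) 0 := by
  have hu₁ : ∀ᶠ y in 𝓝 x, DifferentiableAt ℝ u y :=
    (hu.eventually (by norm_num)).mono fun y hy => hy.differentiableAt two_ne_zero
  refine ⟨fun t => fderiv ℝ u (x + t • v) v, ?_, by simp, ?_⟩
  · filter_upwards [(tendsto_add_smul_nhds_zero x v).eventually hu₁] with t ht
    exact hasDerivAt_comp_add_smul x v ht
  · have hline := hasDerivAt_comp_add_smul (t := 0) x v
      (by simpa using differentiableAt_fderiv_of_contDiffAt hu)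
    simpa using hline.clm_apply (hasDerivAt_const (0 : ℝ) v)

theorem fderiv_fderiv_apply {u : E → F} {x : E} (hu : ContDiffAt ℝ 2 u x) (ξ : E) :
    fderiv ℝ (fun y => fderiv ℝ u y ξ) x = fderiv ℝ (fderiv ℝ u) x ξ := by
  ext v
  rw [fderiv_clm_apply (differentiableAt_fderiv_of_contDiffAt hu) (differentiableAt_const ξ),
    fderiv_fderiv_comm_of_contDiffAt hu ξ v]
  simp

theorem hasDerivAt_fderiv_fderiv_comp_add_smul {u : E → F} {x : E} (hu : ContDiffAt ℝ 3 u x)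
    (ξ v w : E) :
    HasDerivAt (fun t : ℝ => fderiv ℝ (fderiv ℝ u) (x + t • ξ) v w)
      (fderiv ℝ (fderiv ℝ fun y => fderiv ℝ u y ξ) x v w) 0 := by
  have hu₁ : ContDiffAt ℝ 2 (fderiv ℝ u) x := hu.fderiv_right (by norm_num)
  have hu₂ := differentiableAt_fderiv_of_contDiffAt hu₁
  have hline := hasDerivAt_comp_add_smul (t := 0) x ξ (by simpa using hu₂)
  have happly := (hline.clm_apply (hasDerivAt_const (0 : ℝ) v)).clm_apply
    (hasDerivAt_const (0 : ℝ) w)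
  refine happly.congr_deriv ?_
  have hev : fderiv ℝ (fun y => fderiv ℝ u y ξ) =ᶠ[𝓝 x] fun y => fderiv ℝ (fderiv ℝ u) y ξ :=
    (hu.eventually (by norm_num)).mono fun y hy => fderiv_fderiv_apply (hy.of_le (by norm_num)) ξ
  rw [hev.fderiv_eq, fderiv_fderiv_apply hu₁]
  simp

end Lines

theorem hasSecondDerivAt_sq_norm_sub_line {E : Type*} [NormedAddCommGroup E]
    [InnerProductSpace ℝ E] (x b v : E) :
    HasSecondDerivAt (fun t : ℝ => ‖x + t • v - b‖ ^ 2) (2 * inner ℝ (x - b) v)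
      (2 * ‖v‖ ^ 2) 0 := by
  have hnorm : (fun t : ℝ => ‖x + t • v - b‖ ^ 2) =
      fun t => ‖x - b‖ ^ 2 + t * (2 * inner ℝ (x - b) v) +
        ‖v‖ ^ 2 * ((0 + t * 1) * (0 + t * 1)) := by
    ext t
    rw [add_sub_right_comm, norm_add_sq_real, inner_smul_right, norm_smul, mul_pow,
      norm_eq_abs, sq_abs]
    ring
  have hid := HasSecondDerivAt.const_add_mul_const 0 1 0
  rw [hnorm]
  exact ((HasSecondDerivAt.const_add_mul_const _ _ 0).add
    ((hid.mul hid).const_mul (‖v‖ ^ 2))).congr_deriv (by ring) (by ring)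

theorem hessMat_apply (n : ℕ) (u : Euc n → ℝ) (x : Euc n) (i j : Fin n) :
    hessMat n u x i j = fderiv ℝ (fderiv ℝ u) x (ebasis n i) (ebasis n j) := by
  simp [hessMat, iteratedFDeriv_two_apply]

theorem quadForm_hessMat (n : ℕ) (u : Euc n → ℝ) (x v : Euc n) :
    quadForm n (hessMat n u x) v = fderiv ℝ (fderiv ℝ u) x v v := by
  have hv : v = ∑ i, v i • ebasis n i := by
    ext j
    simp [ebasis, Finset.sum_apply, Pi.single_apply]
  conv_rhs => rw [hv]
  simp only [quadForm, hessMat_apply, map_sum, map_smul, _root_.sum_apply,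
    _root_.smul_apply, smul_eq_mul]
  rw [Finset.sum_comm]
  refine Finset.sum_congr rfl fun i _ => ?_
  rw [Finset.mul_sum]
  exact Finset.sum_congr rfl fun j _ => by ring

theorem isSymm_hessMat {n : ℕ} {u : Euc n → ℝ} {x : Euc n} (hu : ContDiffAt ℝ 2 u x) :
    (hessMat n u x).IsSymm :=
  Matrix.IsSymm.ext fun i j => by
    rw [hessMat_apply, hessMat_apply, fderiv_fderiv_comm_of_contDiffAt hu]

theorem hasSecondDerivAt_line {n : ℕ} {u : Euc n → ℝ} {x : Euc n} (hu : ContDiffAt ℝ 2 u x)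
    (v : Euc n) :
    HasSecondDerivAt (fun t : ℝ => u (x + t • v)) (fderiv ℝ u x v)
      (quadForm n (hessMat n u x) v) 0 := by
  rw [quadForm_hessMat]
  exact hasSecondDerivAt_comp_add_smul hu v

theorem quadForm_sub (n : ℕ) (M N : Matrix (Fin n) (Fin n) ℝ) (v : Euc n) :
    quadForm n (M - N) v = quadForm n M v - quadForm n N v := by
  simp only [quadForm, Matrix.sub_apply, mul_sub, sub_mul, Finset.sum_sub_distrib]

/-- The quadratic form `s(x) = ½ xᵀAx` of the paper, with `A = diag a`. -/
noncomputable abbrev sQuad {n : ℕ} (a : Fin n → ℝ) (x : Euc n) : ℝ := quadA n (Matrix.diagonal a) x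

theorem sQuad_eq {n : ℕ} (a : Fin n → ℝ) (x : Euc n) :
    sQuad a x = 1 / 2 * ∑ i, a i * x i ^ 2 := by
  unfold sQuad quadA
  congr 1
  refine Finset.sum_congr rfl fun i _ => ?_
  simp only [Matrix.diagonal_apply, mul_ite, mul_zero, ite_mul, zero_mul, Finset.sum_ite_eq,
    Finset.mem_univ, if_true]
  ring

theorem hasSecondDerivAt_sQuad_line {n : ℕ} (a : Fin n → ℝ) (y v : Euc n) :
    HasSecondDerivAt (fun t : ℝ => sQuad a (y + t • v))
      (∑ i, a i * y i * v i) (∑ i, a i * v i ^ 2) 0 := by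
  have hterm : ∀ i, HasSecondDerivAt
      (fun t : ℝ => 1 / 2 * (a i * ((y i + t * v i) * (y i + t * v i))))
      (a i * y i * v i) (a i * v i ^ 2) 0 := fun i =>
    have hlin := HasSecondDerivAt.const_add_mul_const (y i) (v i) 0
    (((hlin.mul hlin).const_mul (a i)).const_mul (1 / 2)).congr_deriv (by ring) (by ring)
  convert HasSecondDerivAt.sum Finset.univ fun i _ => hterm i using 2 with t
  rw [sQuad_eq, Finset.mul_sum]
  refine Finset.sum_congr rfl fun i _ => ?_
  simp only [PiLp.add_apply, PiLp.smul_apply, smul_eq_mul]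
  ring

theorem hasSecondDerivAt_comp_sQuad_line {n : ℕ} (a : Fin n → ℝ) (y v : Euc n) {G G' : ℝ → ℝ}
    {G'' : ℝ} (hG : ∀ᶠ z in 𝓝 (sQuad a y), HasDerivAt G (G' z) z)
    (hG' : HasDerivAt G' G'' (sQuad a y)) :
    HasSecondDerivAt (fun t : ℝ => G (sQuad a (y + t • v)))
      (G' (sQuad a y) * ∑ i, a i * y i * v i)
      (quadForm n (modelHess n a y (G' (sQuad a y)) G'') v) 0 := by
  have hcomp := HasSecondDerivAt.comp (G := G) (G' := G') (by simpa using hG)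
    (by simpa using hG') (hasSecondDerivAt_sQuad_line a y v)
  simp only [zero_smul, add_zero] at hcomp
  exact hcomp.congr_deriv rfl (by rw [quadForm_modelHess]; ring)

section Touching

variable {n k : ℕ} {a : Fin n → ℝ} {x c : Euc n} {u : Euc n → ℝ} {G G' : ℝ → ℝ} {G'' : ℝ}

theorem matSk_modelHess_le_SkHess (hk1 : 1 ≤ k) (hkn : k ≤ n) (hu : ContDiffAt ℝ 2 u x)
    (hG : ∀ᶠ z in 𝓝 (sQuad a (x - c)), HasDerivAt G (G' z) z)
    (hG' : HasDerivAt G' G'' (sQuad a (x - c)))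
    (hmin : IsLocalMin (fun y => u y - G (sQuad a (y - c))) x)
    (hcone : GardingMat n k
      (modelHess n a (x - c) (G' (sQuad a (x - c))) G'')) :
    matSk n k (modelHess n a (x - c) (G' (sQuad a (x - c))) G'')
      ≤ SkHess n k u x := by
  have hN := isSymm_modelHess a (x - c) (G' (sQuad a (x - c))) G''
  have hle := hcone.matSk_le_add hk1 hkn hN ((isSymm_hessMat hu).sub hN) fun v => by
    have hline := isLocalMin_comp_add_smul hmin v
    simp only [add_sub_right_comm] at hline
    rw [quadForm_sub]
    exact (((hasSecondDerivAt_line hu v).sub (hasSecondDerivAt_comp_sQuad_line a (x - c) v hG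
      hG')).eq_zero_and_nonneg_of_isLocalMin hline).2
  rwa [add_sub_cancel] at hle

theorem SkHess_le_matSk_modelHess (hk1 : 1 ≤ k) (hkn : k ≤ n) (hu : ContDiffAt ℝ 2 u x)
    (hG : ∀ᶠ z in 𝓝 (sQuad a (x - c)), HasDerivAt G (G' z) z)
    (hG' : HasDerivAt G' G'' (sQuad a (x - c)))
    (hmin : IsLocalMin (fun y => G (sQuad a (y - c)) - u y) x)
    (hcone : GardingMat n k (hessMat n u x)) :
    SkHess n k u x
      ≤ matSk n k (modelHess n a (x - c) (G' (sQuad a (x - c))) G'') := by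
  have hN := isSymm_modelHess a (x - c) (G' (sQuad a (x - c))) G''
  have hM := isSymm_hessMat hu
  have hle := hcone.matSk_le_add hk1 hkn hM (hN.sub hM) fun v => by
    have hline := isLocalMin_comp_add_smul hmin v
    simp only [add_sub_right_comm] at hline
    rw [quadForm_sub]
    exact (((hasSecondDerivAt_comp_sQuad_line a (x - c) v hG hG').sub (hasSecondDerivAt_line hu
      v)).eq_zero_and_nonneg_of_isLocalMin hline).2
  rwa [add_sub_cancel] at hle

end Touching

/- The functional `M ↦ ∑ fᵢ M(vᵢ, vᵢ)` is the linearization of `S_k` at `D²u(x)`, diagonal in an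
orthonormal eigenbasis of the Hessian; the third clause is the differentiated equation. -/
theorem exists_linearization {n k : ℕ} (hk1 : 1 ≤ k) (hkn : k ≤ n) {x : Euc n}
    {u : Euc n → ℝ} (hu : ContDiffAt ℝ 3 u x) (hcone : GardingMat n k (hessMat n u x))
    (hS : ∀ᶠ y in 𝓝 x, SkHess n k u y = 1) :
    ∃ (v : OrthonormalBasis (Fin n) ℝ (Euc n)) (f : Fin n → ℝ), (∀ i, 0 < f i) ∧
      (0 ≤ ∑ i, f i * quadForm n (hessMat n u x) (v i)) ∧
      (∀ ξ, ∑ i, f i * quadForm n (hessMat n (fun y => fderiv ℝ u y ξ) x) (v i) = 0) ∧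
      (∀ ξ, quadForm n (hessMat n u x) ξ ≤ 0 →
        ‖ξ‖ ^ 2 * ∑ i, f i ≤ n * ∑ i, f i * inner ℝ (v i) ξ ^ 2) := by
  obtain ⟨m, rfl⟩ := Nat.exists_eq_succ_of_ne_zero (by omega : k ≠ 0)
  have hM := isHermitian_of_isSymm (isSymm_hessMat (hu.of_le (by norm_num)))
  have hcone' := gardingVec_eigenvalues hM hkn hcone
  refine ⟨hM.eigenvectorBasis, esymmErase n m hM.eigenvalues,
    fun i => hcone'.esymmErase_pos i le_rfl, ?_, fun ξ => ?_, fun ξ hξ => ?_⟩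
  · simp only [quadForm_eigenvectorBasis, mul_comm (esymmErase n m hM.eigenvalues _)]
    rw [sum_mul_esymmErase]
    have hpos := hcone'.esymmVec_pos le_rfl
    positivity
  · have hderiv := hasDerivAt_matSk hM hkn (N := fun t => hessMat n u (x + t • ξ)) (t := 0)
      (P := hessMat n (fun y => fderiv ℝ u y ξ) x) (by simp) fun i j => by
        simpa only [hessMat_apply] using hasDerivAt_fderiv_fderiv_comp_add_smul hu ξ _ _
    have hconst : (fun t : ℝ => matSk n (m + 1) (hessMat n u (x + t • ξ))) =ᶠ[𝓝 0] fun _ => 1 :=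
      (tendsto_add_smul_nhds_zero x ξ).eventually hS
    have hzero := hderiv.unique ((hasDerivAt_const (0 : ℝ) (1 : ℝ)).congr_of_eventuallyEq hconst)
    simpa only [mul_comm] using hzero
  · rw [quadForm_eq_sum_eigenvalues_mul hM] at hξ
    have hcond := hcone'.sum_mul_sum_esymmErase_le (fun i => sq_nonneg _) hξ
    rw [OrthonormalBasis.sum_sq_inner_right] at hcond
    simpa only [mul_comm (esymmErase n m hM.eigenvalues _)] using hcond

/-! ### The profile of the generalized symmetric function -/

section Profile

variable {n k : ℕ} {a : Fin n → ℝ} {α t : ℝ}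

theorem hkfun_pos (hk1 : 1 ≤ k) (hkn : k ≤ n) (ha : ∀ i, 0 < a i) : 0 < hkfun n k a := by
  have hcone : GardingVec n k a := fun j _ hj => esymmVec_pos (hj.trans hkn) ha
  have i : Fin n := ⟨0, by omega⟩
  exact (mul_pos (hcone.esymmErase_pos i (by omega)) (ha i)).trans_le
    (esymmErase_mul_le_hkfun k a i)

theorem two_mul_hkfun_lt (hn : 3 ≤ n) (hk1 : 1 ≤ k) (ha : ∀ i, 0 < a i)
    (hS : esymmVec n k a = 1) (ha1 : k = 1 → (⨆ i, a i) < 1 / 2) : 2 * hkfun n k a < k := by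
  have : Nonempty (Fin n) := ⟨⟨0, by omega⟩⟩
  obtain ⟨i, hi⟩ := exists_eq_ciSup_of_finite (f := fun i => esymmErase n (k - 1) a i * a i)
  change _ = hkfun n k a at hi
  obtain rfl | hk := eq_or_ne k 1
  · have hsup : hkfun n 1 a = ⨆ i, a i := by simp [hkfun, esymmVec_zero]
    rw [hsup, Nat.cast_one]
    linarith [ha1 rfl]
  have hsplit := esymmVec_succ_eq_erase_add (k - 1) a i
  rw [Nat.sub_add_cancel hk1, hS, mul_comm, hi] at hsplit
  have herase : 0 ≤ esymmErase n k a i := esymmErase_nonneg k (fun i => (ha i).le) i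
  obtain rfl | hk2 := eq_or_ne k 2
  · have hcone : GardingVec n 3 a := fun j _ hj => esymmVec_pos (hj.trans hn) ha
    have hpos := hcone.esymmErase_pos i (j := 2) le_rfl
    rw [Nat.cast_ofNat]
    linarith
  · have hk3 : (3 : ℝ) ≤ k := by exact_mod_cast (by omega : 3 ≤ k)
    linarith

theorem genExp_lt_neg_one (hh : 0 < hkfun n k a) (hlt : 2 * hkfun n k a < k) :
    genExp n k a < -1 := by
  rw [genExp, div_lt_iff₀ (by linarith)]
  linarith

theorem genExp_neg (hk1 : 1 ≤ k) (hh : 0 < hkfun n k a) : genExp n k a < 0 :=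
  div_neg_of_neg_of_pos (neg_neg_of_pos (by exact_mod_cast hk1)) (by linarith)

theorem one_le_one_add_mul_rpow (e : ℝ) (hα : 0 ≤ α) (ht : 0 < t) : 1 ≤ 1 + α * t ^ e := by
  linarith [mul_nonneg hα (rpow_pos_of_pos ht e).le]

theorem genInt_pow (hk1 : 1 ≤ k) (hα : 0 ≤ α) (ht : 0 < t) :
    genInt n k a α t ^ k = 1 + α * t ^ genExp n k a := by
  rw [genInt, one_div]
  exact rpow_inv_natCast_pow (zero_le_one.trans (one_le_one_add_mul_rpow _ hα ht)) (by omega)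

theorem one_le_genInt (hα : 0 ≤ α) (ht : 0 < t) : 1 ≤ genInt n k a α t :=
  one_le_rpow (one_le_one_add_mul_rpow _ hα ht) (by positivity)

theorem genInt_le (hk1 : 1 ≤ k) (hα : 0 ≤ α) (ht : 0 < t) :
    genInt n k a α t ≤ 1 + α * t ^ genExp n k a :=
  (le_self_pow₀ (one_le_genInt hα ht) (by omega)).trans_eq (genInt_pow hk1 hα ht)

/- Differentiating `φ ^ k = 1 + α t ^ e` and using `2 h_k e = -k` gives the equation. -/
theorem exists_hasDerivAt_genInt (hk1 : 1 ≤ k) (hh : 0 < hkfun n k a) (hα : 0 ≤ α) (ht : 0 < t) :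
    ∃ D : ℝ, HasDerivAt (genInt n k a α) D t ∧ D ≤ 0 ∧
      genInt n k a α t ^ (k - 1) * (genInt n k a α t + D * (2 * hkfun n k a * t)) = 1 := by
  have hbase : HasDerivAt (fun t : ℝ => 1 + α * t ^ genExp n k a)
      (α * (genExp n k a * t ^ (genExp n k a - 1))) t :=
    ((hasDerivAt_rpow_const (Or.inl ht.ne')).const_mul α).const_add 1
  have hbase₁ := one_le_one_add_mul_rpow (genExp n k a) hα ht
  obtain ⟨D, hD⟩ : ∃ D, HasDerivAt (genInt n k a α) D t :=
    ⟨_, hbase.rpow_const (Or.inl (by linarith))⟩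
  have hφ := one_le_genInt (n := n) (k := k) (a := a) hα ht
  have hpow : k * genInt n k a α t ^ (k - 1) * D
      = α * (genExp n k a * t ^ (genExp n k a - 1)) :=
    (hD.pow k).unique (hbase.congr_of_eventuallyEq
      ((eventually_gt_nhds ht).mono fun z hz => genInt_pow hk1 hα hz))
  have hk : (0 : ℝ) < k := by exact_mod_cast hk1
  refine ⟨D, hD, ?_, ?_⟩
  · have hfac : 0 < k * genInt n k a α t ^ (k - 1) := by positivity
    refine nonpos_of_mul_nonpos_right (hpow.trans_le ?_) hfac
    exact mul_nonpos_of_nonneg_of_nonpos hα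
      (mul_nonpos_of_nonpos_of_nonneg (genExp_neg hk1 hh).le (rpow_nonneg ht.le _))
  · have hsucc : genInt n k a α t ^ (k - 1) * genInt n k a α t = 1 + α * t ^ genExp n k a := by
      rw [← pow_succ, Nat.sub_add_cancel hk1, genInt_pow hk1 hα ht]
    have hrpow : t ^ (genExp n k a - 1) * t = t ^ genExp n k a := by
      rw [rpow_sub_one ht.ne', div_mul_cancel₀ _ ht.ne']
    have hexp : genExp n k a * (2 * hkfun n k a) = -k := by
      rw [genExp, div_mul_cancel₀ _ (by positivity)]
    refine mul_left_cancel₀ hk.ne' ?_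
    linear_combination k * hsucc + 2 * hkfun n k a * t * hpow
      + α * genExp n k a * (2 * hkfun n k a) * hrpow + α * t ^ genExp n k a * hexp

theorem continuousAt_genInt (hk1 : 1 ≤ k) (hh : 0 < hkfun n k a) (hα : 0 ≤ α) (ht : 0 < t) :
    ContinuousAt (genInt n k a α) t :=
  (exists_hasDerivAt_genInt hk1 hh hα ht).choose_spec.1.continuousAt

theorem intervalIntegrable_genInt (hk1 : 1 ≤ k) (hh : 0 < hkfun n k a) (hα : 0 ≤ α) {r s : ℝ}
    (hr : 0 < r) (hs : 0 < s) : IntervalIntegrable (genInt n k a α) volume r s :=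
  ContinuousOn.intervalIntegrable fun _ hz =>
    (continuousAt_genInt hk1 hh hα ((lt_min hr hs).trans_le hz.1)).continuousWithinAt

theorem le_genInt {T L : ℝ} (hk1 : 1 ≤ k) (hh : 0 < hkfun n k a) (hL : 0 ≤ L)
    (hα : L ^ k * T ^ (-genExp n k a) ≤ α) (ht : 0 < t) (htT : t ≤ T) :
    L ≤ genInt n k a α t := by
  have hT : 0 < T := ht.trans_le htT
  have hα₀ : 0 ≤ α := le_trans (by positivity) hα
  have hφ := one_le_genInt (n := n) (k := k) (a := a) hα₀ ht
  refine (pow_le_pow_iff_left₀ hL (by linarith) (by omega : k ≠ 0)).1 ?_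
  calc L ^ k = L ^ k * T ^ (-genExp n k a) * T ^ genExp n k a := by
        rw [mul_assoc, ← rpow_add hT, neg_add_cancel, rpow_zero, mul_one]
    _ ≤ α * t ^ genExp n k a :=
        mul_le_mul hα (rpow_le_rpow_of_nonpos ht htT (genExp_neg hk1 hh).le)
          (rpow_nonneg hT.le _) hα₀
    _ ≤ genInt n k a α t ^ k := by rw [genInt_pow hk1 hα₀ ht]; linarith

/-- The profile `U(z) = ∫_{R₀}^z (1 + α t^{-k/(2h_k(a))})^{1/k} dt` of the generalized symmetric
function, so that `ū = U ∘ s`. -/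
noncomputable def ubarProfile (n k : ℕ) (a : Fin n → ℝ) (R₀ α z : ℝ) : ℝ :=
  ∫ t in R₀..z, genInt n k a α t

variable {R₀ S T : ℝ}

theorem hasDerivAt_ubarProfile (hk1 : 1 ≤ k) (hh : 0 < hkfun n k a) (hα : 0 ≤ α) (hR₀ : 0 < R₀)
    (ht : 0 < t) : HasDerivAt (ubarProfile n k a R₀ α) (genInt n k a α t) t := by
  have hcont : ContinuousOn (genInt n k a α) (Set.Ioi 0) := fun z hz =>
    (continuousAt_genInt hk1 hh hα hz).continuousWithinAt
  exact intervalIntegral.integral_hasDerivAt_right (intervalIntegrable_genInt hk1 hh hα hR₀ ht)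
    (hcont.stronglyMeasurableAtFilter isOpen_Ioi t ht) (continuousAt_genInt hk1 hh hα ht)

theorem ubarProfile_add_mul_sub_le {L : ℝ} (hk1 : 1 ≤ k) (hh : 0 < hkfun n k a) (hα : 0 ≤ α)
    (hR₀ : 0 < R₀) (hS : 0 < S) (hST : S ≤ T)
    (hL : ∀ t ∈ Set.Icc S T, L ≤ genInt n k a α t) :
    ubarProfile n k a R₀ α S + L * (T - S) ≤ ubarProfile n k a R₀ α T := by
  have hT := hS.trans_le hST
  have hmono := intervalIntegral.integral_mono_on hST intervalIntegrable_const
    (intervalIntegrable_genInt hk1 hh hα hS hT) hL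
  have hadd := intervalIntegral.integral_add_adjacent_intervals
    (intervalIntegrable_genInt hk1 hh hα hR₀ hS) (intervalIntegrable_genInt hk1 hh hα hS hT)
  rw [intervalIntegral.integral_const, smul_eq_mul, mul_comm] at hmono
  simp only [ubarProfile]
  linarith

theorem ubarProfile_self (n k : ℕ) (a : Fin n → ℝ) (R₀ α : ℝ) : ubarProfile n k a R₀ α R₀ = 0 :=
  intervalIntegral.integral_same

theorem mul_le_ubarProfile_two_mul {L : ℝ} (hk1 : 1 ≤ k) (hh : 0 < hkfun n k a) (hR₀ : 0 < R₀)
    (hL : 0 ≤ L) (hα : L ^ k * (2 * R₀) ^ (-genExp n k a) ≤ α) :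
    L * R₀ ≤ ubarProfile n k a R₀ α (2 * R₀) := by
  have hgrow := ubarProfile_add_mul_sub_le hk1 hh (le_trans (by positivity) hα) hR₀ hR₀
    (by linarith : R₀ ≤ 2 * R₀)
    fun t ht => le_genInt hk1 hh hL hα (hR₀.trans_le ht.1) ht.2
  rw [ubarProfile_self] at hgrow
  linarith

theorem ubarProfile_add_sub_le (hk1 : 1 ≤ k) (hh : 0 < hkfun n k a) (hα : 0 ≤ α) (hR₀ : 0 < R₀)
    (hS : 0 < S) (hST : S ≤ T) :
    ubarProfile n k a R₀ α S + (T - S) ≤ ubarProfile n k a R₀ α T := by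
  simpa only [one_mul] using ubarProfile_add_mul_sub_le hk1 hh hα hR₀ hS hST
    fun t ht => one_le_genInt hα (hS.trans_le ht.1)

theorem ubarProfile_sub_le (hk1 : 1 ≤ k) (hh : 0 < hkfun n k a) (he : genExp n k a < -1)
    (hα : 0 ≤ α) (hR₀ : 0 < R₀) (hT : R₀ ≤ T) :
    ubarProfile n k a R₀ α T - T
      ≤ α * (R₀ ^ (genExp n k a + 1) / (-genExp n k a - 1)) := by
  set e := genExp n k a
  have hzero : (0 : ℝ) ∉ Set.uIcc R₀ T := by
    rw [Set.uIcc_of_le hT]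
    exact fun h => hR₀.not_ge h.1
  have hint : IntervalIntegrable (fun t : ℝ => t ^ e) volume R₀ T :=
    intervalIntegral.intervalIntegrable_rpow (Or.inr hzero)
  have hmono := intervalIntegral.integral_mono_on hT
    (intervalIntegrable_genInt hk1 hh hα hR₀ (hR₀.trans_le hT))
    (intervalIntegrable_const.add (hint.const_mul α))
    fun t ht => genInt_le hk1 hα (hR₀.trans_le ht.1)
  rw [intervalIntegral.integral_add intervalIntegrable_const (hint.const_mul α),
    intervalIntegral.integral_const, smul_eq_mul, intervalIntegral.integral_const_mul,
    integral_rpow (Or.inr ⟨he.ne, hzero⟩)] at hmono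
  have htail : (T ^ (e + 1) - R₀ ^ (e + 1)) / (e + 1) ≤ R₀ ^ (e + 1) / (-e - 1) := by
    rw [show -e - 1 = -(e + 1) by ring, div_neg, ← neg_div, sub_div, neg_div]
    linarith [div_nonpos_of_nonneg_of_nonpos (rpow_nonneg (hR₀.le.trans hT) (e + 1))
      (by linarith : e + 1 ≤ 0)]
  rw [ubarProfile]
  linarith [mul_le_mul_of_nonneg_left htail hα]

end Profile

/-! ### The approximating problem -/

theorem continuous_sQuad {n : ℕ} (a : Fin n → ℝ) : Continuous (sQuad a) := by
  simp_rw [funext (sQuad_eq a)]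
  fun_prop

theorem sQuad_two {n : ℕ} (x : Euc n) : sQuad (fun _ => 2) x = ‖x‖ ^ 2 := by
  rw [sQuad_eq, EuclideanSpace.real_norm_sq_eq, ← Finset.mul_sum]
  ring

theorem div_two_mul_sq_norm_le_sQuad {n : ℕ} {a : Fin n → ℝ} {m : ℝ} (h : ∀ i, m ≤ a i)
    (x : Euc n) : m / 2 * ‖x‖ ^ 2 ≤ sQuad a x := by
  have hsum : m * ∑ i, x i ^ 2 ≤ ∑ i, a i * x i ^ 2 := by
    rw [Finset.mul_sum]
    exact Finset.sum_le_sum fun i _ => mul_le_mul_of_nonneg_right (h i) (sq_nonneg _)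
  rw [sQuad_eq, EuclideanSpace.real_norm_sq_eq]
  linarith

theorem sQuad_le {n : ℕ} {a : Fin n → ℝ} {M : ℝ} (h : ∀ i, a i ≤ M) (x : Euc n) :
    sQuad a x ≤ M / 2 * ‖x‖ ^ 2 := by
  have hsum : ∑ i, a i * x i ^ 2 ≤ M * ∑ i, x i ^ 2 := by
    rw [Finset.mul_sum]
    exact Finset.sum_le_sum fun i _ => mul_le_mul_of_nonneg_right (h i) (sq_nonneg _)
  rw [sQuad_eq, EuclideanSpace.real_norm_sq_eq]
  linarith

theorem sQuad_smul {n : ℕ} (a : Fin n → ℝ) (c : ℝ) (x : Euc n) :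
    sQuad a (c • x) = c ^ 2 * sQuad a x := by
  simp only [sQuad_eq, PiLp.smul_apply, smul_eq_mul, mul_pow, Finset.mul_sum]
  exact Finset.sum_congr rfl fun i _ => by ring

theorem isCompact_sQuad_le {n : ℕ} {a : Fin n → ℝ} {m : ℝ} (hm : 0 < m) (h : ∀ i, m ≤ a i)
    (T : ℝ) : IsCompact {x : Euc n | sQuad a x ≤ T} := by
  refine (isCompact_closedBall (0 : Euc n) √(2 * T / m)).of_isClosed_subset
    (isClosed_le (continuous_sQuad a) continuous_const) fun x (hx : sQuad a x ≤ T) => ?_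
  rw [mem_closedBall_zero_iff]
  refine Real.le_sqrt_of_sq_le ((le_div_iff₀ hm).2 ?_)
  linarith [div_two_mul_sq_norm_le_sQuad h x]

theorem isCompact_ring {n : ℕ} {a : Fin n → ℝ} {m : ℝ} (hm : 0 < m) (h : ∀ i, m ≤ a i) (T : ℝ)
    (x₀ : Euc n) (δ : ℝ) : IsCompact {x : Euc n | sQuad a x ≤ T ∧ δ ≤ ‖x - x₀‖} :=
  have hnorm : Continuous fun x : Euc n => ‖x - x₀‖ := by fun_prop
  (isCompact_sQuad_le hm h T).inter_right (isClosed_le continuous_const hnorm)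

theorem eventually_mem_ring {n : ℕ} {a : Fin n → ℝ} {T δ : ℝ} {x₀ x : Euc n} (h₁ : sQuad a x < T)
    (h₂ : δ < ‖x - x₀‖) : ∀ᶠ y in 𝓝 x, sQuad a y < T ∧ δ < ‖y - x₀‖ :=
  ((continuous_sQuad a).continuousAt.eventually_lt_const h₁).and
    (((by fun_prop : Continuous fun y : Euc n => ‖y - x₀‖).tendsto x).eventually_const_lt h₂)

theorem mem_closure_sQuad_lt {n : ℕ} {a : Fin n → ℝ} {R : ℝ} (hR : 0 < R) {x : Euc n}
    (hx : sQuad a x ≤ R) : x ∈ closure {y : Euc n | sQuad a y < R} := by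
  have hscale : Continuous fun t : ℝ => (1 - t) • x := by fun_prop
  have htend : Tendsto (fun t : ℝ => (1 - t) • x) (𝓝[>] 0) (𝓝 x) := by
    simpa using (hscale.tendsto 0).mono_left nhdsWithin_le_nhds
  refine mem_closure_of_tendsto htend ?_
  filter_upwards [Ioo_mem_nhdsGT zero_lt_one] with t ht
  have hsq : (1 - t) ^ 2 < 1 := by nlinarith [ht.1, ht.2]
  change sQuad a _ < R
  rw [sQuad_smul]
  nlinarith [sq_nonneg (1 - t)]

theorem mem_closure_ring {n : ℕ} {a : Fin n → ℝ} {x₀ x : Euc n} {ε R : ℝ} (hε : 0 < ε)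
    (hR : 0 < R) (hball : ∀ y : Euc n, ‖y - x₀‖ ≤ ε → sQuad a y < R) (h₁ : sQuad a x ≤ R)
    (h₂ : ε ≤ ‖x - x₀‖) : x ∈ closure {y : Euc n | sQuad a y < R ∧ ε < ‖y - x₀‖} := by
  have hell : IsOpen {y : Euc n | sQuad a y < R} :=
    isOpen_lt (continuous_sQuad a) continuous_const
  have hext : IsOpen {y : Euc n | ε < ‖y - x₀‖} := isOpen_lt continuous_const (by fun_prop)
  rcases h₂.lt_or_eq with h₂ | h₂
  · exact hext.closure_inter ⟨mem_closure_sQuad_lt hR h₁, h₂⟩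
  · have hcompl : {y : Euc n | ε < ‖y - x₀‖} = (Metric.closedBall x₀ ε)ᶜ := by
      ext y
      simp [dist_eq_norm]
    have hx : x ∈ closure {y : Euc n | ε < ‖y - x₀‖} := by
      rw [hcompl, closure_compl, interior_closedBall x₀ hε.ne', Set.mem_compl_iff,
        Metric.mem_ball, dist_eq_norm, ← h₂]
      exact lt_irrefl ε
    exact hell.inter_closure ⟨hball x h₂.ge, hx⟩

/-- The admissible parameters of the approximating problem: `m` and `M` bound the eigenvalues
`aᵢ` of `A` from below and above, and `R₀` and `α` are large enough. -/
structure Admissible (n k : ℕ) (a : Fin n → ℝ) (m M R₀ α : ℝ) : Prop where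
  three_le : 3 ≤ n
  one_le : 1 ≤ k
  le : k ≤ n
  esymmVec_eq : esymmVec n k a = 1
  genExp_lt : genExp n k a < -1
  m_pos : 0 < m
  m_le : ∀ i, m ≤ a i
  le_M : ∀ i, a i ≤ M
  one_le_R₀ : 1 ≤ R₀
  five_mul_M_le : 5 * M ≤ R₀
  le_α : (8 / m + 2) ^ k * (2 * R₀) ^ (-genExp n k a) ≤ α

namespace Admissible

variable {n k : ℕ} {a : Fin n → ℝ} {m M R₀ α : ℝ}

theorem a_pos (h : Admissible n k a m M R₀ α) (i : Fin n) : 0 < a i :=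
  h.m_pos.trans_le (h.m_le i)

theorem M_pos (h : Admissible n k a m M R₀ α) : 0 < M :=
  have i : Fin n := ⟨0, by linarith [h.three_le]⟩
  (h.a_pos i).trans_le (h.le_M i)

theorem R₀_pos (h : Admissible n k a m M R₀ α) : 0 < R₀ :=
  zero_lt_one.trans_le h.one_le_R₀

theorem α_pos (h : Admissible n k a m M R₀ α) : 0 < α := by
  have hm := h.m_pos
  have hR₀ := h.R₀_pos
  exact lt_of_lt_of_le (by positivity) h.le_α

theorem hkfun_pos (h : Admissible n k a m M R₀ α) : 0 < hkfun n k a :=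
  _root_.hkfun_pos h.one_le h.le h.a_pos

theorem sQuad_nonneg (h : Admissible n k a m M R₀ α) (x : Euc n) : 0 ≤ sQuad a x :=
  le_trans (by have := h.m_pos; positivity) (div_two_mul_sq_norm_le_sQuad h.m_le x)

theorem norm_le_and_sQuad_lt (h : Admissible n k a m M R₀ α) {x₀ x : Euc n}
    (hx₀ : ‖x₀‖ < 1 / 2) (hx : ‖x - x₀‖ ≤ 2) : ‖x‖ ≤ 5 / 2 ∧ sQuad a x < R₀ := by
  have hnorm : ‖x‖ ≤ 5 / 2 := by
    linarith [norm_sub_norm_le x x₀]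
  refine ⟨hnorm, ?_⟩
  have hsq : ‖x‖ ^ 2 ≤ (5 / 2) ^ 2 := pow_le_pow_left₀ (norm_nonneg x) hnorm 2
  nlinarith [sQuad_le h.le_M x, h.M_pos, h.five_mul_M_le]

theorem le_ubarProfile (h : Admissible n k a m M R₀ α) {R : ℝ} (hR : 2 * R₀ ≤ R) :
    R + 8 / m * R₀ ≤ ubarProfile n k a R₀ α R := by
  have hm := h.m_pos
  have hR₀ := h.R₀_pos
  have hlow := mul_le_ubarProfile_two_mul h.one_le h.hkfun_pos hR₀ (by positivity) h.le_α
  have hgrow := ubarProfile_add_sub_le h.one_le h.hkfun_pos h.α_pos.le hR₀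
    (by linarith : 0 < 2 * R₀) hR
  linarith

end Admissible

/-- The setting of the gradient estimates: admissible parameters and a solution `u` of the
approximating problem on the ring `{s < R, ε < |x - x₀|}`, with its closure and its boundary values
described by the inequalities that define them. -/
structure RingSol (n k : ℕ) (a : Fin n → ℝ) (m M R₀ α : ℝ) (x₀ : Euc n) (ε R : ℝ)
    (u : Euc n → ℝ) : Prop extends Admissible n k a m M R₀ α where
  norm_x₀_lt : ‖x₀‖ < 1 / 2
  ε_pos : 0 < ε
  ε_lt : ε < 1 / 2
  lt_R : 3 * R₀ < R
  contDiffAt : ∀ x, sQuad a x ≤ R → ε ≤ ‖x - x₀‖ → ContDiffAt ℝ (⊤ : ℕ∞) u x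
  gardingMat : ∀ x, sQuad a x < R → ε < ‖x - x₀‖ → GardingMat n k (hessMat n u x)
  SkHess_eq : ∀ x, sQuad a x < R → ε < ‖x - x₀‖ → SkHess n k u x = 1
  eq_zero : ∀ x, ‖x - x₀‖ = ε → u x = 0
  eq_ubarProfile : ∀ x, sQuad a x = R → u x = ubarProfile n k a R₀ α R

theorem OmegaRe_eq {n : ℕ} (a : Fin n → ℝ) (x₀ : Euc n) {ε : ℝ} (hε : ε ≠ 0) (R : ℝ) :
    OmegaRe n a x₀ ε R = {x : Euc n | sQuad a x < R ∧ ε < ‖x - x₀‖} := by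
  ext x
  simp only [OmegaRe, ESet, closure_ball x₀ hε, Set.mem_sdiff, Set.mem_ofPred_eq,
    Metric.mem_closedBall, sub_zero, dist_eq_norm, not_le]

theorem ApproxSol.ringSol {n k : ℕ} {a : Fin n → ℝ} {m M R₀ α : ℝ} {x₀ : Euc n} {ε R : ℝ}
    {u : Euc n → ℝ} (hu : ApproxSol n k a x₀ ε R R₀ α u) (h : Admissible n k a m M R₀ α)
    (hx₀ : ‖x₀‖ < 1 / 2) (hε : 0 < ε) (hε2 : ε < 1 / 2) (hR : 3 * R₀ < R) :
    RingSol n k a m M R₀ α x₀ ε R u := by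
  obtain ⟨⟨U, hU, hΩU, hsmooth⟩, hconvex, heq, hin, hout⟩ := hu
  rw [OmegaRe_eq a x₀ hε.ne' R] at hΩU hconvex heq
  have hR₀ := h.R₀_pos
  have hball : ∀ y : Euc n, ‖y - x₀‖ ≤ ε → sQuad a y < R := fun y hy => by
    linarith [(h.norm_le_and_sQuad_lt hx₀ (by linarith : ‖y - x₀‖ ≤ 2)).2]
  exact {
    toAdmissible := h
    norm_x₀_lt := hx₀
    ε_pos := hε
    ε_lt := hε2
    lt_R := hR
    contDiffAt := fun x hx₁ hx₂ => hsmooth.contDiffAt (hU.mem_nhds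
      (hΩU (mem_closure_ring hε (by linarith) hball hx₁ hx₂)))
    gardingMat := fun x hx₁ hx₂ => hconvex x ⟨hx₁, hx₂⟩
    SkHess_eq := fun x hx₁ hx₂ => heq x ⟨hx₁, hx₂⟩
    eq_zero := fun x hx => hin x (mem_sphere_iff_norm.2 hx)
    eq_ubarProfile := fun x hx => by rw [hout x hx, ubar, ubarProfile, ← hx] }

namespace RingSol

variable {n k : ℕ} {a : Fin n → ℝ} {m M R₀ α : ℝ} {x₀ : Euc n} {ε R : ℝ} {u : Euc n → ℝ}

theorem continuousAt (h : RingSol n k a m M R₀ α x₀ ε R u) {x : Euc n} (h₁ : sQuad a x ≤ R)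
    (h₂ : ε ≤ ‖x - x₀‖) : ContinuousAt u x :=
  (h.contDiffAt x h₁ h₂).continuousAt

theorem contDiffAt_of_nat (h : RingSol n k a m M R₀ α x₀ ε R u) {x : Euc n} (h₁ : sQuad a x ≤ R)
    (h₂ : ε ≤ ‖x - x₀‖) (j : ℕ) : ContDiffAt ℝ j u x :=
  (h.contDiffAt x h₁ h₂).of_le (by exact_mod_cast le_top)

theorem R₀_lt_R (h : RingSol n k a m M R₀ α x₀ ε R u) : R₀ < R := by
  linarith [h.R₀_pos, h.lt_R]

theorem exists_linearization (h : RingSol n k a m M R₀ α x₀ ε R u) {x : Euc n}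
    (h₁ : sQuad a x < R) (h₂ : ε < ‖x - x₀‖) :
    ∃ (v : OrthonormalBasis (Fin n) ℝ (Euc n)) (f : Fin n → ℝ), (∀ i, 0 < f i) ∧
      (0 ≤ ∑ i, f i * quadForm n (hessMat n u x) (v i)) ∧
      (∀ ξ, ∑ i, f i * quadForm n (hessMat n (fun y => fderiv ℝ u y ξ) x) (v i) = 0) ∧
      (∀ ξ, quadForm n (hessMat n u x) ξ ≤ 0 →
        ‖ξ‖ ^ 2 * ∑ i, f i ≤ n * ∑ i, f i * inner ℝ (v i) ξ ^ 2) := by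
  exact _root_.exists_linearization h.one_le h.le (h.contDiffAt_of_nat h₁.le h₂.le 3)
    (h.gardingMat x h₁ h₂)
    ((eventually_mem_ring h₁ h₂).mono fun y hy => h.SkHess_eq y hy.1 hy.2)

end RingSol

/-! ### Comparison tools -/

theorem le_of_forall_add_mul_le {b c d δ : ℝ} (hδ : 0 < δ)
    (h : ∀ η, 0 < η → η < δ → b + η * c ≤ d) : b ≤ d := by
  have hcont : Continuous fun η : ℝ => b + η * c := by fun_prop
  have htend : Tendsto (fun η : ℝ => b + η * c) (𝓝[>] 0) (𝓝 b) := by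
    simpa using (hcont.tendsto 0).mono_left nhdsWithin_le_nhds
  refine le_of_tendsto htend ?_
  filter_upwards [Ioo_mem_nhdsGT hδ] with η hη using h η hη.1 hη.2

theorem nonneg_of_isMinOn_imp {X : Type*} [TopologicalSpace X] {K : Set X} {f : X → ℝ}
    (hK : IsCompact K) (hf : ContinuousOn f K) (h : ∀ z ∈ K, IsMinOn f K z → 0 ≤ f z) :
    ∀ x ∈ K, 0 ≤ f x := fun x hx =>
  have ⟨z, hz, hmin⟩ := hK.exists_isMinOn ⟨x, hx⟩ hf
  (h z hz hmin).trans (hmin hx)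

/- If every negative minimum of `f₁` over `K₁` is undercut by `f₂` on `K₂`, and vice versa, then
there is none: the smaller of the two minima could not be undercut. -/
theorem nonneg_of_isMinOn_undercut {X : Type*} [TopologicalSpace X] {K₁ K₂ : Set X}
    {f₁ f₂ : X → ℝ}
    (hK₁ : IsCompact K₁) (hK₂ : IsCompact K₂) (hf₁ : ContinuousOn f₁ K₁) (hf₂ : ContinuousOn f₂ K₂)
    (h₁ : ∀ z ∈ K₁, IsMinOn f₁ K₁ z → f₁ z < 0 → ∃ y ∈ K₂, f₂ y < f₁ z)
    (h₂ : ∀ z ∈ K₂, IsMinOn f₂ K₂ z → f₂ z < 0 → ∃ y ∈ K₁, f₁ y < f₂ z) :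
    ∀ x ∈ K₁, 0 ≤ f₁ x := by
  refine nonneg_of_isMinOn_imp hK₁ hf₁ fun z₁ hz₁ hmin₁ => not_lt.1 fun hneg => ?_
  obtain ⟨y₂, hy₂, hlt₂⟩ := h₁ z₁ hz₁ hmin₁ hneg
  obtain ⟨z₂, hz₂, hmin₂⟩ := hK₂.exists_isMinOn ⟨y₂, hy₂⟩ hf₂
  have hz₂_lt : f₂ z₂ < f₁ z₁ := (hmin₂ hy₂).trans_lt hlt₂
  obtain ⟨y₁, hy₁, hlt₁⟩ := h₂ z₂ hz₂ hmin₂ (hz₂_lt.trans hneg)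
  exact (hmin₁ hy₁).not_gt (hlt₁.trans hz₂_lt)

theorem deriv_le_of_eventually_le_right {f g : ℝ → ℝ} {f' g' t₀ : ℝ} (hf : HasDerivAt f f' t₀)
    (hg : HasDerivAt g g' t₀) (h₀ : f t₀ = g t₀) (h : ∀ᶠ t in 𝓝[>] t₀, f t ≤ g t) : f' ≤ g' := by
  have hf' := hf.tendsto_slope.mono_left (nhdsGT_le_nhdsNE t₀)
  have hg' := hg.tendsto_slope.mono_left (nhdsGT_le_nhdsNE t₀)
  refine le_of_tendsto_of_tendsto hf' hg' ?_
  filter_upwards [h, self_mem_nhdsWithin] with t hle ht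
  rw [slope_def_field, slope_def_field, h₀]
  have : 0 < t - t₀ := sub_pos.2 ht
  gcongr

theorem eventually_lt_right_of_deriv_neg {f : ℝ → ℝ} {f' t₀ : ℝ} (hf : HasDerivAt f f' t₀)
    (hneg : f' < 0) : ∀ᶠ t in 𝓝[>] t₀, f t < f t₀ := by
  filter_upwards [(hf.tendsto_slope.mono_left (nhdsGT_le_nhdsNE t₀)).eventually_lt_const hneg,
    self_mem_nhdsWithin] with t hslope ht
  rw [slope_def_field, div_lt_iff₀ (sub_pos.2 ht)] at hslope
  linarith

/- The hypothesis forces the functional to be a nonnegative multiple of `⟪y, ·⟫`. -/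
theorem opNorm_le_of_nonneg_of_inner_pos {E : Type*} [NormedAddCommGroup E] [InnerProductSpace ℝ E]
    {ℓ : E →L[ℝ] ℝ} {y : E} (hy : y ≠ 0) (h : ∀ e, 0 < inner ℝ y e → 0 ≤ ℓ e) :
    ‖ℓ‖ ≤ ℓ y / ‖y‖ := by
  have : 0 < ‖y‖ := norm_pos_iff.2 hy
  have hyy : inner ℝ y y = ‖y‖ ^ 2 := real_inner_self_eq_norm_sq y
  have hℓy : 0 ≤ ℓ y := h y (by rw [hyy]; positivity)
  have hperp_nonneg : ∀ w, inner ℝ y w = 0 → 0 ≤ ℓ w := fun w hw => by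
    refine neg_nonpos.1 (le_of_forall_add_mul_le (c := -ℓ y) one_pos fun η hη _ => ?_)
    have hpos : 0 ≤ ℓ (w + η • y) :=
      h _ (by rw [inner_add_right, hw, inner_smul_right, hyy]; positivity)
    rw [map_add, map_smul, smul_eq_mul] at hpos
    linarith
  have hperp : ∀ w, inner ℝ y w = 0 → ℓ w = 0 := fun w hw => by
    have hneg := hperp_nonneg (-w) (by rw [inner_neg_right, hw, neg_zero])
    rw [map_neg] at hneg
    linarith [hperp_nonneg w hw]
  refine ContinuousLinearMap.opNorm_le_bound _ (by positivity) fun e => ?_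
  have hproj : ℓ e = inner ℝ y e / ‖y‖ ^ 2 * ℓ y := by
    have hzero := hperp (e - (inner ℝ y e / ‖y‖ ^ 2) • y) (by
      rw [inner_sub_right, inner_smul_right, hyy]
      field_simp
      ring)
    rwa [map_sub, map_smul, smul_eq_mul, sub_eq_zero] at hzero
  rw [hproj, norm_mul, Real.norm_of_nonneg hℓy, norm_div, Real.norm_of_nonneg (sq_nonneg ‖y‖)]
  calc ‖inner ℝ y e‖ / ‖y‖ ^ 2 * ℓ y ≤ ‖y‖ * ‖e‖ / ‖y‖ ^ 2 * ℓ y := by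
        gcongr
        exact norm_inner_le_norm y e
    _ = ℓ y / ‖y‖ * ‖e‖ := by field_simp

/-! ### Lower barriers -/

/-- The lower barrier `ū + η (s - R)` for the solution away from the hole; adding the small slope
`η > 0` makes the subsolution `ū` strict. -/
noncomputable def outerBarrier (n k : ℕ) (a : Fin n → ℝ) (R₀ α R η : ℝ) (x : Euc n) : ℝ :=
  ubarProfile n k a R₀ α (sQuad a x) + η * (sQuad a x - R)

/-- The lower barrier `|x - x₀|² - ε²` near the hole, a strict subsolution vanishing on
`∂B_ε(x₀)`. -/
noncomputable def innerBarrier {n : ℕ} (x₀ : Euc n) (ε : ℝ) (x : Euc n) : ℝ :=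
  ‖x - x₀‖ ^ 2 - ε ^ 2

theorem one_lt_esymmVec_two {n k : ℕ} (hk1 : 1 ≤ k) (hkn : k ≤ n) :
    1 < esymmVec n k fun _ => 2 := by
  rw [esymmVec_const]
  have hchoose : (1 : ℝ) ≤ n.choose k := by exact_mod_cast Nat.choose_pos hkn
  have hpow : (2 : ℝ) ≤ 2 ^ k := le_self_pow₀ one_le_two (by omega)
  nlinarith

theorem matSk_modelHess_two {n j : ℕ} (hj1 : 1 ≤ j) (hjn : j ≤ n) (y : Euc n) :
    matSk n j (modelHess n (fun _ => 2) y 1 0) = esymmVec n j fun _ => 2 := by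
  obtain ⟨i, rfl⟩ := Nat.exists_eq_add_of_le' hj1
  rw [matSk_modelHess_const hjn two_pos y one_pos, esymmVec_const]
  ring

theorem gardingMat_modelHess_and_one_lt {n k : ℕ} (hk1 : 1 ≤ k) (hkn : k ≤ n) {a : Fin n → ℝ}
    (ha : ∀ i, 0 < a i) (hS : esymmVec n k a = 1) {y : Euc n} {p p' η : ℝ} (hp : 0 < p)
    (hp' : p' ≤ 0) (hη : 0 < η)
    (hrel : p ^ (k - 1) * (p + p' * (2 * hkfun n k a * sQuad a y)) = 1) :
    GardingMat n k (modelHess n a y (p + η) p') ∧ 1 < matSk n k (modelHess n a y (p + η) p') := by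
  have hpk : 0 < p ^ (k - 1) := by positivity
  have hq : 0 < p + p' * (2 * hkfun n k a * sQuad a y) :=
    pos_of_mul_pos_right (hrel ▸ one_pos) hpk.le
  have hlow : ∀ j, j + 1 ≤ k → (p + η) ^ j * (esymmVec n (j + 1) a *
      (p + p' * (2 * hkfun n k a * sQuad a y) + η)) ≤
        matSk n (j + 1) (modelHess n a y (p + η) p') := fun j hj => by
    refine le_of_eq_of_le ?_ (le_matSk_modelHess hkn hj ha hS y (by linarith) hp')
    rw [sQuad_eq]
    ring
  constructor
  · intro j hj1 hjk
    obtain ⟨i, rfl⟩ := Nat.exists_eq_add_of_le' hj1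
    have hesymm := esymmVec_pos (hjk.trans hkn) ha
    exact lt_of_lt_of_le (by positivity) (hlow i hjk)
  · obtain ⟨j, rfl⟩ := Nat.exists_eq_add_of_le' hk1
    rw [Nat.add_sub_cancel] at hrel hpk
    have hlow := hlow j le_rfl
    rw [hS, one_mul] at hlow
    refine lt_of_lt_of_le ?_ hlow
    calc (1 : ℝ) < p ^ j * (p + p' * (2 * hkfun n (j + 1) a * sQuad a y) + η) := by
          rw [mul_add, hrel]
          exact lt_add_of_pos_right 1 (mul_pos hpk hη)
      _ ≤ _ := by
          gcongr
          linarith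

namespace Admissible

variable {n k : ℕ} {a : Fin n → ℝ} {m M R₀ α : ℝ}

theorem ubarProfile_hasDerivAt (h : Admissible n k a m M R₀ α) {t : ℝ} (ht : 0 < t) :
    HasDerivAt (ubarProfile n k a R₀ α) (genInt n k a α t) t :=
  hasDerivAt_ubarProfile h.one_le h.hkfun_pos h.α_pos.le h.R₀_pos ht

theorem two_lt_norm_sub (h : Admissible n k a m M R₀ α) {x₀ x : Euc n} (hx₀ : ‖x₀‖ < 1 / 2)
    (hx : R₀ ≤ sQuad a x) : 2 < ‖x - x₀‖ :=
  not_le.1 fun hle => (h.norm_le_and_sQuad_lt hx₀ hle).2.not_ge hx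

theorem outerBarrier_lt_innerBarrier (h : Admissible n k a m M R₀ α) {x₀ x : Euc n} {ε R η : ℝ}
    (hx₀ : ‖x₀‖ < 1 / 2) (hε : 0 < ε) (hε2 : ε < 1 / 2) (hR : R₀ < R) (hη : 0 < η)
    (hx : sQuad a x = R₀) : outerBarrier n k a R₀ α R η x < innerBarrier x₀ ε x := by
  have hfar := h.two_lt_norm_sub hx₀ hx.ge
  have hslope : η * (R₀ - R) < 0 := mul_neg_of_pos_of_neg hη (by linarith)
  rw [outerBarrier, innerBarrier, hx, ubarProfile_self]
  nlinarith

theorem innerBarrier_lt_outerBarrier (h : Admissible n k a m M R₀ α) {x₀ x : Euc n} {ε R η : ℝ}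
    (hx₀ : ‖x₀‖ < 1 / 2) (hη : 0 < η) (hηR : η * R ≤ 1) (hx : sQuad a x = 2 * R₀) :
    innerBarrier x₀ ε x < outerBarrier n k a R₀ α R η x := by
  have hm := h.m_pos
  have hR₀ := h.one_le_R₀
  have hU := h.le_ubarProfile le_rfl
  have hnorm_sq : ‖x‖ ^ 2 ≤ 4 * R₀ / m := by
    rw [le_div_iff₀ hm]
    linarith [div_two_mul_sq_norm_le_sQuad h.m_le x]
  have hsub : ‖x - x₀‖ ^ 2 ≤ (‖x‖ + ‖x₀‖) ^ 2 :=
    pow_le_pow_left₀ (norm_nonneg _) (norm_sub_le _ _) 2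
  have hslope : -1 ≤ η * (2 * R₀ - R) := by nlinarith
  have hconst : 8 / m * R₀ = 2 * (4 * R₀ / m) := by ring
  rw [outerBarrier, innerBarrier, hx]
  nlinarith [sq_nonneg (‖x‖ - ‖x₀‖), norm_nonneg x₀, sq_nonneg ε]

end Admissible

namespace RingSol

variable {n k : ℕ} {a : Fin n → ℝ} {m M R₀ α : ℝ} {x₀ : Euc n} {ε R : ℝ} {u : Euc n → ℝ}

theorem not_isLocalMin_sub_outerBarrier (h : RingSol n k a m M R₀ α x₀ ε R u) {x : Euc n} {η : ℝ}
    (hη : 0 < η) (h₁ : R₀ ≤ sQuad a x) (h₂ : sQuad a x < R) :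
    ¬ IsLocalMin (fun y => u y - outerBarrier n k a R₀ α R η y) x := by
  intro hmin
  have hs : 0 < sQuad a x := h.R₀_pos.trans_le h₁
  have hfar : ε < ‖x - x₀‖ := by linarith [h.two_lt_norm_sub h.norm_x₀_lt h₁, h.ε_lt]
  obtain ⟨p', hp', hp'_nonpos, hrel⟩ :=
    exists_hasDerivAt_genInt h.one_le h.hkfun_pos h.α_pos.le hs
  obtain ⟨hcone, hone⟩ := gardingMat_modelHess_and_one_lt h.one_le h.le h.a_pos h.esymmVec_eq
    (zero_lt_one.trans_le (one_le_genInt h.α_pos.le hs)) hp'_nonpos hη hrel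
  have hG : ∀ᶠ z in 𝓝 (sQuad a x), HasDerivAt
      (fun z => ubarProfile n k a R₀ α z + η * (z - R)) (genInt n k a α z + η) z := by
    filter_upwards [eventually_gt_nhds hs] with z hz
    simpa using (h.ubarProfile_hasDerivAt hz).fun_add
      (((hasDerivAt_id z).sub_const R).const_mul η)
  have hle := matSk_modelHess_le_SkHess (c := 0) h.one_le h.le
    (h.contDiffAt_of_nat h₂.le hfar.le 2) (by simpa using hG) (by simpa using hp'.add_const η)
    (by simpa only [sub_zero, outerBarrier] using hmin) (by simpa using hcone)
  rw [h.SkHess_eq x h₂ hfar, sub_zero] at hle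
  exact hone.not_ge hle

theorem not_isLocalMin_sub_innerBarrier (h : RingSol n k a m M R₀ α x₀ ε R u) {x : Euc n}
    (h₁ : sQuad a x < R) (h₂ : ε < ‖x - x₀‖) :
    ¬ IsLocalMin (fun y => u y - innerBarrier x₀ ε y) x := by
  intro hmin
  have hle := matSk_modelHess_le_SkHess (a := fun _ => 2) (c := x₀) (G := fun z => z - ε ^ 2)
    (G' := fun _ => 1) h.one_le h.le (h.contDiffAt_of_nat h₁.le h₂.le 2)
    (Eventually.of_forall fun z => (hasDerivAt_id z).sub_const (ε ^ 2)) (hasDerivAt_const _ _)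
    (by simpa only [sQuad_two, innerBarrier] using hmin) (fun j hj1 hjk => by
      rw [matSk_modelHess_two hj1 (hjk.trans h.le)]
      exact esymmVec_pos (hjk.trans h.le) fun _ => two_pos)
  rw [h.SkHess_eq x h₁ h₂, matSk_modelHess_two h.one_le h.le] at hle
  exact (one_lt_esymmVec_two h.one_le h.le).not_ge hle

theorem continuousOn_sub_outerBarrier (h : RingSol n k a m M R₀ α x₀ ε R u) (η : ℝ) :
    ContinuousOn (fun y => u y - outerBarrier n k a R₀ α R η y)
      {y | sQuad a y ≤ R ∧ R₀ ≤ sQuad a y} := by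
  intro x hx
  have hfar : ε ≤ ‖x - x₀‖ := by linarith [h.two_lt_norm_sub h.norm_x₀_lt hx.2, h.ε_lt]
  have hs := (continuous_sQuad a).continuousAt (x := x)
  have hU : ContinuousAt (fun y => ubarProfile n k a R₀ α (sQuad a y)) x :=
    (h.ubarProfile_hasDerivAt (h.R₀_pos.trans_le hx.2)).continuousAt.comp hs
  exact ((h.continuousAt hx.1 hfar).sub
    (hU.add ((hs.sub continuousAt_const).const_mul η))).continuousWithinAt

theorem continuousOn_sub_innerBarrier (h : RingSol n k a m M R₀ α x₀ ε R u) {T : ℝ} (hT : T ≤ R) :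
    ContinuousOn (fun y => u y - innerBarrier x₀ ε y) {y | sQuad a y ≤ T ∧ ε ≤ ‖y - x₀‖} := by
  intro x hx
  have hw : ContinuousAt (fun y : Euc n => ‖y - x₀‖ ^ 2 - ε ^ 2) x := by fun_prop
  exact ((h.continuousAt (hx.1.trans hT) hx.2).sub hw).continuousWithinAt

theorem exists_sub_innerBarrier_lt (h : RingSol n k a m M R₀ α x₀ ε R u) {η : ℝ} (hη : 0 < η)
    {z : Euc n} (hz₁ : sQuad a z ≤ R) (hz₂ : R₀ ≤ sQuad a z)
    (hmin : IsMinOn (fun y => u y - outerBarrier n k a R₀ α R η y)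
      {y | sQuad a y ≤ R ∧ R₀ ≤ sQuad a y} z)
    (hneg : u z - outerBarrier n k a R₀ α R η z < 0) :
    ∃ y ∈ {y | sQuad a y ≤ 2 * R₀ ∧ ε ≤ ‖y - x₀‖},
      u y - innerBarrier x₀ ε y < u z - outerBarrier n k a R₀ α R η z := by
  have hR₀ := h.R₀_pos
  have hfar := h.two_lt_norm_sub h.norm_x₀_lt hz₂
  rcases hz₂.eq_or_lt' with hz₂ | hz₂
  · refine ⟨z, ⟨by linarith, by linarith [h.ε_lt]⟩, ?_⟩
    linarith [h.outerBarrier_lt_innerBarrier h.norm_x₀_lt h.ε_pos h.ε_lt h.R₀_lt_R hη hz₂]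
  rcases hz₁.eq_or_lt with hz₁ | hz₁
  · rw [h.eq_ubarProfile z hz₁, outerBarrier, hz₁] at hneg
    linarith
  · refine absurd ?_ (h.not_isLocalMin_sub_outerBarrier hη hz₂.le hz₁)
    have hs := (continuous_sQuad a).continuousAt (x := z)
    filter_upwards [hs.eventually_lt_const hz₁, hs.eventually_const_lt hz₂] with y hy₁ hy₂
      using hmin ⟨hy₁.le, hy₂.le⟩

theorem exists_sub_outerBarrier_lt (h : RingSol n k a m M R₀ α x₀ ε R u) {η : ℝ} (hη : 0 < η)
    (hηR : η * R ≤ 1) {z : Euc n} (hz₁ : sQuad a z ≤ 2 * R₀) (hz₂ : ε ≤ ‖z - x₀‖)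
    (hmin : IsMinOn (fun y => u y - innerBarrier x₀ ε y)
      {y | sQuad a y ≤ 2 * R₀ ∧ ε ≤ ‖y - x₀‖} z)
    (hneg : u z - innerBarrier x₀ ε z < 0) :
    ∃ y ∈ {y | sQuad a y ≤ R ∧ R₀ ≤ sQuad a y},
      u y - outerBarrier n k a R₀ α R η y < u z - innerBarrier x₀ ε z := by
  have hR₀ := h.R₀_pos
  have hR := h.lt_R
  rcases hz₁.eq_or_lt with hz₁ | hz₁
  · refine ⟨z, ⟨by linarith, by linarith⟩, ?_⟩
    linarith [h.innerBarrier_lt_outerBarrier (ε := ε) h.norm_x₀_lt hη hηR hz₁]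
  rcases hz₂.eq_or_lt' with hz₂ | hz₂
  · rw [h.eq_zero z hz₂, innerBarrier, hz₂] at hneg
    linarith
  · refine absurd ?_ (h.not_isLocalMin_sub_innerBarrier (by linarith : sQuad a z < R) hz₂)
    filter_upwards [eventually_mem_ring hz₁ hz₂] with y hy using hmin ⟨hy.1.le, hy.2.le⟩

/- `ū` need not lie below `u` on the whole ring, so it is compared with `u` outside `E_{R₀}` only,
together with the inner barrier inside `E_{2R₀}`. At the two interfaces the other barrier is the
larger one, so neither difference can have its negative minimum there. -/
theorem barriers_le (h : RingSol n k a m M R₀ α x₀ ε R u) {η : ℝ} (hη : 0 < η) (hηR : η * R ≤ 1) :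
    (∀ x, sQuad a x ≤ R ∧ R₀ ≤ sQuad a x → outerBarrier n k a R₀ α R η x ≤ u x) ∧
      ∀ x, sQuad a x ≤ 2 * R₀ ∧ ε ≤ ‖x - x₀‖ → innerBarrier x₀ ε x ≤ u x := by
  have hcompact₁ : IsCompact {y : Euc n | sQuad a y ≤ R ∧ R₀ ≤ sQuad a y} :=
    (isCompact_sQuad_le h.m_pos h.m_le R).inter_right
      (isClosed_le continuous_const (continuous_sQuad a))
  have hcompact₂ := isCompact_ring h.m_pos h.m_le (2 * R₀) x₀ ε
  have hcont₁ := h.continuousOn_sub_outerBarrier η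
  have hcont₂ := h.continuousOn_sub_innerBarrier (by linarith [h.R₀_pos, h.lt_R] : 2 * R₀ ≤ R)
  have hstep₁ := fun z (hz : sQuad a z ≤ R ∧ R₀ ≤ sQuad a z) =>
    h.exists_sub_innerBarrier_lt hη hz.1 hz.2
  have hstep₂ := fun z (hz : sQuad a z ≤ 2 * R₀ ∧ ε ≤ ‖z - x₀‖) =>
    h.exists_sub_outerBarrier_lt hη hηR hz.1 hz.2
  exact ⟨fun x hx => sub_nonneg.1 (nonneg_of_isMinOn_undercut hcompact₁ hcompact₂ hcont₁ hcont₂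
      hstep₁ hstep₂ x hx),
    fun x hx => sub_nonneg.1 (nonneg_of_isMinOn_undercut hcompact₂ hcompact₁ hcont₂ hcont₁
      hstep₂ hstep₁ x hx)⟩

theorem ubarProfile_le (h : RingSol n k a m M R₀ α x₀ ε R u) {x : Euc n} (h₁ : R₀ ≤ sQuad a x)
    (h₂ : sQuad a x ≤ R) : ubarProfile n k a R₀ α (sQuad a x) ≤ u x := by
  have hR : 0 < R := h.R₀_pos.trans h.R₀_lt_R
  refine le_of_forall_add_mul_le (c := sQuad a x - R) (one_div_pos.2 hR) fun η hη hηR => ?_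
  exact (h.barriers_le hη ((lt_div_iff₀ hR).1 hηR).le).1 x ⟨h₂, h₁⟩

theorem sq_norm_sub_sq_le (h : RingSol n k a m M R₀ α x₀ ε R u) {x : Euc n}
    (h₁ : sQuad a x ≤ 2 * R₀) (h₂ : ε ≤ ‖x - x₀‖) : ‖x - x₀‖ ^ 2 - ε ^ 2 ≤ u x :=
  have hR : 0 < R := h.R₀_pos.trans h.R₀_lt_R
  (h.barriers_le (inv_pos.2 hR) (inv_mul_cancel₀ hR.ne').le).2 x ⟨h₁, h₂⟩

end RingSol

/-! ### The upper barrier and the gradient on the outer boundary -/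

namespace RingSol

variable {n k : ℕ} {a : Fin n → ℝ} {m M R₀ α : ℝ} {x₀ : Euc n} {ε R : ℝ} {u : Euc n → ℝ}

theorem not_isLocalMin_mul_sQuad_sub (h : RingSol n k a m M R₀ α x₀ ε R u) {x : Euc n} {q : ℝ}
    (hq : 0 < q) (hq1 : q < 1) (c : ℝ) (h₁ : sQuad a x < R) (h₂ : ε < ‖x - x₀‖) :
    ¬ IsLocalMin (fun y => q * sQuad a y + c - u y) x := by
  intro hmin
  have hle := SkHess_le_matSk_modelHess (c := 0) (G := fun z => q * z + c) (G' := fun _ => q)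
    h.one_le h.le (h.contDiffAt_of_nat h₁.le h₂.le 2)
    (Eventually.of_forall fun z => by simpa using ((hasDerivAt_id z).const_mul q).add_const c)
    (hasDerivAt_const _ _) (by simpa only [sub_zero] using hmin) (h.gardingMat x h₁ h₂)
  obtain ⟨j, rfl⟩ := Nat.exists_eq_add_of_le' h.one_le
  rw [h.SkHess_eq x h₁ h₂, matSk_modelHess h.le h.a_pos _ hq, h.esymmVec_eq] at hle
  have hpow : q ^ (j + 1) < 1 := pow_lt_one₀ hq.le hq1 j.succ_ne_zero
  rw [pow_succ] at hpow
  linarith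

/- The function `(1 - η) s + ū(R) - R + η R` lies above `u`: for `η > 0` it is a strict
supersolution. -/
theorem le_sQuad_add (h : RingSol n k a m M R₀ α x₀ ε R u) {x : Euc n} (h₁ : sQuad a x ≤ R)
    (h₂ : ε ≤ ‖x - x₀‖) : u x ≤ sQuad a x + (ubarProfile n k a R₀ α R - R) := by
  have hR₀ := h.R₀_pos
  have hR := h.lt_R
  have hgap : 0 ≤ ubarProfile n k a R₀ α R - R := by
    have hU := h.le_ubarProfile (by linarith : 2 * R₀ ≤ R)
    have : 0 ≤ 8 / m * R₀ := by have := h.m_pos; positivity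
    linarith
  suffices hη : ∀ η, 0 < η → η < 1 →
      0 ≤ (1 - η) * sQuad a x + (ubarProfile n k a R₀ α R - R + η * R) - u x by
    refine le_of_forall_add_mul_le (c := sQuad a x - R) one_pos fun η hη₀ hη₁ => ?_
    linarith [hη η hη₀ hη₁]
  intro η hη₀ hη₁
  refine nonneg_of_isMinOn_imp (isCompact_ring h.m_pos h.m_le R x₀ ε) (fun y hy => ?_)
    (fun z hz hmin => ?_) x ⟨h₁, h₂⟩ (f := fun y => (1 - η) * sQuad a y +
      (ubarProfile n k a R₀ α R - R + η * R) - u y)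
  · exact ((((continuous_sQuad a).continuousAt.const_mul (1 - η)).add_const _).sub
      (h.continuousAt hy.1 hy.2)).continuousWithinAt
  · rcases hz.2.eq_or_lt' with hz₂ | hz₂
    · have hs : 0 ≤ (1 - η) * sQuad a z := mul_nonneg (by linarith) (h.sQuad_nonneg z)
      have hηR : 0 < η * R := mul_pos hη₀ (by linarith)
      linarith [h.eq_zero z hz₂]
    rcases hz.1.eq_or_lt with hz₁ | hz₁
    · rw [h.eq_ubarProfile z hz₁, hz₁]
      linarith
    · have hlocal : IsLocalMin (fun y => (1 - η) * sQuad a y +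
          (ubarProfile n k a R₀ α R - R + η * R) - u y) z := by
        filter_upwards [eventually_mem_ring hz₁ hz₂] with y hy using hmin ⟨hy.1.le, hy.2.le⟩
      exact absurd hlocal (h.not_isLocalMin_mul_sQuad_sub (by linarith) (by linarith) _ hz₁ hz₂)

end RingSol

/-- The vector `A x`, which is the gradient of `s`. -/
noncomputable def gradSQuad {n : ℕ} (a : Fin n → ℝ) (x : Euc n) : Euc n :=
  WithLp.toLp 2 fun i => a i * x i

theorem inner_gradSQuad {n : ℕ} (a : Fin n → ℝ) (x v : Euc n) :
    inner ℝ (gradSQuad a x) v = ∑ i, a i * x i * v i := by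
  simp [gradSQuad, PiLp.inner_apply, mul_comm]

theorem inner_gradSQuad_self {n : ℕ} (a : Fin n → ℝ) (x : Euc n) :
    inner ℝ (gradSQuad a x) x = 2 * sQuad a x := by
  rw [inner_gradSQuad, sQuad_eq, ← mul_assoc, mul_one_div_cancel two_ne_zero, one_mul]
  exact Finset.sum_congr rfl fun i _ => by ring

theorem sq_norm_gradSQuad_le {n : ℕ} {a : Fin n → ℝ} {M : ℝ} (ha : ∀ i, 0 ≤ a i)
    (hM : ∀ i, a i ≤ M) (x : Euc n) : ‖gradSQuad a x‖ ^ 2 ≤ 2 * M * sQuad a x := by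
  rw [EuclideanSpace.real_norm_sq_eq, sQuad_eq, Finset.mul_sum, Finset.mul_sum]
  refine Finset.sum_le_sum fun i _ => ?_
  have := mul_le_mul_of_nonneg_right (hM i) (mul_nonneg (ha i) (sq_nonneg (x i)))
  simp only [gradSQuad]
  linarith

theorem hasDerivAt_sQuad_line {n : ℕ} (a : Fin n → ℝ) (x v : Euc n) :
    HasDerivAt (fun t : ℝ => sQuad a (x + t • v)) (inner ℝ (gradSQuad a x) v) 0 := by
  rw [inner_gradSQuad]
  exact (hasSecondDerivAt_sQuad_line a x v).hasDerivAt

namespace RingSol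

variable {n k : ℕ} {a : Fin n → ℝ} {m M R₀ α : ℝ} {x₀ : Euc n} {ε R : ℝ} {u : Euc n → ℝ}

theorem hasDerivAt_line (h : RingSol n k a m M R₀ α x₀ ε R u) {x : Euc n} (h₁ : sQuad a x ≤ R)
    (h₂ : ε ≤ ‖x - x₀‖) (v : Euc n) :
    HasDerivAt (fun t : ℝ => u (x + t • v)) (fderiv ℝ u x v) 0 :=
  (hasSecondDerivAt_line (h.contDiffAt_of_nat h₁ h₂ 2) v).hasDerivAt

theorem eventually_line_mem_of_inner_neg (h : RingSol n k a m M R₀ α x₀ ε R u) {x e : Euc n}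
    (hx : sQuad a x = R) (he : inner ℝ (gradSQuad a x) e < 0) : ∀ᶠ t in 𝓝[>] (0 : ℝ),
      R₀ ≤ sQuad a (x + t • e) ∧ sQuad a (x + t • e) ≤ R ∧ ε ≤ ‖x + t • e - x₀‖ := by
  have hR := h.R₀_lt_R
  have hinside := eventually_lt_right_of_deriv_neg (hasDerivAt_sQuad_line a x e) he
  have hnear : ∀ᶠ t in 𝓝[>] (0 : ℝ), R₀ < sQuad a (x + t • e) :=
    (((continuous_sQuad a).tendsto x).comp
      (tendsto_add_smul_nhds_zero x e)).mono_left nhdsWithin_le_nhds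
        |>.eventually_const_lt (hx ▸ hR)
  filter_upwards [hinside, hnear] with t ht₁ ht₂
  rw [zero_smul, add_zero, hx] at ht₁
  exact ⟨ht₂.le, ht₁.le, by linarith [h.two_lt_norm_sub h.norm_x₀_lt ht₂.le, h.ε_lt]⟩

theorem fderiv_apply_le_of_inner_neg (h : RingSol n k a m M R₀ α x₀ ε R u) {x e : Euc n}
    (hx : sQuad a x = R) (he : inner ℝ (gradSQuad a x) e < 0) :
    fderiv ℝ u x e ≤ inner ℝ (gradSQuad a x) e := by
  have hfar := h.two_lt_norm_sub h.norm_x₀_lt (h.R₀_lt_R.le.trans hx.ge)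
  refine deriv_le_of_eventually_le_right
    (h.hasDerivAt_line hx.le (by linarith [h.ε_lt]) e)
    ((hasDerivAt_sQuad_line a x e).add_const (ubarProfile n k a R₀ α R - R)) ?_ ?_
  · rw [zero_smul, add_zero, hx, h.eq_ubarProfile x hx]
    ring
  · filter_upwards [h.eventually_line_mem_of_inner_neg hx he] with t ht
    exact h.le_sQuad_add ht.2.1 ht.2.2

theorem le_fderiv_apply_of_inner_neg (h : RingSol n k a m M R₀ α x₀ ε R u) {x e : Euc n}
    (hx : sQuad a x = R) (he : inner ℝ (gradSQuad a x) e < 0) :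
    genInt n k a α R * inner ℝ (gradSQuad a x) e ≤ fderiv ℝ u x e := by
  have hfar := h.two_lt_norm_sub h.norm_x₀_lt (h.R₀_lt_R.le.trans hx.ge)
  have hU : HasDerivAt (ubarProfile n k a R₀ α) (genInt n k a α R)
      (sQuad a (x + (0 : ℝ) • e)) := by
    rw [zero_smul, add_zero, hx]
    exact h.ubarProfile_hasDerivAt (h.R₀_pos.trans h.R₀_lt_R)
  refine deriv_le_of_eventually_le_right (hU.comp 0 (hasDerivAt_sQuad_line a x e))
    (h.hasDerivAt_line hx.le (by linarith [h.ε_lt]) e) ?_ ?_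
  · rw [Function.comp_apply, zero_smul, add_zero, hx, h.eq_ubarProfile x hx]
  · filter_upwards [h.eventually_line_mem_of_inner_neg hx he] with t ht
    exact h.ubarProfile_le ht.1 ht.2.1

theorem norm_gradSQuad_sub_fderiv_le_mul (h : RingSol n k a m M R₀ α x₀ ε R u) {x : Euc n}
    (hx : sQuad a x = R) : ‖innerSL ℝ (gradSQuad a x) - fderiv ℝ u x‖ ≤
      (genInt n k a α R - 1) * ‖gradSQuad a x‖ := by
  have hne : gradSQuad a x ≠ 0 := fun h₀ => by
    have hself := inner_gradSQuad_self a x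
    rw [h₀, inner_zero_left, hx] at hself
    linarith [h.R₀_pos, h.R₀_lt_R]
  have hpos : 0 < ‖gradSQuad a x‖ := norm_pos_iff.2 hne
  have hself : inner ℝ (gradSQuad a x) (-gradSQuad a x) = -‖gradSQuad a x‖ ^ 2 := by
    rw [inner_neg_right, real_inner_self_eq_norm_sq]
  have hnorm := opNorm_le_of_nonneg_of_inner_pos (neg_ne_zero.2 hne)
    (ℓ := innerSL ℝ (gradSQuad a x) - fderiv ℝ u x) fun e he => by
      rw [inner_neg_left] at he
      exact sub_nonneg.2 (h.fderiv_apply_le_of_inner_neg hx (by linarith))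
  have hinward := h.le_fderiv_apply_of_inner_neg hx (e := -gradSQuad a x) (by
    rw [hself]
    exact neg_neg_of_pos (by positivity))
  refine hnorm.trans ?_
  rw [norm_neg, div_le_iff₀ hpos, sub_apply, innerSL_apply_apply, hself]
  rw [hself] at hinward
  linarith

theorem norm_gradSQuad_sub_fderiv_le_of_eq (h : RingSol n k a m M R₀ α x₀ ε R u) {x : Euc n}
    (hx : sQuad a x = R) : ‖innerSL ℝ (gradSQuad a x) - fderiv ℝ u x‖ ≤ α * (1 + 2 * M) := by
  have hα := h.α_pos
  have hM := h.M_pos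
  have hR1 : 1 ≤ R := h.one_le_R₀.trans h.R₀_lt_R.le
  have hR : 0 < R := zero_lt_one.trans_le hR1
  have hgap : genInt n k a α R - 1 ≤ α * R⁻¹ := by
    have hrpow : R ^ genExp n k a ≤ R⁻¹ :=
      rpow_neg_one R ▸ rpow_le_rpow_of_exponent_le hR1 h.genExp_lt.le
    have hle := genInt_le h.one_le hα.le hR (a := a) (n := n)
    have := mul_le_mul_of_nonneg_left hrpow hα.le
    linarith
  have hgrad : ‖gradSQuad a x‖ ≤ 1 + 2 * M * R := by
    have hsq := sq_norm_gradSQuad_le (fun i => (h.a_pos i).le) h.le_M x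
    rw [hx] at hsq
    nlinarith [sq_nonneg (‖gradSQuad a x‖ - 1)]
  calc ‖innerSL ℝ (gradSQuad a x) - fderiv ℝ u x‖
      ≤ (genInt n k a α R - 1) * ‖gradSQuad a x‖ := h.norm_gradSQuad_sub_fderiv_le_mul hx
    _ ≤ α * R⁻¹ * (1 + 2 * M * R) := by gcongr
    _ = α * (R⁻¹ + 2 * M) := by field_simp
    _ ≤ α * (1 + 2 * M) := by
      gcongr
      exact inv_le_one_of_one_le₀ hR1

end RingSol

/-! ### The radial barrier and the gradient on the inner boundary -/

/-- The function `H` for which `H(|x - x₀|²)` vanishes on `∂B_ε(x₀)` and, for `γ = n / (2k)`, solves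
`S_k(D²H) = 0`. -/
noncomputable def radialProfile (γ ε z : ℝ) : ℝ :=
  ∫ τ in (ε ^ 2)..z, τ ^ (-γ)

/-- The derivative in the direction of the outward unit normal of `B_ε(x₀)` of the radial barrier
`H(|x - x₀|²) / H(1)`, on `∂B_ε(x₀)`. -/
noncomputable def radialSlope (γ ε : ℝ) : ℝ :=
  2 * ε ^ (1 - 2 * γ) / radialProfile γ ε 1

section RadialProfile

variable {γ ε z : ℝ}

theorem intervalIntegrable_rpow_neg {s t : ℝ} (hs : 0 < s) (ht : 0 < t) (γ : ℝ) :
    IntervalIntegrable (fun τ : ℝ => τ ^ (-γ)) volume s t :=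
  intervalIntegral.intervalIntegrable_rpow (Or.inr (Set.notMem_uIcc_of_lt hs ht))

theorem hasDerivAt_radialProfile (hε : 0 < ε) (hz : 0 < z) :
    HasDerivAt (radialProfile γ ε) (z ^ (-γ)) z := by
  have hcont : ContinuousOn (fun τ : ℝ => τ ^ (-γ)) (Set.Ioi 0) := fun t ht =>
    (continuousAt_rpow_const t _ (Or.inl (ne_of_gt ht))).continuousWithinAt
  exact intervalIntegral.integral_hasDerivAt_right
    (intervalIntegrable_rpow_neg (by positivity) hz γ)
    (hcont.stronglyMeasurableAtFilter isOpen_Ioi z hz)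
    (continuousAt_rpow_const z _ (Or.inl hz.ne'))

theorem radialProfile_sq_self (γ ε : ℝ) : radialProfile γ ε (ε ^ 2) = 0 :=
  intervalIntegral.integral_same

theorem radialProfile_one_pos (hε : 0 < ε) (hε1 : ε < 1) : 0 < radialProfile γ ε 1 :=
  intervalIntegral.intervalIntegral_pos_of_pos_on
    (intervalIntegrable_rpow_neg (by positivity) one_pos γ)
    (fun t ht => rpow_pos_of_pos (lt_trans (by positivity) ht.1) _)
    (pow_lt_one₀ hε.le hε1 two_ne_zero)

theorem matSk_modelHess_radial {n k : ℕ} (hk1 : 1 ≤ k) (hkn : k ≤ n) {y : Euc n} (hy : 0 < ‖y‖)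
    {c : ℝ} (hc : 0 < c) :
    matSk n k (modelHess n (fun _ => 2) y (c * (‖y‖ ^ 2) ^ (-(n / (2 * k) : ℝ)))
      (c * (-(n / (2 * k)) * (‖y‖ ^ 2) ^ (-(n / (2 * k) : ℝ) - 1)))) = 0 := by
  obtain ⟨j, rfl⟩ := Nat.exists_eq_add_of_le' hk1
  have hn : (0 : ℝ) < n := by exact_mod_cast hk1.trans hkn
  have hw : 0 < ‖y‖ ^ 2 := by positivity
  rw [matSk_modelHess_const hkn two_pos y (by positivity), ← EuclideanSpace.real_norm_sq_eq,
    rpow_sub_one hw.ne']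
  set P := (‖y‖ ^ 2) ^ (-(n / (2 * (j + 1 : ℕ)) : ℝ))
  have hcancel : c * P + c * (-(n / (2 * (j + 1 : ℕ))) * (P / ‖y‖ ^ 2)) *
      (2 * (j + 1) / n * ‖y‖ ^ 2) = 0 := by
    push_cast
    field_simp
    ring
  rw [hcancel, mul_zero, mul_zero]

end RadialProfile

/-- An upper bound for `u` on `B₂(x₀)` that depends on neither `ε` nor `R`. -/
noncomputable def innerBound (n k : ℕ) (a : Fin n → ℝ) (R₀ α : ℝ) : ℝ :=
  R₀ + α * (R₀ ^ (genExp n k a + 1) / (-genExp n k a - 1))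

theorem Admissible.one_le_innerBound {n k : ℕ} {a : Fin n → ℝ} {m M R₀ α : ℝ}
    (h : Admissible n k a m M R₀ α) : 1 ≤ innerBound n k a R₀ α := by
  have hα := h.α_pos
  have hR₀ := h.R₀_pos
  have hexp : 0 < -genExp n k a - 1 := by linarith [h.genExp_lt]
  have : 0 ≤ α * (R₀ ^ (genExp n k a + 1) / (-genExp n k a - 1)) := by positivity
  rw [innerBound]
  linarith [h.one_le_R₀]

namespace RingSol

variable {n k : ℕ} {a : Fin n → ℝ} {m M R₀ α : ℝ} {x₀ : Euc n} {ε R : ℝ} {u : Euc n → ℝ}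

theorem sQuad_lt (h : RingSol n k a m M R₀ α x₀ ε R u) {x : Euc n} (hx : ‖x - x₀‖ ≤ 2) :
    sQuad a x < R :=
  (h.norm_le_and_sQuad_lt h.norm_x₀_lt hx).2.trans h.R₀_lt_R

theorem le_innerBound (h : RingSol n k a m M R₀ α x₀ ε R u) {x : Euc n} (h₁ : ε ≤ ‖x - x₀‖)
    (h₂ : ‖x - x₀‖ ≤ 2) : u x ≤ innerBound n k a R₀ α := by
  have hs := (h.norm_le_and_sQuad_lt h.norm_x₀_lt h₂).2
  have hu := h.le_sQuad_add (h.sQuad_lt h₂).le h₁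
  have hgap := ubarProfile_sub_le h.one_le h.hkfun_pos h.genExp_lt h.α_pos.le h.R₀_pos
    h.R₀_lt_R.le
  rw [innerBound]
  linarith

theorem nonneg (h : RingSol n k a m M R₀ α x₀ ε R u) {x : Euc n} (h₁ : ε ≤ ‖x - x₀‖)
    (h₂ : ‖x - x₀‖ ≤ 2) : 0 ≤ u x := by
  have hs := (h.norm_le_and_sQuad_lt h.norm_x₀_lt h₂).2
  have hu := h.sq_norm_sub_sq_le (by linarith [h.R₀_pos]) h₁
  have hsq : ε ^ 2 ≤ ‖x - x₀‖ ^ 2 := pow_le_pow_left₀ h.ε_pos.le h₁ 2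
  linarith

theorem not_isLocalMin_mul_radialProfile_sub (h : RingSol n k a m M R₀ α x₀ ε R u) {z : Euc n}
    {c : ℝ} (hc : 0 < c) (h₁ : sQuad a z < R) (h₂ : ε < ‖z - x₀‖) :
    ¬ IsLocalMin (fun y => c * radialProfile (n / (2 * k)) ε (‖y - x₀‖ ^ 2) - u y) z := by
  intro hmin
  have hz : 0 < ‖z - x₀‖ := h.ε_pos.trans h₂
  have hw : 0 < sQuad (fun _ => 2) (z - x₀) := by
    rw [sQuad_two]
    positivity
  have hle := SkHess_le_matSk_modelHess (a := fun _ => 2) (c := x₀)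
    (G := fun t => c * radialProfile (n / (2 * k)) ε t)
    (G' := fun t => c * t ^ (-(n / (2 * k) : ℝ)))
    h.one_le h.le (h.contDiffAt_of_nat h₁.le h₂.le 2)
    ((eventually_gt_nhds hw).mono fun t ht => (hasDerivAt_radialProfile h.ε_pos ht).const_mul c)
    ((hasDerivAt_rpow_const (Or.inl hw.ne')).const_mul c)
    (by simpa only [sQuad_two] using hmin) (h.gardingMat z h₁ h₂)
  rw [sQuad_two, matSk_modelHess_radial h.one_le h.le hz hc, h.SkHess_eq z h₁ h₂] at hle
  linarith

theorem le_mul_radialProfile (h : RingSol n k a m M R₀ α x₀ ε R u) {x : Euc n}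
    (h₁ : ε ≤ ‖x - x₀‖) (h₂ : ‖x - x₀‖ ≤ 1) :
    u x ≤ innerBound n k a R₀ α / radialProfile (n / (2 * k)) ε 1 *
      radialProfile (n / (2 * k)) ε (‖x - x₀‖ ^ 2) := by
  have hH : 0 < radialProfile (n / (2 * k)) ε 1 :=
    radialProfile_one_pos h.ε_pos (by linarith [h.ε_lt])
  have hc : 0 < innerBound n k a R₀ α / radialProfile (n / (2 * k)) ε 1 :=
    div_pos (zero_lt_one.trans_le h.one_le_innerBound) hH
  set c := innerBound n k a R₀ α / radialProfile (n / (2 * k)) ε 1 with hc_def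
  have hnorm : Continuous fun y : Euc n => ‖y - x₀‖ := by fun_prop
  have hK : IsCompact {y : Euc n | ‖y - x₀‖ ≤ 1 ∧ ε ≤ ‖y - x₀‖} := by
    have hinter := (isCompact_closedBall x₀ 1).inter_right
      (isClosed_le (continuous_const (y := ε)) hnorm)
    simp only [Metric.closedBall, dist_eq_norm] at hinter
    exact hinter
  refine sub_nonneg.1 (nonneg_of_isMinOn_imp hK (fun y hy => ?_) (fun z hz hmin => ?_) x ⟨h₂, h₁⟩
    (f := fun y => c * radialProfile (n / (2 * k)) ε (‖y - x₀‖ ^ 2) - u y))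
  · have hy₀ : 0 < ‖y - x₀‖ := h.ε_pos.trans_le hy.2
    have hprofile : ContinuousAt (fun y => radialProfile (n / (2 * k)) ε (‖y - x₀‖ ^ 2)) y :=
      ContinuousAt.comp (g := radialProfile (n / (2 * k)) ε)
        (hasDerivAt_radialProfile h.ε_pos (by positivity)).continuousAt
        (hnorm.pow 2).continuousAt
    exact ((hprofile.const_mul c).sub
      (h.continuousAt (h.sQuad_lt (by linarith [hy.1])).le hy.2)).continuousWithinAt
  · rcases hz.2.eq_or_lt' with hz₂ | hz₂
    · rw [hz₂, h.eq_zero z hz₂, radialProfile_sq_self, mul_zero, sub_zero]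
    rcases hz.1.eq_or_lt with hz₁ | hz₁
    · rw [hz₁, one_pow, hc_def, div_mul_cancel₀ _ hH.ne']
      exact sub_nonneg.2 (h.le_innerBound hz.2 (by linarith))
    · have hlocal : IsLocalMin
          (fun y => c * radialProfile (n / (2 * k)) ε (‖y - x₀‖ ^ 2) - u y) z := by
        filter_upwards [(hnorm.tendsto z).eventually_lt_const hz₁,
          (hnorm.tendsto z).eventually_const_lt hz₂] with y hy₁ hy₂ using hmin ⟨hy₁.le, hy₂.le⟩
      exact absurd hlocal (h.not_isLocalMin_mul_radialProfile_sub hc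
        (h.sQuad_lt (by linarith)) hz₂)

theorem eventually_line_mem_of_inner_pos (h : RingSol n k a m M R₀ α x₀ ε R u) {x e : Euc n}
    (hx : ‖x - x₀‖ = ε) (he : 0 < inner ℝ (x - x₀) e) :
    ∀ᶠ t in 𝓝[>] (0 : ℝ), ε ≤ ‖x + t • e - x₀‖ ∧ ‖x + t • e - x₀‖ ≤ 1 := by
  have houtside := eventually_lt_right_of_deriv_neg
    (hasSecondDerivAt_sq_norm_sub_line x x₀ e).hasDerivAt.neg (by linarith)
  have hnear : ∀ᶠ t in 𝓝[>] (0 : ℝ), ‖x + t • e - x₀‖ < 1 :=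
    (((by fun_prop : Continuous fun y : Euc n => ‖y - x₀‖).tendsto x).comp
      (tendsto_add_smul_nhds_zero x e)).mono_left nhdsWithin_le_nhds
        |>.eventually_lt_const (by linarith [h.ε_lt])
  filter_upwards [houtside, hnear] with t ht₁ ht₂
  simp only [Pi.neg_apply, zero_smul, add_zero, hx, neg_lt_neg_iff] at ht₁
  exact ⟨le_of_sq_le_sq ht₁.le (norm_nonneg _), ht₂.le⟩

theorem fderiv_apply_nonneg_of_inner_pos (h : RingSol n k a m M R₀ α x₀ ε R u) {x e : Euc n}
    (hx : ‖x - x₀‖ = ε) (he : 0 < inner ℝ (x - x₀) e) : 0 ≤ fderiv ℝ u x e := by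
  refine deriv_le_of_eventually_le_right (hasDerivAt_const (0 : ℝ) (0 : ℝ))
    (h.hasDerivAt_line (h.sQuad_lt (by linarith [h.ε_lt])).le hx.ge e) ?_ ?_
  · rw [zero_smul, add_zero, h.eq_zero x hx]
  · filter_upwards [h.eventually_line_mem_of_inner_pos hx he] with t ht
    exact h.nonneg ht.1 (by linarith [ht.2])

theorem fderiv_apply_le_of_inner_pos (h : RingSol n k a m M R₀ α x₀ ε R u) {x e : Euc n}
    (hx : ‖x - x₀‖ = ε) (he : 0 < inner ℝ (x - x₀) e) :
    fderiv ℝ u x e ≤ innerBound n k a R₀ α / radialProfile (n / (2 * k)) ε 1 *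
      ((ε ^ 2) ^ (-(n / (2 * k) : ℝ)) * (2 * inner ℝ (x - x₀) e)) := by
  have hε := h.ε_pos
  have hx₀ : ‖x + (0 : ℝ) • e - x₀‖ ^ 2 = ε ^ 2 := by rw [zero_smul, add_zero, hx]
  have hprofile : HasDerivAt (radialProfile (n / (2 * k)) ε) ((ε ^ 2) ^ (-(n / (2 * k) : ℝ)))
      (‖x + (0 : ℝ) • e - x₀‖ ^ 2) := by
    rw [hx₀]
    exact hasDerivAt_radialProfile hε (by positivity)
  refine deriv_le_of_eventually_le_right
    (h.hasDerivAt_line (h.sQuad_lt (by linarith [h.ε_lt])).le hx.ge e)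
    ((hprofile.comp 0 (hasSecondDerivAt_sq_norm_sub_line x x₀ e).hasDerivAt).const_mul _) ?_ ?_
  · rw [Function.comp_apply, hx₀, radialProfile_sq_self, mul_zero, zero_smul, add_zero,
      h.eq_zero x hx]
  · filter_upwards [h.eventually_line_mem_of_inner_pos hx he] with t ht
    exact h.le_mul_radialProfile ht.1 ht.2

theorem norm_fderiv_le_of_norm_sub_eq (h : RingSol n k a m M R₀ α x₀ ε R u) {x : Euc n}
    (hx : ‖x - x₀‖ = ε) :
    ‖fderiv ℝ u x‖ ≤ innerBound n k a R₀ α * radialSlope (n / (2 * k)) ε := by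
  have hε := h.ε_pos
  have hself : inner ℝ (x - x₀) (x - x₀) = ε ^ 2 := by rw [real_inner_self_eq_norm_sq, hx]
  have hnorm := opNorm_le_of_nonneg_of_inner_pos (norm_pos_iff.1 (hx.symm ▸ hε))
    fun e he => h.fderiv_apply_nonneg_of_inner_pos hx he
  have houtward := h.fderiv_apply_le_of_inner_pos hx (e := x - x₀) (by rw [hself]; positivity)
  have hpow (γ : ℝ) : (ε ^ 2) ^ (-γ) * ε = ε ^ (1 - 2 * γ) := by
    rw [← rpow_natCast, ← rpow_mul hε.le, ← rpow_add_one hε.ne']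
    congr 1
    push_cast
    ring
  rw [hx] at hnorm
  refine hnorm.trans ((div_le_iff₀ hε).2 (houtward.trans_eq ?_))
  rw [hself, radialSlope, ← hpow]
  ring

end RingSol

/-! ### The constants `C_ε` -/

section RadialSlope

variable {γ ε : ℝ}

theorem radialProfile_one_of_ne (hε : 0 < ε) (hγ : γ ≠ 1) :
    radialProfile γ ε 1 = (1 - ε ^ (2 - 2 * γ)) / (1 - γ) := by
  have hzero : (0 : ℝ) ∉ Set.uIcc (ε ^ 2) 1 := Set.notMem_uIcc_of_lt (by positivity) one_pos
  have hne : -γ ≠ -1 := fun heq => hγ (neg_injective heq)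
  rw [radialProfile, integral_rpow (Or.inr ⟨hne, hzero⟩), one_rpow, ← rpow_natCast,
    ← rpow_mul hε.le]
  push_cast
  ring_nf

theorem radialProfile_one_one (hε : 0 < ε) : radialProfile 1 ε 1 = -(2 * log ε) := by
  simp only [radialProfile, rpow_neg_one]
  rw [integral_inv_of_pos (by positivity) one_pos, one_div, log_inv, log_pow]
  push_cast
  rfl

theorem inv_one_sub_rpow_le {p : ℝ} (hp : 0 < p) (hε : 0 < ε) (hε2 : ε < 1 / 2) :
    (1 - ε ^ p)⁻¹ ≤ (1 - (1 / 2 : ℝ) ^ p)⁻¹ :=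
  inv_anti₀ (sub_pos.2 (rpow_lt_one (by norm_num) (by norm_num) hp))
    (sub_le_sub_left (rpow_le_rpow hε.le hε2.le hp.le) 1)

theorem radialSlope_of_ne (hε : 0 < ε) (hγ : γ ≠ 1) :
    radialSlope γ ε = (2 - 2 * γ) * ε ^ (1 - 2 * γ) * (1 - ε ^ (2 - 2 * γ))⁻¹ := by
  rw [radialSlope, radialProfile_one_of_ne hε hγ, div_div_eq_mul_div, div_eq_mul_inv]
  ring

theorem radialSlope_one (hε : 0 < ε) (hε1 : ε < 1) : radialSlope 1 ε = ε⁻¹ * |log ε|⁻¹ := by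
  rw [radialSlope, radialProfile_one_one hε, abs_of_neg (log_neg hε hε1),
    show (1 : ℝ) - 2 * 1 = -1 by norm_num, rpow_neg_one, ← mul_neg,
    mul_div_mul_left _ _ two_ne_zero, div_eq_mul_inv]

theorem radialSlope_le_of_lt_one (hγ : γ < 1) (hε : 0 < ε) (hε2 : ε < 1 / 2) :
    radialSlope γ ε ≤ (1 - (1 / 2 : ℝ) ^ (2 - 2 * γ))⁻¹ * ((2 - 2 * γ) * ε ^ (1 - 2 * γ)) := by
  have hp : 0 < 2 - 2 * γ := by linarith
  rw [radialSlope_of_ne hε hγ.ne, mul_comm]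
  exact mul_le_mul_of_nonneg_right (inv_one_sub_rpow_le hp hε hε2) (by positivity)

theorem radialSlope_le_of_one_lt (hγ : 1 < γ) (hε : 0 < ε) (hε2 : ε < 1 / 2) :
    radialSlope γ ε ≤ (1 - (1 / 2 : ℝ) ^ (2 * γ - 2))⁻¹ * ((2 * γ - 2) * ε⁻¹) := by
  have hp : 0 < 2 * γ - 2 := by linarith
  have hpow : ε ^ (2 * γ - 2) < 1 := rpow_lt_one hε.le (by linarith) hp
  have hslope : radialSlope γ ε = (1 - ε ^ (2 * γ - 2))⁻¹ * ((2 * γ - 2) * ε⁻¹) := by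
    rw [radialSlope_of_ne hε hγ.ne', show 1 - 2 * γ = -(2 * γ - 2) - 1 by ring,
      show 2 - 2 * γ = -(2 * γ - 2) by ring, rpow_sub_one hε.ne', rpow_neg hε.le]
    have hinv : 1 - (ε ^ (2 * γ - 2))⁻¹ = -((1 - ε ^ (2 * γ - 2)) * (ε ^ (2 * γ - 2))⁻¹) := by
      rw [one_sub_mul, mul_inv_cancel₀ (rpow_pos_of_pos hε _).ne', neg_sub]
    rw [hinv, inv_neg, mul_inv, inv_inv]
    have : ε ^ (2 * γ - 2) ≠ 0 := (rpow_pos_of_pos hε _).ne'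
    have : 1 - ε ^ (2 * γ - 2) ≠ 0 := (sub_pos.2 hpow).ne'
    field_simp
  rw [hslope]
  exact mul_le_mul_of_nonneg_right (inv_one_sub_rpow_le hp hε hε2) (by positivity)

end RadialSlope

section Ceps

variable {n k : ℕ}

theorem Ceps_eq_mul (n k : ℕ) (C ε : ℝ) : Ceps n k C ε = C * Ceps n k 1 ε := by
  unfold Ceps
  split_ifs <;> ring

theorem exists_radialSlope_le_mul_Ceps (n : ℕ) (hk1 : 1 ≤ k) : ∃ K, 0 < K ∧
    ∀ ε, 0 < ε → ε < 1 / 2 → radialSlope (n / (2 * k)) ε ≤ K * Ceps n k 1 ε := by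
  have : (0 : ℝ) < k := by exact_mod_cast hk1
  have hγ : 2 * ((n : ℝ) / (2 * k)) = n / k := by field_simp
  have hK {p : ℝ} (hp : 0 < p) : 0 < (1 - (1 / 2 : ℝ) ^ p)⁻¹ :=
    inv_pos.2 (sub_pos.2 (rpow_lt_one (by norm_num) (by norm_num) hp))
  rcases lt_trichotomy (2 * k) n with hlt | heq | hgt
  · have hγ1 : 1 < (n : ℝ) / (2 * k) := (one_lt_div (by positivity)).2 (by exact_mod_cast hlt)
    refine ⟨_, hK (by linarith : 0 < 2 * ((n : ℝ) / (2 * k)) - 2), fun ε hε hε2 => ?_⟩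
    rw [Ceps, if_pos hlt, one_mul, ← hγ]
    exact radialSlope_le_of_one_lt hγ1 hε hε2
  · have hγ1 : (n : ℝ) / (2 * k) = 1 := (div_eq_one_iff_eq (by positivity)).2
      (by exact_mod_cast heq.symm)
    refine ⟨1, one_pos, fun ε hε hε2 => ?_⟩
    rw [Ceps, if_neg heq.not_lt, if_pos heq, one_mul, one_mul, hγ1,
      radialSlope_one hε (by linarith)]
  · have hγ1 : (n : ℝ) / (2 * k) < 1 := (div_lt_one (by positivity)).2 (by exact_mod_cast hgt)
    refine ⟨_, hK (by linarith : 0 < 2 - 2 * ((n : ℝ) / (2 * k))), fun ε hε hε2 => ?_⟩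
    rw [Ceps, if_neg hgt.not_gt, if_neg hgt.ne', one_mul, ← hγ]
    exact radialSlope_le_of_lt_one hγ1 hε hε2

theorem exists_one_le_mul_Ceps (hk1 : 1 ≤ k) (hkn : k ≤ n) :
    ∃ K, 0 < K ∧ ∀ ε, 0 < ε → ε < 1 / 2 → 1 ≤ K * Ceps n k 1 ε := by
  have hk : (0 : ℝ) < k := by exact_mod_cast hk1
  rcases lt_trichotomy (2 * k) n with hlt | heq | hgt
  · have hp : 0 < (n : ℝ) / k - 2 := sub_pos.2 ((lt_div_iff₀ hk).2 (by exact_mod_cast hlt))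
    refine ⟨_, inv_pos.2 hp, fun ε hε hε2 => ?_⟩
    rw [Ceps, if_pos hlt, one_mul, inv_mul_cancel_left₀ hp.ne']
    exact (one_le_inv₀ hε).2 (by linarith)
  · refine ⟨1, one_pos, fun ε hε hε2 => ?_⟩
    have hlog : 0 < -log ε := neg_pos.2 (log_neg hε (by linarith))
    have hle := log_le_sub_one_of_pos (inv_pos.2 hε)
    rw [log_inv] at hle
    rw [Ceps, if_neg heq.not_lt, if_pos heq, one_mul, one_mul, abs_of_neg (by linarith),
      ← div_eq_mul_inv, one_le_div hlog]
    linarith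
  · have hp : 0 < 2 - (n : ℝ) / k := sub_pos.2 ((div_lt_iff₀ hk).2 (by exact_mod_cast hgt))
    refine ⟨_, inv_pos.2 hp, fun ε hε hε2 => ?_⟩
    rw [Ceps, if_neg hgt.not_gt, if_neg hgt.ne', one_mul, inv_mul_cancel_left₀ hp.ne']
    have hnk : 1 ≤ (n : ℝ) / k := (one_le_div hk).2 (by exact_mod_cast hkn)
    exact one_le_rpow_of_pos_of_le_one_of_nonpos hε (by linarith) (by linarith)

theorem exists_Ceps_le (n k : ℕ) {δ : ℝ} (hδ : 0 < δ) :
    ∃ K, ∀ ε, δ ≤ ε → ε < 1 / 2 → Ceps n k 1 ε ≤ K := by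
  have hcont : ContinuousOn (Ceps n k 1) (Set.Icc δ (1 / 2)) := by
    intro ε hε
    have hε₀ : ε ≠ 0 := (hδ.trans_le hε.1).ne'
    have hlog : |log ε| ≠ 0 :=
      abs_ne_zero.2 (log_neg (hδ.trans_le hε.1) (by linarith [hε.2])).ne
    have hinv : ContinuousAt (fun ε : ℝ => ε⁻¹) ε := continuousAt_inv₀ hε₀
    refine ContinuousAt.continuousWithinAt ?_
    unfold Ceps
    split_ifs
    · exact hinv.const_mul _
    · exact (hinv.const_mul 1).mul ((continuousAt_log hε₀).abs.inv₀ hlog)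
    · exact (continuousAt_rpow_const ε _ (Or.inl hε₀)).const_mul _
  obtain ⟨K, hK⟩ := isCompact_Icc.exists_bound_of_continuousOn hcont
  exact ⟨K, fun ε h₁ h₂ => (le_abs_self _).trans (hK ε ⟨h₁, h₂.le⟩)⟩

end Ceps

/-! ### The maximum principle for `|D(s - u)|` -/

theorem continuous_gradSQuad {n : ℕ} (a : Fin n → ℝ) : Continuous (gradSQuad a) := by
  unfold gradSQuad
  fun_prop

theorem gradSQuad_add_smul {n : ℕ} (a : Fin n → ℝ) (x v : Euc n) (t : ℝ) :
    gradSQuad a (x + t • v) = gradSQuad a x + t • gradSQuad a v := by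
  ext i
  simp only [gradSQuad, PiLp.add_apply, PiLp.smul_apply, smul_eq_mul]
  ring

namespace RingSol

variable {n k : ℕ} {a : Fin n → ℝ} {m M R₀ α : ℝ} {x₀ : Euc n} {ε R : ℝ} {u : Euc n → ℝ}

theorem contDiffAt_fderiv_apply (h : RingSol n k a m M R₀ α x₀ ε R u) {x : Euc n}
    (h₁ : sQuad a x ≤ R) (h₂ : ε ≤ ‖x - x₀‖) (e : Euc n) :
    ContDiffAt ℝ 2 (fun y => fderiv ℝ u y e) x :=
  ((h.contDiffAt_of_nat h₁ h₂ 3).fderiv_right (by norm_num)).clm_apply contDiffAt_const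

/- Both `∂ₑu` and the linear function `∂ₑs` solve the linearized equation `Σ fᵢ D²w(vᵢ, vᵢ) = 0`,
for which `-s` is a strict supersolution. -/
theorem not_isLocalMin_fderiv_sub (h : RingSol n k a m M R₀ α x₀ ε R u) {x : Euc n}
    (h₁ : sQuad a x < R) (h₂ : ε < ‖x - x₀‖) (e : Euc n) {η : ℝ} (hη : 0 < η) :
    ¬ IsLocalMin
      (fun y => fderiv ℝ u y e - inner ℝ (gradSQuad a y) e - η * sQuad a y) x := by
  intro hmin
  obtain ⟨v, f, hf, -, hlin, -⟩ := h.exists_linearization h₁ h₂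
  have hdir : ∀ i, 0 < quadForm n (hessMat n (fun y => fderiv ℝ u y e) x) (v i) := by
    intro i
    have hline := isLocalMin_comp_add_smul hmin (v i)
    simp only [gradSQuad_add_smul, inner_add_left, real_inner_smul_left] at hline
    have hsecond := ((hasSecondDerivAt_line (h.contDiffAt_fderiv_apply h₁.le h₂.le e) (v i)).sub
      (.const_add_mul_const (inner ℝ (gradSQuad a x) e) (inner ℝ (gradSQuad a (v i)) e) 0)).sub
        ((hasSecondDerivAt_sQuad_line a x (v i)).const_mul η)
    have hnonneg := (hsecond.eq_zero_and_nonneg_of_isLocalMin hline).2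
    have hs := div_two_mul_sq_norm_le_sQuad h.m_le (v i)
    rw [v.norm_eq_one, sQuad_eq] at hs
    nlinarith [h.m_pos]
  have i₀ : Fin n := ⟨0, by linarith [h.three_le]⟩
  exact (Finset.sum_pos (fun i _ => mul_pos (hf i) (hdir i)) ⟨i₀, Finset.mem_univ _⟩).ne' (hlin e)

theorem gradSQuad_sub_fderiv_apply_le (h : RingSol n k a m M R₀ α x₀ ε R u) {δ B : ℝ}
    (hδ : ε ≤ δ)
    (hout : ∀ x, sQuad a x = R → ‖innerSL ℝ (gradSQuad a x) - fderiv ℝ u x‖ ≤ B)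
    (hin : ∀ x, ‖x - x₀‖ = δ → sQuad a x ≤ R →
      ‖innerSL ℝ (gradSQuad a x) - fderiv ℝ u x‖ ≤ B)
    {x : Euc n} (h₁ : sQuad a x ≤ R) (h₂ : δ ≤ ‖x - x₀‖) (e : Euc n) :
    (innerSL ℝ (gradSQuad a x) - fderiv ℝ u x) e ≤ B * ‖e‖ := by
  refine le_of_forall_add_mul_le (c := -R) one_pos fun η hη _ => ?_
  have hcont : ContinuousOn
      (fun y => fderiv ℝ u y e - inner ℝ (gradSQuad a y) e - η * sQuad a y)
      {y | sQuad a y ≤ R ∧ δ ≤ ‖y - x₀‖} := fun y hy =>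
    (((h.contDiffAt_fderiv_apply hy.1 (hδ.trans hy.2) e).continuousAt.sub
      ((continuous_gradSQuad a).inner continuous_const).continuousAt).sub
      ((continuous_sQuad a).continuousAt.const_mul η)).continuousWithinAt
  obtain ⟨z, hz, hmin⟩ :=
    (isCompact_ring h.m_pos h.m_le R x₀ δ).exists_isMinOn ⟨x, h₁, h₂⟩ hcont
  have hnorm : ‖innerSL ℝ (gradSQuad a z) - fderiv ℝ u z‖ ≤ B := by
    rcases hz.1.eq_or_lt with hz₁ | hz₁
    · exact hout z hz₁
    rcases hz.2.eq_or_lt' with hz₂ | hz₂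
    · exact hin z hz₂ hz.1
    have hlocal : IsLocalMin
        (fun y => fderiv ℝ u y e - inner ℝ (gradSQuad a y) e - η * sQuad a y) z := by
      filter_upwards [eventually_mem_ring hz₁ hz₂] with y hy using hmin ⟨hy.1.le, hy.2.le⟩
    exact absurd hlocal (h.not_isLocalMin_fderiv_sub hz₁ (hδ.trans_lt hz₂) e hη)
  have hzx : fderiv ℝ u z e - inner ℝ (gradSQuad a z) e - η * sQuad a z
      ≤ fderiv ℝ u x e - inner ℝ (gradSQuad a x) e - η * sQuad a x := hmin ⟨h₁, h₂⟩
  have hze := (le_abs_self _).trans (ContinuousLinearMap.le_of_opNorm_le _ hnorm e)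
  have hsz : η * sQuad a z ≤ η * R := mul_le_mul_of_nonneg_left hz.1 hη.le
  have hsx : 0 ≤ η * sQuad a x := mul_nonneg hη.le (h.sQuad_nonneg x)
  simp only [sub_apply, innerSL_apply_apply] at hze ⊢
  linarith

theorem norm_gradSQuad_sub_fderiv_le (h : RingSol n k a m M R₀ α x₀ ε R u) {δ B : ℝ}
    (hδ : ε ≤ δ) (hB : 0 ≤ B)
    (hout : ∀ x, sQuad a x = R → ‖innerSL ℝ (gradSQuad a x) - fderiv ℝ u x‖ ≤ B)
    (hin : ∀ x, ‖x - x₀‖ = δ → sQuad a x ≤ R →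
      ‖innerSL ℝ (gradSQuad a x) - fderiv ℝ u x‖ ≤ B)
    {x : Euc n} (h₁ : sQuad a x ≤ R) (h₂ : δ ≤ ‖x - x₀‖) :
    ‖innerSL ℝ (gradSQuad a x) - fderiv ℝ u x‖ ≤ B := by
  have hle := h.gradSQuad_sub_fderiv_apply_le hδ hout hin h₁ h₂
  refine ContinuousLinearMap.opNorm_le_bound _ hB fun e => abs_le.2 ⟨?_, hle e⟩
  have hneg := hle (-e)
  rw [map_neg, norm_neg] at hneg
  linarith

end RingSol

/-! ### Bernstein's interior gradient estimate -/

section Cutoff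

variable {E : Type*} [NormedAddCommGroup E] {b y : E} {r : ℝ}

/-- The cut-off function `1 - |y - b|² / r²` of Bernstein's argument, positive on `B_r(b)`. -/
noncomputable def ballCutoff (b : E) (r : ℝ) (y : E) : ℝ :=
  1 - 1 / r ^ 2 * ‖y - b‖ ^ 2

theorem continuous_ballCutoff (b : E) (r : ℝ) : Continuous (ballCutoff b r) := by
  unfold ballCutoff
  fun_prop

theorem ballCutoff_le_one (b : E) (r : ℝ) (y : E) : ballCutoff b r y ≤ 1 :=
  sub_le_self _ (by positivity)

theorem ballCutoff_self (b : E) (r : ℝ) : ballCutoff b r b = 1 := by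
  simp [ballCutoff]

theorem ballCutoff_pos (hy : ‖y - b‖ < r) : 0 < ballCutoff b r y := by
  have hr : 0 < r := (norm_nonneg _).trans_lt hy
  rw [ballCutoff, sub_pos, one_div, inv_mul_lt_iff₀ (by positivity), mul_one]
  exact pow_lt_pow_left₀ hy (norm_nonneg _) two_ne_zero

theorem ballCutoff_eq_zero (hr : r ≠ 0) (hy : ‖y - b‖ = r) : ballCutoff b r y = 0 := by
  rw [ballCutoff, hy, one_div, inv_mul_cancel₀ (pow_ne_zero 2 hr), sub_self]

end Cutoff

section Bernstein

variable {E : Type*} [NormedAddCommGroup E] [InnerProductSpace ℝ E]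

theorem exists_norm_eq_one_forall_apply_eq [CompleteSpace E] {ℓ : E →L[ℝ] ℝ} (hℓ : ℓ ≠ 0) :
    ∃ ξ : E, ‖ξ‖ = 1 ∧ ∀ v, ℓ v = ‖ℓ‖ * inner ℝ v ξ := by
  have hpos : 0 < ‖ℓ‖ := norm_pos_iff.2 hℓ
  refine ⟨‖ℓ‖⁻¹ • (InnerProductSpace.toDual ℝ E).symm ℓ, ?_, fun v => ?_⟩
  · rw [norm_smul, LinearIsometryEquiv.norm_map, norm_inv, norm_norm, inv_mul_cancel₀ hpos.ne']
  · rw [inner_smul_right, mul_inv_cancel_left₀ hpos.ne', real_inner_comm,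
      InnerProductSpace.toDual_symm_apply]

theorem hasSecondDerivAt_ballCutoff_line (b : E) (r : ℝ) (y v : E) :
    HasSecondDerivAt (fun t : ℝ => ballCutoff b r (y + t • v))
      (-(2 / r ^ 2 * inner ℝ (y - b) v)) (-(2 / r ^ 2 * ‖v‖ ^ 2)) 0 :=
  ((HasSecondDerivAt.const 1 0).sub
    ((hasSecondDerivAt_sq_norm_sub_line y b v).const_mul (1 / r ^ 2))).congr_deriv
      (by ring) (by ring)

theorem abs_two_div_mul_inner_le {b y v : E} {r : ℝ} (hy : ‖y - b‖ < r) (hv : ‖v‖ = 1) :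
    |2 / r ^ 2 * inner ℝ (y - b) v| ≤ 2 / r := by
  have hr : 0 < r := (norm_nonneg _).trans_lt hy
  have hinner : |inner ℝ (y - b) v| ≤ r := by
    simpa only [hv, mul_one] using (abs_real_inner_le_norm (y - b) v).trans
      (mul_le_mul_of_nonneg_right hy.le (norm_nonneg v))
  calc |2 / r ^ 2 * inner ℝ (y - b) v| = 2 / r ^ 2 * |inner ℝ (y - b) v| := by
        rw [abs_mul, abs_of_pos (by positivity)]
    _ ≤ 2 / r ^ 2 * r := by gcongr
    _ = 2 / r := by field_simp

/-- The function `|Du|² ρ² / (N - u)`, with `ρ` the cut-off function of `B_r(b)`, whose maximum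
over the ball is estimated in Bernstein's argument. -/
noncomputable def bernsteinQuot (u : E → ℝ) (N : ℝ) (b : E) (r : ℝ) (y : E) : ℝ :=
  ‖fderiv ℝ u y‖ ^ 2 * ballCutoff b r y ^ 2 / (N - u y)

/-- An interior local maximum `z` of `bernsteinQuot` with `Du(z) ≠ 0`, where `ξ` is the direction of
the gradient. -/
structure BernsteinPoint (u : E → ℝ) (N : ℝ) (b : E) (r : ℝ) (z ξ : E) : Prop where
  contDiffAt : ContDiffAt ℝ 3 u z
  isLocalMax : IsLocalMax (bernsteinQuot u N b r) z
  norm_sub_lt : ‖z - b‖ < r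
  lt : u z < N
  fderiv_ne_zero : fderiv ℝ u z ≠ 0
  norm_eq_one : ‖ξ‖ = 1
  fderiv_apply : ∀ v, fderiv ℝ u z v = ‖fderiv ℝ u z‖ * inner ℝ v ξ

namespace BernsteinPoint

variable {u : E → ℝ} {N : ℝ} {b z ξ : E} {r : ℝ}

theorem bernsteinQuot_mul (h : BernsteinPoint u N b r z ξ) :
    bernsteinQuot u N b r z * (N - u z) = (‖fderiv ℝ u z‖ * ballCutoff b r z) ^ 2 := by
  rw [bernsteinQuot, div_mul_cancel₀ _ (sub_pos.2 h.lt).ne', mul_pow]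

theorem norm_mul_ballCutoff_pos (h : BernsteinPoint u N b r z ξ) :
    0 < ‖fderiv ℝ u z‖ * ballCutoff b r z :=
  mul_pos (norm_pos_iff.2 h.fderiv_ne_zero) (ballCutoff_pos h.norm_sub_lt)

theorem fderiv_apply_self (h : BernsteinPoint u N b r z ξ) :
    fderiv ℝ u z ξ = ‖fderiv ℝ u z‖ := by
  rw [h.fderiv_apply, real_inner_self_eq_norm_sq, h.norm_eq_one, one_pow, mul_one]

theorem isLocalMin (h : BernsteinPoint u N b r z ξ) :
    IsLocalMin (fun y => bernsteinQuot u N b r z * (N - u y) -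
      fderiv ℝ u y ξ * ballCutoff b r y * (fderiv ℝ u y ξ * ballCutoff b r y)) z := by
  filter_upwards [h.isLocalMax, h.contDiffAt.continuousAt.eventually_lt_const h.lt] with y hmax hy
  have hle : (fderiv ℝ u y ξ) ^ 2 ≤ ‖fderiv ℝ u y‖ ^ 2 := by
    rw [← sq_abs]
    refine pow_le_pow_left₀ (abs_nonneg _) ?_ 2
    simpa only [h.norm_eq_one, mul_one, norm_eq_abs] using (fderiv ℝ u y).le_opNorm ξ
  have hcut := mul_le_mul_of_nonneg_right hle (sq_nonneg (ballCutoff b r y))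
  have hquot : ‖fderiv ℝ u y‖ ^ 2 * ballCutoff b r y ^ 2 ≤
      bernsteinQuot u N b r z * (N - u y) :=
    (div_le_iff₀ (sub_pos.2 hy)).1 hmax
  simp only [h.bernsteinQuot_mul, h.fderiv_apply_self]
  linarith

theorem derivative_tests (h : BernsteinPoint u N b r z ξ) (v : E) :
    ∃ w, w = fderiv ℝ (fderiv ℝ u) z ξ v * ballCutoff b r z +
        ‖fderiv ℝ u z‖ * -(2 / r ^ 2 * inner ℝ (z - b) v) ∧
      2 * (‖fderiv ℝ u z‖ * ballCutoff b r z) * w =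
        -(bernsteinQuot u N b r z * fderiv ℝ u z v) ∧
      2 * w ^ 2 + 2 * (‖fderiv ℝ u z‖ * ballCutoff b r z) *
        (fderiv ℝ (fderiv ℝ fun y => fderiv ℝ u y ξ) z v v * ballCutoff b r z +
          2 * (fderiv ℝ (fderiv ℝ u) z ξ v * -(2 / r ^ 2 * inner ℝ (z - b) v)) +
          ‖fderiv ℝ u z‖ * -(2 / r ^ 2 * ‖v‖ ^ 2)) ≤
        -(bernsteinQuot u N b r z * fderiv ℝ (fderiv ℝ u) z v v) := by
  have hu : ContDiffAt ℝ 2 u z := h.contDiffAt.of_le (by norm_num)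
  have hu' : ContDiffAt ℝ 2 (fun y => fderiv ℝ u y ξ) z :=
    (h.contDiffAt.fderiv_right (by norm_num)).clm_apply contDiffAt_const
  have hq := (hasSecondDerivAt_comp_add_smul hu' v).mul (hasSecondDerivAt_ballCutoff_line b r z v)
  obtain ⟨hfirst, hsecond⟩ :=
    ((((HasSecondDerivAt.const N 0).sub (hasSecondDerivAt_comp_add_smul hu v)).const_mul
      (bernsteinQuot u N b r z)).sub (hq.mul hq)).eq_zero_and_nonneg_of_isLocalMin
        (isLocalMin_comp_add_smul h.isLocalMin v)
  simp only [zero_smul, add_zero, h.fderiv_apply_self, fderiv_fderiv_apply hu] at hfirst hsecond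
  exact ⟨_, rfl, by linarith, by linarith⟩

theorem first_derivative_test (h : BernsteinPoint u N b r z ξ) (v : E) :
    fderiv ℝ (fderiv ℝ u) z ξ v * ballCutoff b r z +
        ‖fderiv ℝ u z‖ * -(2 / r ^ 2 * inner ℝ (z - b) v) =
      -(‖fderiv ℝ u z‖ ^ 2 * ballCutoff b r z / (2 * (N - u z)) * inner ℝ v ξ) := by
  obtain ⟨w, hw, hfirst, -⟩ := h.derivative_tests v
  have hd : N - u z ≠ 0 := (sub_pos.2 h.lt).ne'
  have hpos := h.norm_mul_ballCutoff_pos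
  rw [← hw]
  refine mul_left_cancel₀ (mul_pos two_pos hpos).ne' ?_
  rw [hfirst, h.fderiv_apply, ← mul_div_cancel_right₀ (bernsteinQuot u N b r z) hd,
    h.bernsteinQuot_mul]
  field_simp

theorem second_derivative_test (h : BernsteinPoint u N b r z ξ) {v : E} (hv : ‖v‖ = 1) :
    (‖fderiv ℝ u z‖ ^ 2 * ballCutoff b r z / (2 * (N - u z)) * inner ℝ v ξ) ^ 2 ≤
      36 * ‖fderiv ℝ u z‖ ^ 2 / r ^ 2 -
        bernsteinQuot u N b r z * fderiv ℝ (fderiv ℝ u) z v v -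
        2 * ‖fderiv ℝ u z‖ * ballCutoff b r z ^ 2 *
          fderiv ℝ (fderiv ℝ fun y => fderiv ℝ u y ξ) z v v := by
  obtain ⟨w, hw, -, hsecond⟩ := h.derivative_tests v
  rw [hv, one_pow, mul_one] at hsecond
  rw [← neg_sq, ← h.first_derivative_test v, ← hw]
  have hcut := ballCutoff_le_one b r z
  have hinner := sq_le_sq' (abs_le.1 (abs_two_div_mul_inner_le h.norm_sub_lt hv)).1
    (abs_le.1 (abs_two_div_mul_inner_le h.norm_sub_lt hv)).2
  generalize ‖fderiv ℝ u z‖ = g at *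
  generalize ballCutoff b r z = ρ at *
  generalize 2 / r ^ 2 * inner ℝ (z - b) v = c at *
  have hgρ : ρ * (g ^ 2 / r ^ 2) ≤ 1 * (g ^ 2 / r ^ 2) := by gcongr
  have hgc : g ^ 2 * c ^ 2 ≤ g ^ 2 * (2 / r) ^ 2 := by gcongr
  have hmix : fderiv ℝ (fderiv ℝ u) z ξ v * ρ = w + g * c := by rw [hw]; ring
  have hexpand : 2 * (g * ρ) * (fderiv ℝ (fderiv ℝ fun y => fderiv ℝ u y ξ) z v v * ρ +
      2 * (fderiv ℝ (fderiv ℝ u) z ξ v * -c) + g * -(2 / r ^ 2)) =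
      2 * g * ρ ^ 2 * fderiv ℝ (fderiv ℝ fun y => fderiv ℝ u y ξ) z v v -
        4 * g * (w + g * c) * c - 4 * (ρ * (g ^ 2 / r ^ 2)) := by
    rw [← hmix]
    ring
  rw [hexpand] at hsecond
  have hbound : g ^ 2 * (2 / r) ^ 2 = 4 * (g ^ 2 / r ^ 2) := by ring
  linarith [sq_nonneg (w - 2 * g * c), mul_div_assoc 36 (g ^ 2) (r ^ 2)]

theorem norm_mul_ballCutoff_le_of_pos (h : BernsteinPoint u N b r z ξ)
    (hξ : 0 < fderiv ℝ (fderiv ℝ u) z ξ ξ) :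
    ‖fderiv ℝ u z‖ * ballCutoff b r z ≤ 4 * (N - u z) / r := by
  have hd : 0 < N - u z := sub_pos.2 h.lt
  have hg : 0 < ‖fderiv ℝ u z‖ := norm_pos_iff.2 h.fderiv_ne_zero
  have htest := h.first_derivative_test ξ
  rw [real_inner_self_eq_norm_sq, h.norm_eq_one, one_pow, mul_one] at htest
  have hinner := mul_le_mul_of_nonneg_left
    (abs_le.1 (abs_two_div_mul_inner_le h.norm_sub_lt h.norm_eq_one)).2 hg.le
  have hhess := mul_pos hξ (ballCutoff_pos h.norm_sub_lt)
  have hle : ‖fderiv ℝ u z‖ ^ 2 * ballCutoff b r z / (2 * (N - u z)) ≤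
      ‖fderiv ℝ u z‖ * (2 / r) := by linarith
  refine le_of_mul_le_mul_left ?_ hg
  rw [div_le_iff₀ (by positivity)] at hle
  calc ‖fderiv ℝ u z‖ * (‖fderiv ℝ u z‖ * ballCutoff b r z)
      = ‖fderiv ℝ u z‖ ^ 2 * ballCutoff b r z := by ring
    _ ≤ ‖fderiv ℝ u z‖ * (2 / r) * (2 * (N - u z)) := hle
    _ = ‖fderiv ℝ u z‖ * (4 * (N - u z) / r) := by ring

end BernsteinPoint

end Bernstein

namespace RingSol

variable {n k : ℕ} {a : Fin n → ℝ} {m M R₀ α : ℝ} {x₀ : Euc n} {ε R : ℝ} {u : Euc n → ℝ}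
variable {b z ξ : Euc n} {r N δ : ℝ}

/- Summing the second derivative test against the linearized operator removes the third derivatives
of `u`; what is left is controlled because the operator is elliptic in directions of concavity. -/
theorem sq_norm_fderiv_mul_ballCutoff_div_le (h : RingSol n k a m M R₀ α x₀ ε R u)
    (hz : BernsteinPoint u N b r z ξ) (h₁ : sQuad a z < R) (h₂ : ε < ‖z - x₀‖)
    (hξ : fderiv ℝ (fderiv ℝ u) z ξ ξ ≤ 0) :
    (‖fderiv ℝ u z‖ ^ 2 * ballCutoff b r z / (2 * (N - u z))) ^ 2 ≤
      n * (36 * ‖fderiv ℝ u z‖ ^ 2 / r ^ 2) := by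
  obtain ⟨v, f, hf, htrace, hlin, hell⟩ := h.exists_linearization h₁ h₂
  have hellξ := hell ξ (by rwa [quadForm_hessMat])
  have hlinξ := hlin ξ
  simp only [quadForm_hessMat] at htrace hlinξ
  rw [hz.norm_eq_one, one_pow, one_mul] at hellξ
  have hP : 0 ≤ bernsteinQuot u N b r z := div_nonneg (by positivity) (sub_pos.2 hz.lt).le
  have hF : 0 < ∑ i, f i :=
    have i₀ : Fin n := ⟨0, by linarith [h.three_le]⟩
    Finset.sum_pos (fun i _ => hf i) ⟨i₀, Finset.mem_univ _⟩
  obtain ⟨κ, hκ⟩ : ∃ κ, ‖fderiv ℝ u z‖ ^ 2 * ballCutoff b r z / (2 * (N - u z)) = κ := ⟨_, rfl⟩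
  have hsecond := fun i => hz.second_derivative_test (v.norm_eq_one i)
  simp only [hκ, mul_pow κ] at hsecond
  have hsum := Finset.sum_le_sum fun i (_ : i ∈ Finset.univ) =>
    mul_le_mul_of_nonneg_left (hsecond i) (hf i).le
  simp only [mul_sub, Finset.sum_sub_distrib, mul_left_comm (f _), ← Finset.mul_sum, hlinξ,
    mul_zero, sub_zero] at hsum
  rw [← Finset.sum_mul] at hsum
  rw [hκ]
  refine le_of_mul_le_mul_right ?_ hF
  calc κ ^ 2 * ∑ i, f i ≤ κ ^ 2 * (n * ∑ i, f i * inner ℝ (v i) ξ ^ 2) := by gcongr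
    _ = n * (κ ^ 2 * ∑ i, f i * inner ℝ (v i) ξ ^ 2) := by ring
    _ ≤ n * ((∑ i, f i) * (36 * ‖fderiv ℝ u z‖ ^ 2 / r ^ 2)) := by
      refine mul_le_mul_of_nonneg_left ?_ (Nat.cast_nonneg n)
      exact hsum.trans (sub_le_self _ (mul_nonneg hP htrace))
    _ = n * (36 * ‖fderiv ℝ u z‖ ^ 2 / r ^ 2) * ∑ i, f i := by ring

theorem sq_norm_mul_ballCutoff_le_of_nonpos (h : RingSol n k a m M R₀ α x₀ ε R u)
    (hz : BernsteinPoint u N b r z ξ) (h₁ : sQuad a z < R) (h₂ : ε < ‖z - x₀‖)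
    (hξ : fderiv ℝ (fderiv ℝ u) z ξ ξ ≤ 0) :
    (‖fderiv ℝ u z‖ * ballCutoff b r z) ^ 2 ≤ n * (12 * (N - u z) / r) ^ 2 := by
  have hg : 0 < ‖fderiv ℝ u z‖ := norm_pos_iff.2 hz.fderiv_ne_zero
  have hd : 0 < N - u z := sub_pos.2 hz.lt
  calc (‖fderiv ℝ u z‖ * ballCutoff b r z) ^ 2
      = (2 * (N - u z) / ‖fderiv ℝ u z‖) ^ 2 *
        (‖fderiv ℝ u z‖ ^ 2 * ballCutoff b r z / (2 * (N - u z))) ^ 2 := by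
        rw [← mul_pow]
        field_simp
    _ ≤ (2 * (N - u z) / ‖fderiv ℝ u z‖) ^ 2 * (n * (36 * ‖fderiv ℝ u z‖ ^ 2 / r ^ 2)) :=
      mul_le_mul_of_nonneg_left (h.sq_norm_fderiv_mul_ballCutoff_div_le hz h₁ h₂ hξ) (sq_nonneg _)
    _ = n * (12 * (N - u z) / r) ^ 2 := by
      field_simp
      ring

theorem bernsteinQuot_le (h : RingSol n k a m M R₀ α x₀ ε R u)
    (hz : BernsteinPoint u N b r z ξ) (h₁ : sQuad a z < R) (h₂ : ε < ‖z - x₀‖) :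
    bernsteinQuot u N b r z ≤ n * (12 / r) ^ 2 * (N - u z) := by
  have hd : 0 < N - u z := sub_pos.2 hz.lt
  have hsq : (‖fderiv ℝ u z‖ * ballCutoff b r z) ^ 2 ≤ n * (12 * (N - u z) / r) ^ 2 := by
    rcases le_or_gt (fderiv ℝ (fderiv ℝ u) z ξ ξ) 0 with hξ | hξ
    · exact h.sq_norm_mul_ballCutoff_le_of_nonpos hz h₁ h₂ hξ
    · have hn : (1 : ℝ) ≤ n := by
        exact_mod_cast (by norm_num : 1 ≤ 3).trans h.three_le
      calc (‖fderiv ℝ u z‖ * ballCutoff b r z) ^ 2 ≤ (4 * (N - u z) / r) ^ 2 :=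
            pow_le_pow_left₀ hz.norm_mul_ballCutoff_pos.le (hz.norm_mul_ballCutoff_le_of_pos hξ) 2
        _ ≤ (12 * (N - u z) / r) ^ 2 := by
          have hr : 0 < r := (norm_nonneg _).trans_lt hz.norm_sub_lt
          gcongr
          norm_num
        _ ≤ n * (12 * (N - u z) / r) ^ 2 := le_mul_of_one_le_left (sq_nonneg _) hn
  refine le_of_mul_le_mul_right (hz.bernsteinQuot_mul.trans_le (hsq.trans_eq ?_)) hd
  ring

theorem continuousAt_bernsteinQuot (h : RingSol n k a m M R₀ α x₀ ε R u)
    (h₁ : sQuad a z ≤ R) (h₂ : ε ≤ ‖z - x₀‖) (hz : u z < N) :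
    ContinuousAt (bernsteinQuot u N b r) z := by
  have hsmooth := h.contDiffAt_of_nat h₁ h₂ 2
  have hfderiv := (differentiableAt_fderiv_of_contDiffAt hsmooth).continuousAt
  exact ((hfderiv.norm.pow 2).mul ((continuous_ballCutoff b r).continuousAt.pow 2)).div
    (continuousAt_const.sub hsmooth.continuousAt) (sub_pos.2 hz).ne'

theorem sq_norm_fderiv_le_of_closedBall (h : RingSol n k a m M R₀ α x₀ ε R u) (hr : 0 < r)
    (hring : ∀ y ∈ Metric.closedBall b r, sQuad a y < R ∧ ε < ‖y - x₀‖)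
    (hu : ∀ y ∈ Metric.closedBall b r, 0 ≤ u y ∧ u y < N) :
    ‖fderiv ℝ u b‖ ^ 2 ≤ n * (12 / r * N) ^ 2 := by
  have hb : b ∈ Metric.closedBall b r := Metric.mem_closedBall_self hr.le
  have hN : 0 < N := (hu b hb).1.trans_lt (hu b hb).2
  have hcont : ContinuousOn (bernsteinQuot u N b r) (Metric.closedBall b r) := fun y hy =>
    (h.continuousAt_bernsteinQuot (hring y hy).1.le (hring y hy).2.le
      (hu y hy).2).continuousWithinAt
  obtain ⟨z, hz, hmax⟩ := (isCompact_closedBall b r).exists_isMaxOn ⟨b, hb⟩ hcont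
  have hzN : 0 < N - u z := sub_pos.2 (hu z hz).2
  have hquot : bernsteinQuot u N b r z ≤ n * (12 / r) ^ 2 * (N - u z) := by
    by_cases hzero : fderiv ℝ u z = 0 ∨ ‖z - b‖ = r
    · have : bernsteinQuot u N b r z = 0 := by
        rcases hzero with hzero | hzero
        · simp [bernsteinQuot, hzero]
        · simp [bernsteinQuot, ballCutoff_eq_zero hr.ne' hzero]
      rw [this]
      positivity
    push Not at hzero
    obtain ⟨ξ, hξ, happly⟩ := exists_norm_eq_one_forall_apply_eq hzero.1
    have hlt : ‖z - b‖ < r := (mem_closedBall_iff_norm.1 hz).lt_of_ne hzero.2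
    have hnhds := Metric.closedBall_mem_nhds_of_mem (mem_ball_iff_norm.2 hlt)
    refine h.bernsteinQuot_le ⟨h.contDiffAt_of_nat (hring z hz).1.le (hring z hz).2.le 3,
      hmax.isLocalMax hnhds, hlt, (hu z hz).2, hzero.1, hξ, happly⟩ (hring z hz).1 (hring z hz).2
  calc ‖fderiv ℝ u b‖ ^ 2 = bernsteinQuot u N b r b * (N - u b) := by
        rw [bernsteinQuot, ballCutoff_self, one_pow, mul_one,
          div_mul_cancel₀ _ (sub_pos.2 (hu b hb).2).ne']
    _ ≤ n * (12 / r) ^ 2 * (N - u z) * (N - u b) :=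
      mul_le_mul_of_nonneg_right ((hmax hb).trans hquot) (sub_pos.2 (hu b hb).2).le
    _ ≤ n * (12 / r) ^ 2 * N * N := by
      have := (hu z hz).1
      have := (hu b hb).1
      gcongr <;> linarith [(hu b hb).2]
    _ = n * (12 / r * N) ^ 2 := by ring

theorem norm_fderiv_le_of_norm_sub_eq_of_lt (h : RingSol n k a m M R₀ α x₀ ε R u)
    (hδ : δ ≤ 1) (hεδ : 2 * ε < δ) (hb : ‖b - x₀‖ = δ) :
    ‖fderiv ℝ u b‖ ≤ √n * (24 / δ * (innerBound n k a R₀ α + 1)) := by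
  have hN := h.one_le_innerBound
  have hε := h.ε_pos
  have hδ₀ : 0 < δ := by linarith
  have hdist : ∀ y ∈ Metric.closedBall b (δ / 2), ε < ‖y - x₀‖ ∧ ‖y - x₀‖ ≤ 2 := by
    intro y hy
    rw [mem_closedBall_iff_norm] at hy
    have hupper := norm_sub_le_norm_sub_add_norm_sub y b x₀
    have hlower := norm_sub_le_norm_sub_add_norm_sub b y x₀
    rw [norm_sub_rev b y] at hlower
    constructor <;> linarith
  have hsq := h.sq_norm_fderiv_le_of_closedBall (N := innerBound n k a R₀ α + 1)
    (half_pos hδ₀)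
    (fun y hy => ⟨h.sQuad_lt (hdist y hy).2, (hdist y hy).1⟩)
    (fun y hy => ⟨h.nonneg (hdist y hy).1.le (hdist y hy).2,
      (h.le_innerBound (hdist y hy).1.le (hdist y hy).2).trans_lt (lt_add_one _)⟩)
  refine le_of_sq_le_sq (hsq.trans_eq ?_) (by positivity)
  rw [mul_pow √n, sq_sqrt (Nat.cast_nonneg n)]
  ring

end RingSol

/-! ### The gradient estimates -/

theorem mem_ESet_diagonal_zero {n : ℕ} {a : Fin n → ℝ} {R : ℝ} {x : Euc n} :
    x ∈ ESet n (Matrix.diagonal a) 0 R ↔ sQuad a x < R := by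
  rw [ESet, Set.mem_ofPred_eq, sub_zero, sQuad]

theorem exists_admissible {n k : ℕ} {a : Fin n → ℝ} (hn : 3 ≤ n) (hk1 : 1 ≤ k) (hkn : k ≤ n)
    (hA : MemA n k (Matrix.diagonal a)) (ha1 : k = 1 → (⨆ i, a i) < 1 / 2) :
    ∃ m M, 0 < m ∧ 0 < M ∧ ∀ R₀ α, 1 ≤ R₀ → 5 * M ≤ R₀ →
      (8 / m + 2) ^ k * (2 * R₀) ^ (-genExp n k a) ≤ α → Admissible n k a m M R₀ α := by
  have : Nonempty (Fin n) := ⟨⟨0, by lia⟩⟩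
  obtain ⟨-, hpos, hS⟩ := hA
  rw [matSk_diagonal hkn] at hS
  have ha : ∀ i, 0 < a i := Matrix.posDef_diagonal_iff.1 hpos
  obtain ⟨i, hi⟩ := Finite.exists_min a
  obtain ⟨j, hj⟩ := Finite.exists_max a
  exact ⟨a i, a j, ha i, ha j, fun R₀ α hR₀ hM hα =>
    { three_le := hn
      one_le := hk1
      le := hkn
      esymmVec_eq := hS
      genExp_lt := genExp_lt_neg_one (hkfun_pos hk1 hkn ha) (two_mul_hkfun_lt hn hk1 ha hS ha1)
      m_pos := ha i
      m_le := hi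
      le_M := hj
      one_le_R₀ := hR₀
      five_mul_M_le := hM
      le_α := hα }⟩

namespace Admissible

variable {n k : ℕ} {a : Fin n → ℝ} {m M R₀ α T : ℝ} {x : Euc n}

theorem norm_gradSQuad_le (h : Admissible n k a m M R₀ α) (hx : sQuad a x ≤ T) :
    ‖gradSQuad a x‖ ≤ √(2 * M * T) := by
  have hM := h.M_pos
  refine le_sqrt_of_sq_le ((sq_norm_gradSQuad_le (fun i => (h.a_pos i).le) h.le_M x).trans ?_)
  gcongr

theorem sQuad_le_R₀ (h : Admissible n k a m M R₀ α) (hx : ‖x‖ < 2) : sQuad a x ≤ R₀ := by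
  have hsq : ‖x‖ ^ 2 ≤ 2 ^ 2 := pow_le_pow_left₀ (norm_nonneg x) hx.le 2
  nlinarith [sQuad_le h.le_M x, h.M_pos, h.five_mul_M_le]

end Admissible

namespace RingSol

variable {n k : ℕ} {a : Fin n → ℝ} {m M R₀ α : ℝ} {x₀ x : Euc n} {ε R : ℝ} {u : Euc n → ℝ}
variable {δ G T K : ℝ}

theorem norm_fderiv_le (h : RingSol n k a m M R₀ α x₀ ε R u) (hεδ : ε ≤ δ) (hδ : δ ≤ 2)
    (hG : ∀ y, ‖y - x₀‖ = δ → ‖fderiv ℝ u y‖ ≤ G) (hG₀ : 0 ≤ G)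
    (hR : sQuad a x ≤ R) (hT : sQuad a x ≤ T) (hx : δ ≤ ‖x - x₀‖) :
    ‖fderiv ℝ u x‖ ≤ α * (1 + 2 * M) + √(2 * M * R₀) + G + √(2 * M * T) := by
  have hα := h.α_pos
  have hM := h.M_pos
  have hB : 0 ≤ α * (1 + 2 * M) := by positivity
  have hsqrt := sqrt_nonneg (2 * M * R₀)
  have hdiff : ‖innerSL ℝ (gradSQuad a x) - fderiv ℝ u x‖ ≤
      α * (1 + 2 * M) + √(2 * M * R₀) + G := by
    refine h.norm_gradSQuad_sub_fderiv_le hεδ (by positivity) (fun y hy => ?_)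
      (fun y hy _ => ?_) hR hx
    · linarith [h.norm_gradSQuad_sub_fderiv_le_of_eq hy]
    · have hgrad := h.norm_gradSQuad_le
        (h.norm_le_and_sQuad_lt h.norm_x₀_lt (hy.le.trans hδ)).2.le
      have htri := norm_sub_le (innerSL ℝ (gradSQuad a y)) (fderiv ℝ u y)
      rw [innerSL_apply_norm] at htri
      linarith [hG y hy]
  have htri := norm_sub_le (innerSL ℝ (gradSQuad a x)) (innerSL ℝ (gradSQuad a x) - fderiv ℝ u x)
  rw [sub_sub_cancel, innerSL_apply_norm] at htri
  linarith [h.norm_gradSQuad_le hT]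

theorem norm_fderiv_le_of_radialSlope_le (h : RingSol n k a m M R₀ α x₀ ε R u)
    (hK₀ : 0 ≤ K) (hK : radialSlope (n / (2 * k)) ε ≤ K) (hx : ‖x‖ < 2) (hε : ε ≤ ‖x - x₀‖) :
    ‖fderiv ℝ u x‖ ≤ α * (1 + 2 * M) + √(2 * M * R₀) + innerBound n k a R₀ α * K +
      √(2 * M * R₀) := by
  have hN : 0 ≤ innerBound n k a R₀ α := zero_le_one.trans h.one_le_innerBound
  have hR₀ := h.sQuad_le_R₀ hx
  exact h.norm_fderiv_le le_rfl (by linarith [h.ε_lt])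
    (fun y hy => (h.norm_fderiv_le_of_norm_sub_eq hy).trans (mul_le_mul_of_nonneg_left hK hN))
    (mul_nonneg hN hK₀) (hR₀.trans h.R₀_lt_R.le) hR₀ hε

theorem norm_fderiv_le_of_two_mul_lt (h : RingSol n k a m M R₀ α x₀ ε R u) (hδ : δ ≤ 1)
    (hεδ : 2 * ε < δ) (hR : sQuad a x ≤ R) (hT : sQuad a x ≤ T) (hx : δ ≤ ‖x - x₀‖) :
    ‖fderiv ℝ u x‖ ≤ α * (1 + 2 * M) + √(2 * M * R₀) +
      √n * (24 / δ * (innerBound n k a R₀ α + 1)) + √(2 * M * T) := by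
  have hN := h.one_le_innerBound
  have hε := h.ε_pos
  have hδ₀ : 0 < δ := by linarith
  exact h.norm_fderiv_le (by linarith) (by linarith)
    (fun y hy => h.norm_fderiv_le_of_norm_sub_eq_of_lt hδ hεδ hy) (by positivity) hR hT hx

end RingSol

namespace Admissible

variable {n k : ℕ} {a : Fin n → ℝ} {m M R₀ α : ℝ}

theorem exists_norm_fderiv_le_Ceps (h : Admissible n k a m M R₀ α) :
    ∃ C₀, 0 < C₀ ∧ ∀ C, C₀ ≤ C → ∀ {x₀ : Euc n} {ε R : ℝ} {u : Euc n → ℝ},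
      RingSol n k a m M R₀ α x₀ ε R u →
      ∀ x : Euc n, ‖x‖ < 2 → ε ≤ ‖x - x₀‖ → ‖fderiv ℝ u x‖ ≤ Ceps n k C ε := by
  obtain ⟨K₁, hK₁, hslope⟩ := exists_radialSlope_le_mul_Ceps n h.one_le
  obtain ⟨K₂, hK₂, hone⟩ := exists_one_le_mul_Ceps h.one_le h.le
  have hN := h.one_le_innerBound
  have hα := h.α_pos
  have hM := h.M_pos
  refine ⟨(α * (1 + 2 * M) + √(2 * M * R₀) + √(2 * M * R₀)) * K₂ + innerBound n k a R₀ α * K₁,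
    by positivity, fun C hC x₀ ε R u hu x hx hε => ?_⟩
  have hone := hone ε hu.ε_pos hu.ε_lt
  have hpos : 0 < Ceps n k 1 ε := pos_of_mul_pos_right (zero_lt_one.trans_le hone) hK₂.le
  calc ‖fderiv ℝ u x‖ ≤ α * (1 + 2 * M) + √(2 * M * R₀) +
          innerBound n k a R₀ α * (K₁ * Ceps n k 1 ε) + √(2 * M * R₀) :=
        hu.norm_fderiv_le_of_radialSlope_le (by positivity) (hslope ε hu.ε_pos hu.ε_lt) hx hε
    _ = (α * (1 + 2 * M) + √(2 * M * R₀) + √(2 * M * R₀)) * 1 +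
          innerBound n k a R₀ α * (K₁ * Ceps n k 1 ε) := by ring
    _ ≤ (α * (1 + 2 * M) + √(2 * M * R₀) + √(2 * M * R₀)) * (K₂ * Ceps n k 1 ε) +
          innerBound n k a R₀ α * (K₁ * Ceps n k 1 ε) := by gcongr
    _ = ((α * (1 + 2 * M) + √(2 * M * R₀) + √(2 * M * R₀)) * K₂ +
          innerBound n k a R₀ α * K₁) * Ceps n k 1 ε := by ring
    _ ≤ C * Ceps n k 1 ε := by gcongr
    _ = Ceps n k C ε := (Ceps_eq_mul n k C ε).symm

theorem exists_norm_fderiv_le_mul_sqrt (h : Admissible n k a m M R₀ α) :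
    ∃ C₀, 0 < C₀ ∧ ∀ C, C₀ ≤ C → ∀ {x₀ : Euc n} {ε R : ℝ} {u : Euc n → ℝ},
      RingSol n k a m M R₀ α x₀ ε R u →
      ∀ x : Euc n, sQuad a x ≤ R → 2 * R / 3 ≤ sQuad a x → ‖fderiv ℝ u x‖ ≤ C * √R := by
  have hN := h.one_le_innerBound
  have hα := h.α_pos
  have hM := h.M_pos
  refine ⟨α * (1 + 2 * M) + √(2 * M * R₀) + √n * (24 / 1 * (innerBound n k a R₀ α + 1)) +
    √(2 * M), by positivity, fun C hC x₀ ε R u hu x hx hx' => ?_⟩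
  have hfar : 2 < ‖x - x₀‖ :=
    h.two_lt_norm_sub hu.norm_x₀_lt (by linarith [hu.lt_R, hu.R₀_pos])
  have hR : 1 ≤ √R := one_le_sqrt.2 (hu.one_le_R₀.trans hu.R₀_lt_R.le)
  calc ‖fderiv ℝ u x‖ ≤ (α * (1 + 2 * M) + √(2 * M * R₀) +
          √n * (24 / 1 * (innerBound n k a R₀ α + 1))) * 1 + √(2 * M * R) :=
        (hu.norm_fderiv_le_of_two_mul_lt le_rfl (by linarith [hu.ε_lt]) hx hx
          (by linarith)).trans_eq (by ring)
    _ ≤ (α * (1 + 2 * M) + √(2 * M * R₀) +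
          √n * (24 / 1 * (innerBound n k a R₀ α + 1))) * √R + √(2 * M * R) := by gcongr
    _ = (α * (1 + 2 * M) + √(2 * M * R₀) +
          √n * (24 / 1 * (innerBound n k a R₀ α + 1)) + √(2 * M)) * √R := by
        rw [sqrt_mul (by positivity : 0 ≤ 2 * M) R, ← add_mul]
    _ ≤ C * √R := by gcongr

/- Bernstein's estimate at distance `min δ 1` when `ε` is small compared with it; otherwise `ε` is
bounded from below and the estimate on `∂B_ε(x₀)` is already uniform. -/
theorem exists_norm_fderiv_le (h : Admissible n k a m M R₀ α) {δ : ℝ} (hδ : 0 < δ) :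
    ∃ C, 0 < C ∧ ∀ {x₀ : Euc n} {ε R : ℝ} {u : Euc n → ℝ}, RingSol n k a m M R₀ α x₀ ε R u →
      ε < δ → ∀ x : Euc n, ‖x‖ < 2 → δ ≤ ‖x - x₀‖ → ‖fderiv ℝ u x‖ ≤ C := by
  obtain ⟨K₁, hK₁, hslope⟩ := exists_radialSlope_le_mul_Ceps n h.one_le
  have hd : 0 < min δ 1 := lt_min hδ one_pos
  obtain ⟨K₂, hCeps⟩ := exists_Ceps_le n k (half_pos hd)
  have hN := h.one_le_innerBound
  have hα := h.α_pos
  have hM := h.M_pos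
  set Gsmall := √n * (24 / min δ 1 * (innerBound n k a R₀ α + 1))
  set Glarge := innerBound n k a R₀ α * (K₁ * max K₂ 0)
  have hsmall : 0 ≤ Gsmall := by positivity
  have hlarge : 0 ≤ Glarge := by positivity
  refine ⟨α * (1 + 2 * M) + √(2 * M * R₀) + (Gsmall + Glarge) + √(2 * M * R₀), by positivity,
    fun {x₀ ε R u} hu hεδ x hx hx₀ => ?_⟩
  have hdx : min δ 1 ≤ ‖x - x₀‖ := (min_le_left δ 1).trans hx₀
  rcases lt_or_ge (2 * ε) (min δ 1) with hε | hε
  · have hR₀ := h.sQuad_le_R₀ hx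
    linarith [hu.norm_fderiv_le_of_two_mul_lt (min_le_right δ 1) hε
      (hR₀.trans hu.R₀_lt_R.le) hR₀ hdx]
  · have hslope_le : radialSlope (n / (2 * k)) ε ≤ K₁ * max K₂ 0 :=
      (hslope ε hu.ε_pos hu.ε_lt).trans (mul_le_mul_of_nonneg_left
        ((hCeps ε (by linarith) hu.ε_lt).trans (le_max_left K₂ 0)) hK₁.le)
    linarith [hu.norm_fderiv_le_of_radialSlope_le (by positivity) hslope_le hx (hεδ.le.trans hx₀)]

end Admissible

/-- Lemma 2.5: gradient estimates near and away from the boundary. -/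
theorem statement7 (n k : ℕ) (hn : 3 ≤ n) (hk1 : 1 ≤ k) (hkn : k ≤ n)
    (a : Fin n → ℝ) (hA : MemA n k (Matrix.diagonal a))
    (hk1' : k = 1 → (⨆ i, a i) < 1 / 2) :
    ∃ Λ₀ : ℝ, 0 < Λ₀ ∧ ∀ R₀ : ℝ, Λ₀ ≤ R₀ →
      ∃ α₀ : ℝ, 0 < α₀ ∧ ∀ α : ℝ, α₀ ≤ α →
        (∃ C : ℝ, 0 < C ∧
          ∀ x₀ : Euc n, x₀ ∈ Metric.ball (0 : Euc n) (1 / 2) → x₀ ≠ 0 →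
          ∀ ε : ℝ, 0 < ε → ε < 1 / 2 →
          ∀ R : ℝ, 3 * R₀ < R →
          ∀ u : Euc n → ℝ, ApproxSol n k a x₀ ε R R₀ α u →
            (∀ x ∈ Metric.ball (0 : Euc n) 2 \ Metric.ball x₀ ε,
              ‖fderiv ℝ u x‖ ≤ Ceps n k C ε) ∧
            (∀ x ∈ ESet n (Matrix.diagonal a) 0 R \ ESet n (Matrix.diagonal a) 0 (2 * R / 3),
              ‖fderiv ℝ u x‖ ≤ C * Real.sqrt R)) ∧
        (∀ δ : ℝ, 0 < δ →
          ∃ C' : ℝ, 0 < C' ∧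
          ∀ x₀ : Euc n, x₀ ∈ Metric.ball (0 : Euc n) (1 / 2) → x₀ ≠ 0 →
          ∀ ε : ℝ, 0 < ε → ε < 1 / 2 → ε < δ →
          ∀ R : ℝ, 3 * R₀ < R →
          ∀ u : Euc n → ℝ, ApproxSol n k a x₀ ε R R₀ α u →
            ∀ x ∈ Metric.ball (0 : Euc n) 2 \ Metric.ball x₀ δ,
              ‖fderiv ℝ u x‖ ≤ C') := by
  obtain ⟨m, M, hm, hM, hadm⟩ := exists_admissible hn hk1 hkn hA hk1'
  refine ⟨1 + 5 * M, by positivity, fun R₀ hR₀ => ?_⟩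
  have hR₀' : 0 < R₀ := by linarith
  refine ⟨(8 / m + 2) ^ k * (2 * R₀) ^ (-genExp n k a), by positivity, fun α hα => ?_⟩
  have h : Admissible n k a m M R₀ α := hadm R₀ α (by linarith) (by linarith) hα
  have hnorm {x₀ x : Euc n} {δ : ℝ} (hx : x ∉ Metric.ball x₀ δ) : δ ≤ ‖x - x₀‖ :=
    not_lt.1 (mem_ball_iff_norm.not.1 hx)
  constructor
  · obtain ⟨C₁, hC₁, hnear⟩ := h.exists_norm_fderiv_le_Ceps
    obtain ⟨C₂, -, hfar⟩ := h.exists_norm_fderiv_le_mul_sqrt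
    refine ⟨max C₁ C₂, lt_max_of_lt_left hC₁, fun x₀ hx₀ _ ε hε hε2 R hR u hu => ?_⟩
    have hsol := hu.ringSol h (mem_ball_zero_iff.1 hx₀) hε hε2 hR
    refine ⟨fun x hx => ?_, fun x hx => ?_⟩
    · exact hnear _ (le_max_left _ _) hsol x (mem_ball_zero_iff.1 hx.1) (hnorm hx.2)
    · exact hfar _ (le_max_right _ _) hsol x (mem_ESet_diagonal_zero.1 hx.1).le
        (not_lt.1 (mem_ESet_diagonal_zero.not.1 hx.2))
  · intro δ hδ
    obtain ⟨C, hC, hle⟩ := h.exists_norm_fderiv_le hδ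
    refine ⟨C, hC, fun x₀ hx₀ _ ε hε hε2 hεδ R hR u hu x hx => ?_⟩
    exact hle (hu.ringSol h (mem_ball_zero_iff.1 hx₀) hε hε2 hR) hεδ x
      (mem_ball_zero_iff.1 hx.1) (hnorm hx.2)
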